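/- arXiv:1511.09280 — 3 statements merged into one kernel-verified Lean document; each statement's English description precedes it below -/
import Mathlib

section
/- Let X be a Cantor space, K a dynamical simplex on X, and G the group of all homeomorphisms of X preserving every measure in K. If g ∈ G is K-saturated, then the set of g-invariant Borel probability measures on X equals K. -/
/-!
Every measure of `K` is `g`-invariant by hypothesis, so the content is that an invariant `ν` lies
in `K`. An element of the full group of `g` agrees with powers of `g` on a countable Borel
partition, hence preserves `ν`; saturation then turns `K`-equivalent clopen sets into sets of equal
`ν`-measure. This last property alone forces `ν ∈ K`.

Indeed, goodness now produces copies which are also copies for `ν`, so `μ A < μ B` on `K` implies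
`ν A ≤ ν B`. To compare linear combinations in place of single sets, realise a subconvex
combination `∑ cᵢ ρ(Aᵢ)`, up to a small error, as `ρ(P)` for one clopen `P` and all
`ρ ∈ K ∪ {ν}`: divide each `Aᵢ` into `n` nearly exhausting copies of a clopen set, take `⌊cᵢ n⌋` of
them, and pack everything disjointly into `X`. Comparing the sets which realise the positive and
the negative parts of the coefficients shows that no combination of clopen sets separates `ν` from
`K`. By Hahn–Banach, `ν` agrees with a member of `K` on every finite family of clopen sets, and by
compactness on all of them.
-/

open MeasureTheory

namespace DynSimplex

variable {X : Type*} [TopologicalSpace X] [MeasurableSpace X] [OpensMeasurableSpace X]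

/-- `g` preserves the probability measure `μ`, i.e. `g_*μ = μ`. -/
def Preserves (g : X ≃ₜ X) (μ : ProbabilityMeasure X) : Prop :=
  (μ : Measure X).map g = (μ : Measure X)

/-- A homeomorphism is minimal if all of its (two-sided) orbits are dense. -/
def IsMinimal (g : X ≃ₜ X) : Prop :=
  ∀ x : X, Dense (Set.range fun n : ℤ => (g.toEquiv ^ n) x)

/-- A set of probability measures is good if for all clopen `A`, `B` with `μ A < μ B` for
all `μ ∈ K`, there is a clopen `C ⊆ B` with `μ C = μ A` for all `μ ∈ K`. -/
def Good (K : Set (ProbabilityMeasure X)) : Prop :=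
  ∀ A B : Set X, IsClopen A → IsClopen B → (∀ μ ∈ K, μ A < μ B) →
    ∃ C : Set X, IsClopen C ∧ C ⊆ B ∧ ∀ μ ∈ K, μ C = μ A

/-- Approximate divisibility of a set of probability measures. -/
def ApproximatelyDivisible (K : Set (ProbabilityMeasure X)) : Prop :=
  ∀ A : Set X, IsClopen A → ∀ n : ℕ, 1 ≤ n → ∀ ε : ℝ, 0 < ε →
    ∃ B : Set X, IsClopen B ∧ B ⊆ A ∧
      ∀ μ ∈ K, (μ A : ℝ) - ε ≤ (n : ℝ) * (μ B : ℝ) ∧ (n : ℝ) * (μ B : ℝ) ≤ (μ A : ℝ)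

/-- A probability measure has full support if every nonempty open set has positive measure. -/
def FullSupport (μ : ProbabilityMeasure X) : Prop :=
  ∀ U : Set X, IsOpen U → U.Nonempty → 0 < μ U

/-- A probability measure is atomless if all singletons are null. -/
def Atomless (μ : ProbabilityMeasure X) : Prop :=
  ∀ x : X, μ {x} = 0

/-- Convexity of a set of probability measures (as a subset of the `ℝ≥0`-module of
finite measures). -/
def ProbConvex (K : Set (ProbabilityMeasure X)) : Prop :=
  Convex NNReal (ProbabilityMeasure.toFiniteMeasure '' K)

/-- The set of extreme points of a set of probability measures. -/
def ProbExtremePoints (K : Set (ProbabilityMeasure X)) : Set (ProbabilityMeasure X) :=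
  ProbabilityMeasure.toFiniteMeasure ⁻¹'
    (Set.extremePoints NNReal (ProbabilityMeasure.toFiniteMeasure '' K))

/-- A dynamical simplex: a nonempty compact convex set of atomless, fully supported
probability measures which is good and approximately divisible. -/
def DynamicalSimplex (K : Set (ProbabilityMeasure X)) : Prop :=
  K.Nonempty ∧ IsCompact K ∧ ProbConvex K ∧
    (∀ μ ∈ K, Atomless μ ∧ FullSupport μ) ∧ Good K ∧ ApproximatelyDivisible K

/-- Membership in the full group of `g`. -/
def InFullGroup (g h : X ≃ₜ X) : Prop :=
  ∀ x : X, ∃ n : ℤ, h x = (g.toEquiv ^ n) x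

/-- Membership in the topological full group of `g`: `h` is given piecewise by powers of `g`
on a finite clopen partition of `X`. -/
def InTopologicalFullGroup (g h : X ≃ₜ X) : Prop :=
  ∃ (k : ℕ) (A : Fin k → Set X) (n : Fin k → ℤ),
    (∀ i, IsClopen (A i)) ∧ (∀ x : X, ∃! i, x ∈ A i) ∧
    ∀ i, ∀ x ∈ A i, h x = (g.toEquiv ^ (n i)) x

/-- `g` preserves every measure in `K` (i.e. `g` belongs to the group `G`). -/
def PreservesAll (K : Set (ProbabilityMeasure X)) (g : X ≃ₜ X) : Prop :=
  ∀ μ ∈ K, Preserves g μ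

/-- `g` is `K`-saturated: any two `K`-equivalent clopen sets are mapped one to the other by
an element of the topological full group of `g`. -/
def KSaturated (K : Set (ProbabilityMeasure X)) (g : X ≃ₜ X) : Prop :=
  ∀ U V : Set X, IsClopen U → IsClopen V → (∀ μ ∈ K, μ U = μ V) →
    ∃ h : X ≃ₜ X, InTopologicalFullGroup g h ∧ h '' U = V

/-- The topology of uniform convergence on the homeomorphism group of a compact space
(the compact-open topology, induced from `C(X, X)`). -/
instance : TopologicalSpace (X ≃ₜ X) :=
  TopologicalSpace.induced (fun h : X ≃ₜ X => (h : C(X, X))) inferInstance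

/-- A KR-partition for `K`: a finite family of columns, each column being a finite sequence of
clopen sets which are all `K`-equivalent, the atoms of all columns forming a partition of `X`. -/
structure KRPartition (X : Type*) [TopologicalSpace X] [MeasurableSpace X]
    (K : Set (ProbabilityMeasure X)) where
  numCols : ℕ
  height : Fin numCols → ℕ
  atom : (i : Fin numCols) → Fin (height i + 1) → Set X
  clopen : ∀ i j, IsClopen (atom i j)
  equivK : ∀ i j j', ∀ μ ∈ K, μ (atom i j) = μ (atom i j')
  partition : ∀ x : X, ∃! p : (i : Fin numCols) × Fin (height i + 1), x ∈ atom p.1 p.2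

/-- The base of a KR-partition: the union of the first atoms of the columns. -/
def KRPartition.base {K : Set (ProbabilityMeasure X)} (T : KRPartition X K) : Set X :=
  ⋃ i, T.atom i 0

/-- The top of a KR-partition: the union of the last atoms of the columns. -/
def KRPartition.top {K : Set (ProbabilityMeasure X)} (T : KRPartition X K) : Set X :=
  ⋃ i, T.atom i (Fin.last _)

/-- `S` refines `T`: the base (resp. top) of `S` is contained in the base (resp. top) of `T`,
and every column of `S` is obtained by cutting and stacking columns of `T`. -/
def KRPartition.Refines {K : Set (ProbabilityMeasure X)} (S T : KRPartition X K) : Prop :=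
  S.base ⊆ T.base ∧ S.top ⊆ T.top ∧
  ∀ c : Fin S.numCols, ∃ (m : ℕ) (idx : Fin (m + 1) → Fin T.numCols)
    (piece : (k : Fin (m + 1)) → Fin (T.height (idx k) + 1) → Set X),
    (∀ k j, piece k j ⊆ T.atom (idx k) j) ∧
    (S.height c + 1 = ∑ k : Fin (m + 1), (T.height (idx k) + 1)) ∧
    ∀ (k : Fin (m + 1)) (j : Fin (T.height (idx k) + 1))
      (hlt : (∑ l ∈ Finset.Iio k, (T.height (idx l) + 1)) + (j : ℕ) < S.height c + 1),
      S.atom c ⟨(∑ l ∈ Finset.Iio k, (T.height (idx l) + 1)) + (j : ℕ), hlt⟩ = piece k j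

/-- A KR-partition is compatible with a clopen set `U` if `U` is a union of its atoms,
equivalently every atom is either contained in `U` or disjoint from it. -/
def KRPartition.Compatible {K : Set (ProbabilityMeasure X)} (S : KRPartition X K)
    (U : Set X) : Prop :=
  ∀ i j, S.atom i j ⊆ U ∨ Disjoint (S.atom i j) U

end DynSimplex

namespace DynSimplex

open Filter Topology
open scoped ENNReal

variable {X : Type*}

/-! ### Measures invariant under the full group -/

section Homeomorph

variable [TopologicalSpace X] {g h : X ≃ₜ X}

theorem InTopologicalFullGroup.inFullGroup (hh : InTopologicalFullGroup g h) :
    InFullGroup g h := by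
  obtain ⟨k, A, n, -, hpart, hA⟩ := hh
  intro x
  obtain ⟨i, hi, -⟩ := hpart x
  exact ⟨n i, hA i x hi⟩

theorem coe_toEquiv_zpow (g : X ≃ₜ X) (n : ℤ) : ⇑(g.toEquiv ^ n) = ⇑(g ^ n) := by
  let toPerm : (X ≃ₜ X) →* Equiv.Perm X := ⟨⟨Homeomorph.toEquiv, rfl⟩, fun _ _ => rfl⟩
  exact congrArg DFunLike.coe (map_zpow toPerm g n).symm

end Homeomorph

section FullGroup

variable [TopologicalSpace X] [MeasurableSpace X] {K : Set (ProbabilityMeasure X)}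
  {ν : ProbabilityMeasure X} {g h : X ≃ₜ X}

/-- The analogue of `KSaturated` for the full group in place of the topological full group, a
weaker property of `g`. -/
def FullGroupSaturated (K : Set (ProbabilityMeasure X)) (g : X ≃ₜ X) : Prop :=
  ∀ U V : Set X, IsClopen U → IsClopen V → (∀ μ ∈ K, μ U = μ V) →
    ∃ h : X ≃ₜ X, InFullGroup g h ∧ h '' U = V

theorem KSaturated.fullGroupSaturated (hsat : KSaturated K g) : FullGroupSaturated K g := by
  intro U V hU hV hUV
  obtain ⟨h, hh, hhUV⟩ := hsat U V hU hV hUV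
  exact ⟨h, hh.inFullGroup, hhUV⟩

/-- `ν` does not distinguish `K`-equivalent clopen sets: `U ∼_K V` implies `ν U = ν V`. For a
dynamical simplex `K` this characterises the members of `K`; see `RespectsEquiv.mem`. -/
def RespectsEquiv (K : Set (ProbabilityMeasure X)) (ν : ProbabilityMeasure X) : Prop :=
  ∀ U V : Set X, IsClopen U → IsClopen V → (∀ μ ∈ K, μ U = μ V) → ν U = ν V

variable [BorelSpace X]

theorem Preserves.zpow (hg : Preserves g ν) (n : ℤ) : Preserves (g ^ n) ν := by
  have hgν : MeasurePreserving g (ν : Measure X) ν := ⟨g.measurable, hg⟩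
  suffices MeasurePreserving ⇑(g ^ n) (ν : Measure X) ν from this.map_eq
  induction n with
  | zero => exact .id _
  | succ n ih => rw [zpow_add_one]; exact ih.comp hgν
  | pred n ih => rw [zpow_sub_one]; exact ih.comp (hgν.symm g.toMeasurableEquiv)

theorem Preserves.of_inFullGroup [T2Space X] (hg : Preserves g ν) (hh : InFullGroup g h) :
    Preserves h ν := by
  let s : ℤ → Set X := fun n => {y | h.symm y = (g ^ n).symm y}
  have hs_cover : ⋃ n, s n = Set.univ := by
    refine Set.eq_univ_of_forall fun y => Set.mem_iUnion.2 ?_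
    obtain ⟨n, hn⟩ := hh (h.symm y)
    refine ⟨n, ((g ^ n).symm_apply_eq.2 ?_).symm⟩
    rw [← coe_toEquiv_zpow, ← hn, h.apply_symm_apply]
  have hs : ∀ n, MeasurableSet (s n) := fun n =>
    (isClosed_eq h.symm.continuous (g ^ n).symm.continuous).measurableSet
  have hpre : ∀ n E, h ⁻¹' (E ∩ s n) = ⇑(g ^ n) ⁻¹' (E ∩ s n) := by
    intro n E
    ext x
    have hx : h.symm (h x) = (g ^ n).symm (h x) ↔ h x = (g ^ n) x := by
      rw [h.symm_apply_apply, (g ^ n).eq_symm_apply, eq_comm]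
    have hx' : h.symm ((g ^ n) x) = (g ^ n).symm ((g ^ n) x) ↔ h x = (g ^ n) x := by
      rw [(g ^ n).symm_apply_apply, h.symm_apply_eq, eq_comm]
    constructor
    · rintro ⟨hE, hs⟩
      exact ⟨hx.1 hs ▸ hE, hx'.2 (hx.1 hs)⟩
    · rintro ⟨hE, hs⟩
      exact ⟨hx'.1 hs ▸ hE, hx.2 (hx'.1 hs)⟩
  refine (Measure.ext_iff_of_iUnion_eq_univ hs_cover).2 fun n => Measure.ext fun E hE => ?_
  rw [Measure.restrict_apply hE, Measure.restrict_apply hE,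
    Measure.map_apply h.measurable (hE.inter (hs n)), hpre,
    ← Measure.map_apply (g ^ n).measurable (hE.inter (hs n)), hg.zpow n]

theorem Preserves.respectsEquiv [T2Space X] (hν : Preserves g ν) (hsat : FullGroupSaturated K g) :
    RespectsEquiv K ν := by
  intro U V hU hV hUV
  obtain ⟨h, hh, rfl⟩ := hsat U V hU hV hUV
  have hνh : (ν : Measure X).map h (h '' U) = (ν : Measure X) (h '' U) :=
    congrArg (· (h '' U)) (hν.of_inFullGroup hh)
  rw [Measure.map_apply h.measurable hV.isOpen.measurableSet,
    Set.preimage_image_eq _ h.injective] at hνh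
  exact congrArg ENNReal.toNNReal hνh

end FullGroup

/-! ### Clopen sets and probability measures -/

section Measurable

variable [MeasurableSpace X]

theorem Atomless.infinite {μ : ProbabilityMeasure X} (hμ : Atomless μ) : Infinite X := by
  have : NullSingletonClass (μ : Measure X) :=
    ⟨fun x => (ProbabilityMeasure.null_iff_toMeasure_null μ {x}).1 (hμ x)⟩
  refine not_finite_iff_infinite.1 fun _ => ?_
  simpa using (Set.countable_univ (α := X)).measure_zero (μ : Measure X)

theorem ProbConvex.convex_image_measureReal {K : Set (ProbabilityMeasure X)}
    (hK : ProbConvex K) {ι : Type*} (A : ι → Set X) :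
    Convex ℝ ((fun (μ : ProbabilityMeasure X) i => (μ : Measure X).real (A i)) '' K) := by
  rintro _ ⟨μ₁, hμ₁, rfl⟩ _ ⟨μ₂, hμ₂, rfl⟩ a b ha hb hab
  lift a to NNReal using ha
  lift b to NNReal using hb
  obtain ⟨μ, hμ, hμab⟩ := hK ⟨μ₁, hμ₁, rfl⟩ ⟨μ₂, hμ₂, rfl⟩ (zero_le (a := a)) (zero_le (a := b))
    (mod_cast hab)
  refine ⟨μ, hμ, funext fun i => ?_⟩
  simpa using congrArg (fun m : FiniteMeasure X => ((m (A i) : NNReal) : ℝ)) hμab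

end Measurable

section Clopen

variable [TopologicalSpace X] [MeasurableSpace X]

theorem exists_isClopen_measure_lt [CompactSpace X] [T2Space X] [TotallyDisconnectedSpace X]
    [MeasurableSingletonClass X] [Infinite X] (μ : Measure X) [IsFiniteMeasure μ] [μ.OuterRegular]
    {ε : ℝ≥0∞} (hε : 0 < ε) : ∃ B : Set X, IsClopen B ∧ B.Nonempty ∧ μ B < ε := by
  have hfin : {x : X | ε ≤ μ {x}}.Finite :=
    Measure.finite_const_le_meas_of_disjoint_iUnion μ hε (fun x => measurableSet_singleton x)
      (fun x y hxy => Set.disjoint_singleton.2 hxy) (measure_ne_top μ _)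
  obtain ⟨x, hx⟩ := hfin.exists_notMem
  obtain ⟨U, hxU, hU, hUε⟩ := Set.exists_isOpen_lt_of_lt {x} ε (not_le.1 hx)
  obtain ⟨B, hB, hxB, hBU⟩ := compact_exists_isClopen_in_isOpen hU (hxU rfl)
  exact ⟨B, hB, ⟨x, hxB⟩, (measure_mono hBU).trans_lt hUε⟩

theorem eq_of_forall_isClopen [CompactSpace X] [T2Space X] [SecondCountableTopology X]
    [TotallyDisconnectedSpace X] [BorelSpace X] {μ ν : ProbabilityMeasure X}
    (hμν : ∀ A : Set X, IsClopen A → (μ : Measure X).real A = (ν : Measure X).real A) :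
    μ = ν := by
  refine Subtype.ext (?_ : (μ : Measure X) = ν)
  refine ext_of_generate_finite {A : Set X | IsClopen A} ?_ ?_ ?_ ?_
  · rw [BorelSpace.measurable_eq (α := X)]
    exact isTopologicalBasis_isClopen.borel_eq_generateFrom
  · exact fun A hA B hB _ => hA.inter hB
  · exact fun A hA => (measureReal_eq_measureReal_iff (by finiteness) (by finiteness)).1 (hμν A hA)
  · exact measure_univ.trans measure_univ.symm

theorem continuous_measureReal [OpensMeasurableSpace X] [HasOuterApproxClosed X] {A : Set X}
    (hA : IsClopen A) : Continuous fun μ : ProbabilityMeasure X => (μ : Measure X).real A :=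
  NNReal.continuous_coe.comp <| continuous_iff_continuousAt.2 fun _ =>
    ProbabilityMeasure.tendsto_measure_of_isClopen_of_tendsto tendsto_id hA

end Clopen

/-! ### Comparison and packing of clopen sets -/

section Comparison

variable [TopologicalSpace X] [MeasurableSpace X] {K : Set (ProbabilityMeasure X)}
  {ν : ProbabilityMeasure X}

theorem RespectsEquiv.exists_copy (hν : RespectsEquiv K ν) (hK : Good K) {A B : Set X}
    (hA : IsClopen A) (hB : IsClopen B)
    (hlt : ∀ μ ∈ K, (μ : Measure X).real A < (μ : Measure X).real B) :
    ∃ C : Set X, IsClopen C ∧ C ⊆ B ∧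
      ∀ ρ ∈ insert ν K, (ρ : Measure X).real C = (ρ : Measure X).real A := by
  obtain ⟨C, hC, hCB, hCA⟩ := hK A B hA hB fun μ hμ => NNReal.coe_lt_coe.1 (hlt μ hμ)
  refine ⟨C, hC, hCB, ?_⟩
  rintro ρ (rfl | hρ)
  · exact congrArg NNReal.toReal (hν C A hC hA hCA)
  · exact congrArg NNReal.toReal (hCA ρ hρ)

theorem RespectsEquiv.measureReal_le (hν : RespectsEquiv K ν) (hK : Good K) {A B : Set X}
    (hA : IsClopen A) (hB : IsClopen B)
    (hlt : ∀ μ ∈ K, (μ : Measure X).real A < (μ : Measure X).real B) :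
    (ν : Measure X).real A ≤ (ν : Measure X).real B := by
  obtain ⟨C, -, hCB, hCA⟩ := hν.exists_copy hK hA hB hlt
  exact hCA ν (Set.mem_insert ν K) ▸ measureReal_mono hCB

variable [OpensMeasurableSpace X]

theorem RespectsEquiv.exists_packing (hν : RespectsEquiv K ν) (hK : Good K) {ι : Type*}
    (s : Finset ι) {D : ι → Set X} (hD : ∀ i, IsClopen (D i)) {A : Set X} (hA : IsClopen A)
    (hlt : ∀ μ ∈ K, ∑ i ∈ s, (μ : Measure X).real (D i) < (μ : Measure X).real A) :
    ∃ C : Set X, IsClopen C ∧ C ⊆ A ∧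
      ∀ ρ ∈ insert ν K, (ρ : Measure X).real C = ∑ i ∈ s, (ρ : Measure X).real (D i) := by
  classical
  induction s using Finset.induction_on with
  | empty => exact ⟨∅, isClopen_empty, Set.empty_subset _, by simp⟩
  | insert i s hi ih =>
    simp only [Finset.sum_insert hi] at hlt ⊢
    obtain ⟨C, hC, hCA, hCs⟩ := ih fun μ hμ =>
      (le_add_of_nonneg_left measureReal_nonneg).trans_lt (hlt μ hμ)
    have hroom : ∀ μ ∈ K, (μ : Measure X).real (D i) < (μ : Measure X).real (A \ C) := by
      intro μ hμ
      rw [measureReal_sdiff hCA hC.isOpen.measurableSet, hCs μ (Set.mem_insert_of_mem ν hμ)]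
      exact lt_sub_iff_add_lt.2 (hlt μ hμ)
    obtain ⟨C', hC', hC'A, hC'i⟩ := hν.exists_copy hK (hD i) (hA.diff hC) hroom
    refine ⟨C' ∪ C, hC'.union hC, Set.union_subset (hC'A.trans Set.sdiff_subset) hCA, ?_⟩
    intro ρ hρ
    rw [measureReal_union (Set.disjoint_of_subset_left hC'A Set.disjoint_sdiff_left)
      hC.isOpen.measurableSet, hC'i ρ hρ, hCs ρ hρ]

end Comparison

/-! ### Division of clopen sets -/

section Division

variable [TopologicalSpace X] [MeasurableSpace X] {K : Set (ProbabilityMeasure X)}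
  {ν : ProbabilityMeasure X}

theorem ApproximatelyDivisible.eventually_exists_division (hK : ApproximatelyDivisible K)
    {A : Set X} (hA : IsClopen A) (hpos : ∀ μ ∈ K, 0 < (μ : Measure X).real A) {η : ℝ}
    (hη : 0 < η) :
    ∀ᶠ n : ℕ in atTop, ∃ B : Set X, IsClopen B ∧
      ∀ μ ∈ K, (μ : Measure X).real A - η < n * (μ : Measure X).real B ∧
        n * (μ : Measure X).real B < (μ : Measure X).real A := by
  filter_upwards [tendsto_one_div_add_atTop_nhds_zero_nat.eventually_lt_const (half_pos hη)]
    with n hn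
  -- Dividing by `n + 1` makes the upper bound strict and costs only the measure of one piece.
  obtain ⟨B, hB, -, hdiv⟩ := hK A hA (n + 1) n.succ_pos (η / 2) (half_pos hη)
  refine ⟨B, hB, fun μ hμ => ?_⟩
  obtain ⟨hlow, hup⟩ : (μ : Measure X).real A - η / 2 ≤ (n + 1) * (μ : Measure X).real B ∧
      (n + 1) * (μ : Measure X).real B ≤ (μ : Measure X).real A := by
    exact_mod_cast hdiv μ hμ
  have hpiece : (μ : Measure X).real B ≤ 1 / (n + 1) := by
    rw [le_div_iff₀' (by positivity)]
    exact hup.trans measureReal_le_one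
  refine ⟨by linarith, ?_⟩
  rcases (measureReal_nonneg (μ := (μ : Measure X)) (s := B)).eq_or_lt with hB0 | hBpos
  · simpa [← hB0] using hpos μ hμ
  · linarith

variable [CompactSpace X] [TopologicalSpace.MetrizableSpace X] [TotallyDisconnectedSpace X]
  [BorelSpace X]

/-- A clopen set which is small on `K` has a copy inside a fixed clopen set of small `ν`-measure,
on which `K` is bounded away from zero. -/
theorem RespectsEquiv.exists_forall_measureReal_lt (hν : RespectsEquiv K ν)
    (hK : DynamicalSimplex K) {ε : ℝ} (hε : 0 < ε) :
    ∃ δ > 0, ∀ R : Set X, IsClopen R → (∀ μ ∈ K, (μ : Measure X).real R < δ) →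
      (ν : Measure X).real R < ε := by
  obtain ⟨hne, hcompact, -, hatomless_full, hgood, -⟩ := hK
  have : Infinite X := hne.elim fun μ hμ => (hatomless_full μ hμ).1.infinite
  obtain ⟨D, hD, hDne, hDε⟩ :=
    exists_isClopen_measure_lt (ν : Measure X) (ENNReal.ofReal_pos.2 hε)
  obtain ⟨μ₀, hμ₀, hmin⟩ :=
    hcompact.exists_isMinOn hne (continuous_measureReal hD).continuousOn
  refine ⟨(μ₀ : Measure X).real D, ?_, fun R hR hlt => ?_⟩
  · exact NNReal.coe_pos.2 ((hatomless_full μ₀ hμ₀).2 D hD.isOpen hDne)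
  · calc (ν : Measure X).real R ≤ (ν : Measure X).real D :=
          hν.measureReal_le hgood hR hD fun μ hμ => (hlt μ hμ).trans_le (hmin hμ)
      _ < ε := (ENNReal.lt_ofReal_iff_toReal_lt (measure_ne_top _ D)).1 hDε

theorem RespectsEquiv.eventually_exists_division (hν : RespectsEquiv K ν)
    (hK : DynamicalSimplex K) {A : Set X} (hA : IsClopen A) {η : ℝ} (hη : 0 < η) :
    ∀ᶠ n : ℕ in atTop, ∃ B : Set X, IsClopen B ∧
      ∀ ρ ∈ insert ν K, (ρ : Measure X).real A - η ≤ n * (ρ : Measure X).real B ∧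
        n * (ρ : Measure X).real B ≤ (ρ : Measure X).real A := by
  obtain ⟨δ, hδ, hsmall⟩ := hν.exists_forall_measureReal_lt hK hη
  obtain ⟨-, -, -, hatomless_full, hgood, hdivisible⟩ := hK
  rcases A.eq_empty_or_nonempty with rfl | hAne
  · exact .of_forall fun n => ⟨∅, isClopen_empty, by simp [hη.le]⟩
  have hpos : ∀ μ ∈ K, 0 < (μ : Measure X).real A := fun μ hμ =>
    NNReal.coe_pos.2 ((hatomless_full μ hμ).2 A hA.isOpen hAne)
  filter_upwards [hdivisible.eventually_exists_division hA hpos (lt_min hδ hη)]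
    with n ⟨B, hB, hdiv⟩
  obtain ⟨C, hC, hCA, hCB⟩ := hν.exists_packing hgood (Finset.range n) (fun _ => hB) hA
    (by simpa using fun μ hμ => (hdiv μ hμ).2)
  simp only [Finset.sum_const, Finset.card_range, nsmul_eq_mul] at hCB
  have hrest : ∀ ρ ∈ insert ν K, (ρ : Measure X).real (A \ C)
      = (ρ : Measure X).real A - n * (ρ : Measure X).real B := fun ρ hρ => by
    rw [measureReal_sdiff hCA hC.isOpen.measurableSet, hCB ρ hρ]
  have hrest_lt : ∀ μ ∈ K, (μ : Measure X).real (A \ C) < min δ η := fun μ hμ => by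
    rw [hrest μ (Set.mem_insert_of_mem ν hμ)]
    linarith [(hdiv μ hμ).1]
  refine ⟨B, hB, fun ρ hρ => ⟨?_, hCB ρ hρ ▸ measureReal_mono hCA⟩⟩
  suffices (ρ : Measure X).real (A \ C) < η by linarith [hrest ρ hρ]
  rcases hρ with rfl | hρ
  · exact hsmall _ (hA.diff hC) fun μ hμ => (hrest_lt μ hμ).trans_le (min_le_left δ η)
  · exact (hrest_lt ρ hρ).trans_le (min_le_right δ η)

theorem RespectsEquiv.exists_fraction (hν : RespectsEquiv K ν) (hK : DynamicalSimplex K)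
    {A : Set X} (hA : IsClopen A) {c : ℝ} (hc₀ : 0 ≤ c) (hc₁ : c < 1) {η : ℝ} (hη : 0 < η) :
    ∃ B : Set X, IsClopen B ∧
      ∀ ρ ∈ insert ν K, c * (ρ : Measure X).real A - η ≤ (ρ : Measure X).real B ∧
        (ρ : Measure X).real B ≤ c * (ρ : Measure X).real A := by
  obtain ⟨n, ⟨D, hD, hdiv⟩, hn, hn_pos⟩ :=
    ((hν.eventually_exists_division hK hA (half_pos hη)).and
      ((tendsto_one_div_atTop_nhds_zero_nat.eventually_lt_const (half_pos hη)).and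
        (eventually_gt_atTop 0))).exists
  have hn₀ : (0 : ℝ) < n := Nat.cast_pos.2 hn_pos
  set m := ⌊c * n⌋₊
  have hupper : ∀ ρ ∈ insert ν K, m * (ρ : Measure X).real D ≤ c * (ρ : Measure X).real A := by
    intro ρ hρ
    calc m * (ρ : Measure X).real D
        ≤ c * n * (ρ : Measure X).real D :=
          mul_le_mul_of_nonneg_right (Nat.floor_le (by positivity)) measureReal_nonneg
      _ = c * (n * (ρ : Measure X).real D) := mul_assoc _ _ _
      _ ≤ c * (ρ : Measure X).real A := mul_le_mul_of_nonneg_left (hdiv ρ hρ).2 hc₀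
  have hlower : ∀ ρ ∈ insert ν K,
      c * (ρ : Measure X).real A - η ≤ m * (ρ : Measure X).real D := by
    intro ρ hρ
    have hpiece : (ρ : Measure X).real D ≤ 1 / n := by
      rw [le_div_iff₀' hn₀]
      exact (hdiv ρ hρ).2.trans measureReal_le_one
    calc c * (ρ : Measure X).real A - η
        ≤ c * ((ρ : Measure X).real A - η / 2) - 1 / n := by nlinarith
      _ ≤ c * (n * (ρ : Measure X).real D) - (ρ : Measure X).real D :=
          sub_le_sub (mul_le_mul_of_nonneg_left (hdiv ρ hρ).1 hc₀) hpiece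
      _ = (c * n - 1) * (ρ : Measure X).real D := by ring
      _ ≤ m * (ρ : Measure X).real D :=
          mul_le_mul_of_nonneg_right (Nat.sub_one_lt_floor _).le measureReal_nonneg
  obtain ⟨B, hB, -, hBD⟩ := hν.exists_packing hK.2.2.2.2.1 (Finset.range m) (fun _ => hD)
    isClopen_univ fun μ hμ => by
      simp only [Finset.sum_const, Finset.card_range, nsmul_eq_mul, probReal_univ]
      exact (hupper μ (Set.mem_insert_of_mem ν hμ)).trans_lt
        ((mul_le_of_le_one_right hc₀ measureReal_le_one).trans_lt hc₁)
  simp only [Finset.sum_const, Finset.card_range, nsmul_eq_mul] at hBD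
  exact ⟨B, hB, fun ρ hρ => hBD ρ hρ ▸ ⟨hlower ρ hρ, hupper ρ hρ⟩⟩

end Division

/-! ### Linear combinations of clopen sets -/

section Combination

variable [TopologicalSpace X] [MeasurableSpace X] [CompactSpace X]
  [TopologicalSpace.MetrizableSpace X] [TotallyDisconnectedSpace X] [BorelSpace X]
  {K : Set (ProbabilityMeasure X)} {ν : ProbabilityMeasure X} {ι : Type*} [Fintype ι]
  {A : ι → Set X}

theorem RespectsEquiv.exists_combination (hν : RespectsEquiv K ν) (hK : DynamicalSimplex K)
    (hA : ∀ i, IsClopen (A i)) {c : ι → ℝ} (hc : 0 ≤ c) (hsum : ∑ i, c i < 1) {η : ℝ}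
    (hη : 0 < η) :
    ∃ P : Set X, IsClopen P ∧
      ∀ ρ ∈ insert ν K, ∑ i, c i * (ρ : Measure X).real (A i) - η ≤ (ρ : Measure X).real P ∧
        (ρ : Measure X).real P ≤ ∑ i, c i * (ρ : Measure X).real (A i) := by
  have hc₁ : ∀ i, c i < 1 := fun i =>
    (Finset.single_le_sum (fun j _ => hc j) (Finset.mem_univ i)).trans_lt hsum
  have hcard : (0 : ℝ) < Fintype.card ι + 1 := by positivity
  choose B hB hBA using fun i => hν.exists_fraction hK (hA i) (hc i) (hc₁ i) (div_pos hη hcard)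
  have hupper : ∀ ρ ∈ insert ν K,
      ∑ i, (ρ : Measure X).real (B i) ≤ ∑ i, c i * (ρ : Measure X).real (A i) :=
    fun ρ hρ => Finset.sum_le_sum fun i _ => (hBA i ρ hρ).2
  have hlower : ∀ ρ ∈ insert ν K,
      ∑ i, c i * (ρ : Measure X).real (A i) - η ≤ ∑ i, (ρ : Measure X).real (B i) := by
    intro ρ hρ
    have herror : ∑ _i : ι, η / (Fintype.card ι + 1) ≤ η := by
      rw [Finset.sum_const, Finset.card_univ, nsmul_eq_mul, mul_div_left_comm]
      exact mul_le_of_le_one_right hη.le ((div_le_one hcard).2 (by linarith))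
    calc ∑ i, c i * (ρ : Measure X).real (A i) - η
        ≤ ∑ i, (c i * (ρ : Measure X).real (A i) - η / (Fintype.card ι + 1)) := by
          rw [Finset.sum_sub_distrib]
          exact sub_le_sub_left herror _
      _ ≤ ∑ i, (ρ : Measure X).real (B i) := Finset.sum_le_sum fun i _ => (hBA i ρ hρ).1
  obtain ⟨P, hP, -, hPB⟩ := hν.exists_packing hK.2.2.2.2.1 Finset.univ hB isClopen_univ
    fun μ hμ => calc
      ∑ i, (μ : Measure X).real (B i)
        ≤ ∑ i, c i * (μ : Measure X).real (A i) := hupper μ (Set.mem_insert_of_mem ν hμ)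
      _ ≤ ∑ i, c i :=
          Finset.sum_le_sum fun i _ => mul_le_of_le_one_right (hc i) measureReal_le_one
      _ < (μ : Measure X).real Set.univ := by rwa [probReal_univ]
  exact ⟨P, hP, fun ρ hρ => hPB ρ hρ ▸ ⟨hlower ρ hρ, hupper ρ hρ⟩⟩

theorem RespectsEquiv.sum_mul_le_sum_mul (hν : RespectsEquiv K ν) (hK : DynamicalSimplex K)
    (hA : ∀ i, IsClopen (A i)) {a b : ι → ℝ} (ha : 0 ≤ a) (ha_sum : ∑ i, a i < 1) (hb : 0 ≤ b)
    (hb_sum : ∑ i, b i < 1) {γ : ℝ} (hγ : 0 < γ)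
    (hab : ∀ μ ∈ K, ∑ i, a i * (μ : Measure X).real (A i) + γ
      ≤ ∑ i, b i * (μ : Measure X).real (A i)) :
    ∑ i, a i * (ν : Measure X).real (A i) ≤ ∑ i, b i * (ν : Measure X).real (A i) := by
  refine le_of_forall_pos_le_add fun η hη => ?_
  obtain ⟨P, hP, hPa⟩ := hν.exists_combination hK hA ha ha_sum hη
  obtain ⟨Q, hQ, hQb⟩ := hν.exists_combination hK hA hb hb_sum (half_pos hγ)
  have hPQ : (ν : Measure X).real P ≤ (ν : Measure X).real Q := by
    refine hν.measureReal_le hK.2.2.2.2.1 hP hQ fun μ hμ => ?_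
    have hμ' := Set.mem_insert_of_mem ν hμ
    linarith [(hPa μ hμ').2, (hQb μ hμ').1, hab μ hμ]
  have hν' := Set.mem_insert ν K
  linarith [(hPa ν hν').1, (hQb ν hν').2]

theorem RespectsEquiv.sum_mul_nonpos (hν : RespectsEquiv K ν) (hK : DynamicalSimplex K)
    (hA : ∀ i, IsClopen (A i)) {c : ι → ℝ}
    (hneg : ∀ μ ∈ K, ∑ i, c i * (μ : Measure X).real (A i) < 0) :
    ∑ i, c i * (ν : Measure X).real (A i) ≤ 0 := by
  obtain ⟨μ₀, hμ₀, hmax⟩ := hK.2.1.exists_isMaxOn hK.1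
    (continuous_finsetSum Finset.univ fun i _ =>
      (continuous_measureReal (hA i)).const_mul (c i)).continuousOn
  -- Scaling by `t` makes the positive and the negative parts of `c` subconvex.
  obtain ⟨t, ht, hct⟩ : ∃ t > 0, t * ∑ i, |c i| < 1 := by
    have hden : 0 < ∑ i, |c i| + 1 := by positivity
    exact ⟨(∑ i, |c i| + 1)⁻¹, inv_pos.2 hden,
      (inv_mul_lt_iff₀ hden).2 (by linarith)⟩
  have hsubconvex : ∀ d : ι → ℝ, (∀ i, d i ≤ |c i|) → ∑ i, t * d i < 1 := fun d hd => by
    rw [← Finset.mul_sum]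
    exact (mul_le_mul_of_nonneg_left (Finset.sum_le_sum fun i _ => hd i) ht.le).trans_lt hct
  have hsplit : ∀ ρ : ProbabilityMeasure X,
      ∑ i, t * (c i)⁺ * (ρ : Measure X).real (A i) - ∑ i, t * (c i)⁻ * (ρ : Measure X).real (A i)
        = t * ∑ i, c i * (ρ : Measure X).real (A i) := fun ρ => by
    rw [← Finset.sum_sub_distrib, Finset.mul_sum]
    refine Finset.sum_congr rfl fun i _ => ?_
    rw [← sub_mul, ← mul_sub, posPart_sub_negPart, mul_assoc]
  have hle := hν.sum_mul_le_sum_mul hK hA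
    (a := fun i => t * (c i)⁺) (b := fun i => t * (c i)⁻)
    (fun i => mul_nonneg ht.le (posPart_nonneg _))
    (hsubconvex _ fun i => sup_le (le_abs_self _) (abs_nonneg _))
    (fun i => mul_nonneg ht.le (negPart_nonneg _))
    (hsubconvex _ fun i => sup_le (neg_le_abs _) (abs_nonneg _))
    (γ := -(t * ∑ i, c i * (μ₀ : Measure X).real (A i)))
    (neg_pos.2 (mul_neg_of_pos_of_neg ht (hneg μ₀ hμ₀)))
    (fun μ hμ => by linarith [hsplit μ, mul_le_mul_of_nonneg_left (hmax hμ) ht.le])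
  have hmul : t * ∑ i, c i * (ν : Measure X).real (A i) ≤ 0 := by linarith [hsplit ν]
  exact nonpos_of_mul_nonpos_right hmul ht

theorem RespectsEquiv.sum_mul_le (hν : RespectsEquiv K ν) (hK : DynamicalSimplex K)
    (hA : ∀ i, IsClopen (A i)) {c : ι → ℝ} {u : ℝ}
    (hlt : ∀ μ ∈ K, ∑ i, c i * (μ : Measure X).real (A i) < u) :
    ∑ i, c i * (ν : Measure X).real (A i) ≤ u := by
  -- The constant `u` is the coefficient of an additional clopen set, the whole space.
  let A' : Option ι → Set X := fun o => o.elim Set.univ A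
  let c' : Option ι → ℝ := fun o => o.elim (-u) c
  have hA' : ∀ o, IsClopen (A' o) := by
    rintro (_ | i)
    exacts [isClopen_univ, hA i]
  have hsum : ∀ ρ : ProbabilityMeasure X, ∑ o, c' o * (ρ : Measure X).real (A' o)
      = ∑ i, c i * (ρ : Measure X).real (A i) - u := fun ρ => by
    simp [A', c', Fintype.sum_option, neg_add_eq_sub]
  have hle := hν.sum_mul_nonpos hK hA' fun μ hμ => by
    rw [hsum]
    exact sub_neg.2 (hlt μ hμ)
  rw [hsum] at hle
  exact sub_nonpos.1 hle

end Combination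

/-! ### Separation and compactness -/

section Separation

theorem exists_sum_mul_lt_of_notMem {ι : Type*} [Fintype ι] {S : Set (ι → ℝ)} (hS : Convex ℝ S)
    (hS' : IsClosed S) {x : ι → ℝ} (hx : x ∉ S) :
    ∃ (c : ι → ℝ) (u : ℝ), (∀ y ∈ S, ∑ i, c i * y i < u) ∧ u < ∑ i, c i * x i := by
  classical
  obtain ⟨f, u, hfS, hfx⟩ := geometric_hahn_banach_closed_point hS hS' hx
  have hf : ∀ y, f y = ∑ i, f (Pi.single i 1) * y i := fun y => by
    conv_lhs => rw [pi_eq_sum_univ' y]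
    simp only [map_sum, map_smul, smul_eq_mul, mul_comm]
  exact ⟨fun i => f (Pi.single i 1), u, fun y hy => hf y ▸ hfS y hy, hf x ▸ hfx⟩

variable [TopologicalSpace X] [MeasurableSpace X] [CompactSpace X]
  [TopologicalSpace.MetrizableSpace X] [TotallyDisconnectedSpace X] [BorelSpace X]
  {K : Set (ProbabilityMeasure X)} {ν : ProbabilityMeasure X}

theorem RespectsEquiv.exists_mem_forall_measureReal_eq (hν : RespectsEquiv K ν)
    (hK : DynamicalSimplex K) {ι : Type*} [Finite ι] {A : ι → Set X} (hA : ∀ i, IsClopen (A i)) :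
    ∃ μ ∈ K, ∀ i, (μ : Measure X).real (A i) = (ν : Measure X).real (A i) := by
  have := Fintype.ofFinite ι
  let eval : ProbabilityMeasure X → ι → ℝ := fun μ i => (μ : Measure X).real (A i)
  suffices eval ν ∈ eval '' K by
    obtain ⟨μ, hμ, hμν⟩ := this
    exact ⟨μ, hμ, congrFun hμν⟩
  by_contra hnotMem
  have heval : Continuous eval := continuous_pi fun i => continuous_measureReal (hA i)
  obtain ⟨c, u, hcK, hcν⟩ := exists_sum_mul_lt_of_notMem (hK.2.2.1.convex_image_measureReal A)
    (hK.2.1.image heval).isClosed hnotMem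
  exact hcν.not_ge (hν.sum_mul_le hK hA fun μ hμ => hcK _ (Set.mem_image_of_mem eval hμ))

theorem RespectsEquiv.mem (hν : RespectsEquiv K ν) (hK : DynamicalSimplex K) : ν ∈ K := by
  obtain ⟨μ, hμ, hμν⟩ := hK.2.1.inter_iInter_nonempty
    (fun A : {A : Set X // IsClopen A} =>
      {μ : ProbabilityMeasure X | (μ : Measure X).real A = (ν : Measure X).real A})
    (fun A => isClosed_eq (continuous_measureReal A.2) continuous_const)
    (fun s => by
      obtain ⟨μ, hμ, hμν⟩ :=
        hν.exists_mem_forall_measureReal_eq hK (A := fun A : s => (A : Set X)) fun A => A.1.2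
      exact ⟨μ, hμ, Set.mem_iInter₂.2 fun A hA => hμν ⟨A, hA⟩⟩)
  rwa [← eq_of_forall_isClopen fun A hA => Set.mem_iInter.1 hμν ⟨A, hA⟩]

end Separation

end DynSimplex

theorem invariantMeasures_eq_K_of_saturated_general
    {X : Type*} [TopologicalSpace X] [CompactSpace X]
    [TopologicalSpace.MetrizableSpace X] [TotallyDisconnectedSpace X]
    [MeasurableSpace X] [BorelSpace X]
    (K : Set (MeasureTheory.ProbabilityMeasure X)) (hK : DynSimplex.DynamicalSimplex K)
    (g : X ≃ₜ X) (hg : DynSimplex.PreservesAll K g) (hsat : DynSimplex.FullGroupSaturated K g) :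
    {μ : MeasureTheory.ProbabilityMeasure X | DynSimplex.Preserves g μ} = K := by
  refine Set.Subset.antisymm (fun ν (hν : DynSimplex.Preserves g ν) => ?_) hg
  have hrespects : DynSimplex.RespectsEquiv K ν := hν.respectsEquiv hsat
  exact hrespects.mem hK

theorem invariantMeasures_eq_K_of_saturated
    {X : Type*} [TopologicalSpace X] [CompactSpace X]
    [TopologicalSpace.MetrizableSpace X] [TotallyDisconnectedSpace X] [PerfectSpace X]
    [Nonempty X] [MeasurableSpace X] [BorelSpace X]
    (K : Set (MeasureTheory.ProbabilityMeasure X)) (hK : DynSimplex.DynamicalSimplex K)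
    (g : X ≃ₜ X) (hg : DynSimplex.PreservesAll K g) (hsat : DynSimplex.KSaturated K g) :
    {μ : MeasureTheory.ProbabilityMeasure X | DynSimplex.Preserves g μ} = K :=
  invariantMeasures_eq_K_of_saturated_general K hK g hg hsat.fullGroupSaturated
end

section
/- (Akin's theorem) Let X be a Cantor space and μ an atomless Borel probability measure on X with full support which is good, i.e., for any clopen sets A, B with μ(A) < μ(B) there exists a clopen C ⊆ B with μ(C) = μ(A). Then there exists a minimal homeomorphism g of X whose unique invariant Borel probability measure is μ. -/
/-!
A scale of nested clopen sets, one of measure `t` for each `t ∈ [0, 1]` in the group `G` generated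
by the measures of clopen sets, identifies the space with the circle whose points in `G` are
doubled, that is, with the space of cuts of `G`. A probability measure on cuts is determined by its
mean cut, and `μ` is the measure whose mean cut is the identity.

If `G` contains an irrational number `a`, then rotation by `a` is minimal. The mean cut of an
invariant measure is additive along the multiples of `a` and at bounded distance from the identity,
so it is the identity on the multiples of `a`, and by monotonicity everywhere.

If `G` is rational, it is the union of the groups `ℤ / N k` for a divisibility chain `N`. The
position of a cut between the multiples of `1 / N k` is a sequence of mixed radix digits, and
reversing the digits identifies the space of cuts with an odometer in such a way that `μ` gives each
cylinder of level `k` the mass `1 / N k`.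
-/

open MeasureTheory

open TopologicalSpace Set DynSimplex

namespace Akin

section StrictErgodicity

variable {X Y : Type*} [TopologicalSpace X] [TopologicalSpace Y]

/-- A homeomorphism is strictly ergodic with respect to the probability measure `μ` if it is
minimal and `μ` is its only invariant probability measure. -/
structure IsStrictlyErgodic [MeasurableSpace X] (g : X ≃ₜ X) (μ : Measure X) : Prop where
  isMinimal : IsMinimal g
  map_eq_iff : ∀ (ν : Measure X) [IsProbabilityMeasure ν], ν.map g = ν ↔ ν = μ

lemma isMinimal_conj {T : Y ≃ₜ Y} (hT : IsMinimal T) (e : X ≃ₜ Y) :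
    IsMinimal ((e.trans T).trans e.symm) := by
  have zpow_conj (n : ℤ) : ((e.trans T).trans e.symm).toEquiv ^ n =
      e.symm.toEquiv.permCongr (T.toEquiv ^ n) :=
    (map_zpow e.symm.toEquiv.permCongrHom T.toEquiv n).symm
  intro x
  simp only [zpow_conj]
  exact e.symm.surjective.denseRange.comp (hT (e x)) e.symm.continuous

lemma IsStrictlyErgodic.conj [MeasurableSpace X] [BorelSpace X] [MeasurableSpace Y] [BorelSpace Y]
    {μ : Measure X} {T : Y ≃ₜ Y} {e : X ≃ₜ Y} (hT : IsStrictlyErgodic T (μ.map e)) :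
    IsStrictlyErgodic ((e.trans T).trans e.symm) μ := by
  refine ⟨isMinimal_conj hT.isMinimal e, fun ν hν => ?_⟩
  have map_injective : Function.Injective fun ν : Measure X => ν.map e :=
    e.toMeasurableEquiv.map_measurableEquiv_injective
  have map_conj : (ν.map ((e.trans T).trans e.symm)).map e = (ν.map e).map T := by
    rw [Measure.map_map e.measurable (Homeomorph.measurable _),
      Measure.map_map T.measurable e.measurable]
    congr 1
    ext x
    simp
  have : IsProbabilityMeasure (ν.map e) :=
    Measure.isProbabilityMeasure_map e.measurable.aemeasurable
  rw [← map_injective.eq_iff, map_conj, hT.map_eq_iff, map_injective.eq_iff]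

lemma measure_ext_of_isTopologicalBasis [SecondCountableTopology X] [MeasurableSpace X]
    [BorelSpace X] {𝓑 : Set (Set X)} (hb : IsTopologicalBasis 𝓑) (hpi : IsPiSystem 𝓑)
    {ν ν' : Measure X} [IsProbabilityMeasure ν] [IsProbabilityMeasure ν']
    (heq : ∀ B ∈ 𝓑, ν.real B = ν'.real B) : ν = ν' := by
  refine ext_of_generate_finite 𝓑 ?_ hpi (fun B hB => ?_) (by simp)
  · rw [← hb.borel_eq_generateFrom]
    exact BorelSpace.measurable_eq
  · exact (measureReal_eq_measureReal_iff).mp (heq B hB)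

lemma exists_homeomorph_of_denseRange [CompactSpace X] [T2Space Y] {f : X → Y} (hf : Continuous f)
    (hinj : Function.Injective f) (hdense : DenseRange f) : ∃ e : X ≃ₜ Y, ⇑e = f := by
  have hsurj : Function.Surjective f := by
    rw [← range_eq_univ, ← (isCompact_range hf).isClosed.closure_eq]
    exact hdense.closure_range
  exact ⟨Continuous.homeoOfEquivCompactToT2 (f := Equiv.ofBijective f ⟨hinj, hsurj⟩) hf, rfl⟩

lemma homeomorph_vadd_zpow_apply {G : Type*} [AddGroup G] [AddAction G X] [ContinuousConstVAdd G X]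
    (a : G) (n : ℤ) (x : X) : ((Homeomorph.vadd a : X ≃ₜ X).toEquiv ^ n) x = (n • a) +ᵥ x := by
  have h : (Homeomorph.vadd a : X ≃ₜ X).toEquiv = (AddAction.toPermHom G X a).toMul := rfl
  rw [h, ← toMul_zsmul, ← map_zsmul]
  rfl

end StrictErgodicity

section GoodMeasure

variable {X : Type*} [TopologicalSpace X] [MeasurableSpace X] {μ : Measure X}

/-- A measure with full support that is good in the sense of Akin: a value of `μ` on clopen sets
that is less than the measure of a clopen set `B` is attained on a clopen subset of `B`. -/
structure IsGood (μ : Measure X) : Prop where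
  pos : ∀ A : Set X, IsClopen A → A.Nonempty → 0 < μ.real A
  exists_subset_of_lt : ∀ A B : Set X, IsClopen A → IsClopen B → μ.real A < μ.real B →
    ∃ C : Set X, IsClopen C ∧ C ⊆ B ∧ μ.real C = μ.real A

/-- The subgroup of `ℝ` generated by the measures of clopen sets. -/
def clopenValueGroup (μ : Measure X) : AddSubgroup ℝ :=
  AddSubgroup.closure {t | ∃ A : Set X, IsClopen A ∧ μ.real A = t}

lemma measureReal_mem_clopenValueGroup {A : Set X} (hA : IsClopen A) :
    μ.real A ∈ clopenValueGroup μ :=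
  AddSubgroup.subset_closure ⟨A, hA, rfl⟩

variable [IsProbabilityMeasure μ]

lemma one_mem_clopenValueGroup : (1 : ℝ) ∈ clopenValueGroup μ := by
  simpa using measureReal_mem_clopenValueGroup (μ := μ) isClopen_univ

variable [OpensMeasurableSpace X]

lemma IsGood.eq_of_subset (hμ : IsGood μ) {A B : Set X} (hA : IsClopen A) (hB : IsClopen B)
    (hAB : A ⊆ B) (hBA : μ.real B ≤ μ.real A) : A = B := by
  refine hAB.antisymm ?_
  by_contra hne
  have hpos := hμ.pos _ (hB.diff hA) (sdiff_nonempty.mpr hne)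
  rw [measureReal_sdiff hAB hA.isOpen.measurableSet] at hpos
  linarith

lemma IsGood.exists_isClopen_add (hμ : IsGood μ) {A B : Set X} (hA : IsClopen A)
    (hB : IsClopen B) (hAB : μ.real A + μ.real B ≤ 1) :
    ∃ C : Set X, IsClopen C ∧ μ.real C = μ.real A + μ.real B := by
  rcases hAB.eq_or_lt with heq | hlt
  · exact ⟨univ, isClopen_univ, by simp [heq]⟩
  · obtain ⟨D, hD, hDA, hDB⟩ := hμ.exists_subset_of_lt B Aᶜ hB hA.compl (by
      rw [probReal_compl_eq_one_sub hA.isOpen.measurableSet]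
      linarith)
    exact ⟨A ∪ D, hA.union hD, by
      rw [measureReal_union (subset_compl_iff_disjoint_left.mp hDA) hD.isOpen.measurableSet, hDB]⟩

lemma IsGood.exists_isClopen_fract_add (hμ : IsGood μ) {s t : ℝ} {A B : Set X}
    (hA : IsClopen A) (hAs : μ.real A = Int.fract s) (hB : IsClopen B)
    (hBt : μ.real B = Int.fract t) : ∃ C : Set X, IsClopen C ∧ μ.real C = Int.fract (s + t) := by
  have hs := Int.fract_lt_one s
  have ht := Int.fract_lt_one t
  rcases lt_or_ge (Int.fract s + Int.fract t) 1 with hlt | hge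
  · obtain ⟨C, hC, hCm⟩ := hμ.exists_isClopen_add hA hB (by linarith)
    refine ⟨C, hC, (Int.fract_eq_iff.mpr ⟨measureReal_nonneg, by linarith, ⌊s⌋ + ⌊t⌋, ?_⟩).symm⟩
    rw [hCm, hAs, hBt, Int.cast_add, Int.fract, Int.fract]
    ring
  · have hAc := probReal_compl_eq_one_sub (μ := μ) hA.isOpen.measurableSet
    have hBc := probReal_compl_eq_one_sub (μ := μ) hB.isOpen.measurableSet
    obtain ⟨C, hC, hCm⟩ := hμ.exists_isClopen_add hA.compl hB.compl (by linarith)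
    have hCc := probReal_compl_eq_one_sub (μ := μ) hC.isOpen.measurableSet
    refine ⟨Cᶜ, hC.compl,
      (Int.fract_eq_iff.mpr ⟨measureReal_nonneg, by linarith, ⌊s⌋ + ⌊t⌋ + 1, ?_⟩).symm⟩
    rw [hCc, hCm, hAc, hBc, hAs, hBt, Int.cast_add, Int.cast_add, Int.fract, Int.fract]
    push_cast
    ring

lemma IsGood.exists_isClopen_fract (hμ : IsGood μ) {t : ℝ} (ht : t ∈ clopenValueGroup μ) :
    ∃ A : Set X, IsClopen A ∧ μ.real A = Int.fract t := by
  induction ht using AddSubgroup.closure_induction with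
  | mem t ht =>
    obtain ⟨A, hA, rfl⟩ := ht
    rcases (measureReal_le_one (μ := μ) (s := A)).eq_or_lt with h1 | h1
    · exact ⟨∅, isClopen_empty, by simp [h1]⟩
    · exact ⟨A, hA, (Int.fract_eq_self.mpr ⟨measureReal_nonneg, h1⟩).symm⟩
  | zero => exact ⟨∅, isClopen_empty, by simp⟩
  | add s t _ _ hs ht =>
    obtain ⟨A, hA, hAs⟩ := hs
    obtain ⟨B, hB, hBt⟩ := ht
    exact hμ.exists_isClopen_fract_add hA hAs hB hBt
  | neg t _ ht =>
    obtain ⟨A, hA, hAt⟩ := ht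
    by_cases h0 : Int.fract t = 0
    · exact ⟨∅, isClopen_empty, by simp [Int.fract_neg_eq_zero.mpr h0]⟩
    · exact ⟨Aᶜ, hA.compl, by
        rw [probReal_compl_eq_one_sub hA.isOpen.measurableSet, Int.fract_neg h0, hAt]⟩

lemma IsGood.exists_subset (hμ : IsGood μ) {U : Set X} (hU : IsClopen U) {t : ℝ}
    (ht : t ∈ clopenValueGroup μ) (h0 : 0 ≤ t) (htU : t ≤ μ.real U) :
    ∃ C : Set X, IsClopen C ∧ C ⊆ U ∧ μ.real C = t := by
  rcases htU.eq_or_lt with rfl | hlt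
  · exact ⟨U, hU, subset_rfl, rfl⟩
  · obtain ⟨A, hA, hAt⟩ := hμ.exists_isClopen_fract ht
    rw [Int.fract_eq_self.mpr ⟨h0, hlt.trans_le measureReal_le_one⟩] at hAt
    subst hAt
    exact hμ.exists_subset_of_lt A U hA hU hlt

end GoodMeasure

section Scale

variable {X : Type*} [TopologicalSpace X] [CompactSpace X] [MeasurableSpace X]
  {μ : Measure X} [IsProbabilityMeasure μ]

lemma exists_measureReal_Iio_le_le_Iic (f : C(X, ℕ)) {t : ℝ} (h0 : 0 ≤ t) (h1 : t ≤ 1) :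
    ∃ i, μ.real (f ⁻¹' Iio i) ≤ t ∧ t ≤ μ.real (f ⁻¹' Iic i) := by
  have hex : ∃ i, t ≤ μ.real (f ⁻¹' Iic i) := by
    obtain ⟨b, hb⟩ := (isCompact_range f.continuous).bddAbove
    have huniv : f ⁻¹' Iic b = univ := eq_univ_of_forall fun x => hb ⟨x, rfl⟩
    exact ⟨b, by rwa [huniv, probReal_univ]⟩
  refine ⟨Nat.find hex, ?_, Nat.find_spec hex⟩
  rcases hk : Nat.find hex with _ | k
  · simpa using h0
  · rw [← Order.succ_eq_add_one, Order.Iio_succ]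
    exact (not_le.mp (Nat.find_min hex (by omega))).le

variable [OpensMeasurableSpace X]

lemma IsGood.exists_isClopen_between (hμ : IsGood μ) (f : C(X, ℕ)) {t : ℝ}
    (ht : t ∈ clopenValueGroup μ) (h0 : 0 ≤ t) (h1 : t ≤ 1) :
    ∃ (i : ℕ) (D : Set X), IsClopen D ∧ μ.real D = t ∧ f ⁻¹' Iio i ⊆ D ∧ D ⊆ f ⁻¹' Iic i := by
  have hclopen (s : Set ℕ) : IsClopen (f ⁻¹' s) := (isClopen_discrete s).preimage f.continuous
  obtain ⟨i, hi1, hi2⟩ := exists_measureReal_Iio_le_le_Iic (μ := μ) f h0 h1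
  have hsub : f ⁻¹' Iio i ⊆ f ⁻¹' Iic i := preimage_mono Iio_subset_Iic_self
  obtain ⟨D, hD, hDi, hDm⟩ := hμ.exists_subset ((hclopen (Iic i)).diff (hclopen (Iio i)))
    ((clopenValueGroup μ).sub_mem ht (measureReal_mem_clopenValueGroup (hclopen (Iio i))))
    (by linarith) (by
      rw [measureReal_sdiff hsub (hclopen _).isOpen.measurableSet]
      linarith)
  refine ⟨i, f ⁻¹' Iio i ∪ D, (hclopen _).union hD, ?_, subset_union_left,
    union_subset hsub (hDi.trans sdiff_subset)⟩
  rw [measureReal_union (disjoint_sdiff_right.mono_right hDi) hD.isOpen.measurableSet, hDm]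
  ring

open scoped Classical in
lemma IsGood.exists_refinement (hμ : IsGood μ) (f : C(X, ℕ)) (W : Clopens X) :
    ∃ f' : C(X, ℕ), (∀ x y, f x < f y → f' x < f' y) ∧
      (∀ x y, f' x = f' y → (x ∈ W ↔ y ∈ W)) ∧
      ∃ D : Set X, IsClopen D ∧ μ.real D = μ.real (W : Set X) ∧
        ∀ x y, f' x ≤ f' y → y ∈ D → x ∈ D := by
  obtain ⟨i, D, hD, hDm, hiD, hDi⟩ := hμ.exists_isClopen_between f
    (measureReal_mem_clopenValueGroup W.isClopen) measureReal_nonneg measureReal_le_one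
  have continuous_indicator {A : Set X} (hA : IsClopen A) : Continuous (A.indicator (1 : X → ℕ)) :=
    hA.continuous_indicator continuous_one
  -- Splitting by `D` takes precedence over splitting by `W`, so that `D` is an initial segment.
  let f' : C(X, ℕ) := ⟨fun x => 4 * f x + 2 * Dᶜ.indicator 1 x + (W : Set X)ᶜ.indicator 1 x,
    ((continuous_const.mul f.continuous).add (continuous_const.mul
      (continuous_indicator hD.compl))).add (continuous_indicator W.isClopen.compl)⟩
  have f'_apply (x : X) :
      f' x = 4 * f x + 2 * (if x ∈ D then 0 else 1) + (if x ∈ W then 0 else 1) := by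
    simp [f', indicator_apply]
  refine ⟨f', fun x y hxy => ?_, fun x y hxy => ?_, D, hD, hDm, fun x y hxy hy => ?_⟩
  · rw [f'_apply, f'_apply]
    split_ifs <;> omega
  · by_contra hW
    rw [f'_apply, f'_apply] at hxy
    split_ifs at hxy <;> first | omega | tauto
  · by_contra hx
    have hix : i ≤ f x := not_lt.mp fun hlt => hx (hiD hlt)
    have hyi : f y ≤ i := hDi hy
    rw [f'_apply, f'_apply, if_neg hx, if_pos hy] at hxy
    split_ifs at hxy <;> omega

variable [T2Space X] [SecondCountableTopology X] [TotallyDisconnectedSpace X]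

lemma IsGood.exists_labelling_sequence (hμ : IsGood μ) : ∃ f : ℕ → C(X, ℕ),
    (∀ k l x y, k ≤ l → f k x < f k y → f l x < f l y) ∧
    (∀ x y, (∀ k, f k x = f k y) → x = y) ∧
    ∀ W : Clopens X, ∃ (k : ℕ) (D : Set X), IsClopen D ∧ μ.real D = μ.real (W : Set X) ∧
      ∀ x y, f k x ≤ f k y → y ∈ D → x ∈ D := by
  have : Countable (Clopens X) := Clopens.countable_iff_secondCountable.mpr inferInstance
  obtain ⟨W, hW⟩ := exists_surjective_nat (Clopens X)
  choose refinement lt_of_lt mem_iff D hD hDm hDlow using hμ.exists_refinement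
  let f : ℕ → C(X, ℕ) := fun k => Nat.rec 0 (fun k f => refinement f (W k)) k
  refine ⟨f, fun k l x y hkl hxy => ?_, fun x y hxy => ?_, fun V => ?_⟩
  · induction l, hkl using Nat.le_induction with
    | base => exact hxy
    | succ l _ ih => exact lt_of_lt (f l) (W l) x y ih
  · by_contra hne
    obtain ⟨U, hU, hxU, hyU⟩ := exists_isClopen_of_totally_separated hne
    obtain ⟨k, hk⟩ := hW ⟨U, hU⟩
    have hWk := mem_iff (f k) (W k) x y (hxy (k + 1))
    rw [hk] at hWk
    exact hyU (hWk.mp hxU)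
  · obtain ⟨k, rfl⟩ := hW V
    exact ⟨k + 1, D (f k) (W k), hD _ _, hDm _ _, hDlow _ _⟩

/-- The order is lexicographic in the labels, so that each clopen initial segment for one of the
labellings is a lower set. -/
lemma IsGood.exists_linearOrder (hμ : IsGood μ) : ∃ _ : LinearOrder X,
    (∀ x y : X, x < y → ∃ A : Set X, IsClopen A ∧ IsLowerSet A ∧ x ∈ A ∧ y ∉ A) ∧
    ∀ W : Set X, IsClopen W → ∃ D : Set X, IsClopen D ∧ IsLowerSet D ∧ μ.real D = μ.real W := by
  obtain ⟨f, lt_of_lt, eq_of_eq, exists_initial⟩ := hμ.exists_labelling_sequence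
  let φ : X → Lex (ℕ → ℕ) := fun x => toLex fun k => f k x
  have φ_injective : Function.Injective φ := fun x y hxy => eq_of_eq x y (congrFun hxy)
  have le_of_φ_le {x y : X} (hxy : φ x ≤ φ y) (k : ℕ) : f k x ≤ f k y := by
    rcases hxy.eq_or_lt with heq | ⟨j, heq, hlt⟩
    · exact (congrFun heq k).le
    · rcases lt_or_ge k j with hkj | hjk
      · exact (heq k hkj).le
      · exact (lt_of_lt j k x y hjk hlt).le
  let lexOrder : LinearOrder X := LinearOrder.lift' φ φ_injective
  refine ⟨lexOrder, fun x y hxy => ?_, fun W hW => ?_⟩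
  · obtain ⟨k, hk⟩ : ∃ k, f k x ≠ f k y := by
      by_contra! heq
      exact hxy.ne (eq_of_eq x y heq)
    exact ⟨f k ⁻¹' Iic (f k x), (isClopen_discrete _).preimage (f k).continuous,
      fun a b hba ha => (le_of_φ_le hba k).trans ha, le_refl (f k x),
      not_le.mpr ((le_of_φ_le hxy.le k).lt_of_ne hk)⟩
  · obtain ⟨k, D, hD, hDm, hDlow⟩ := exists_initial ⟨W, hW⟩
    exact ⟨D, hD, fun a b hba ha => hDlow b a (le_of_φ_le hba k) ha, hDm⟩

end Scale

/-- A scale indexed by `G ∩ [0, 1]`: a strictly increasing family of clopen sets from `∅` to the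
whole space that separates points. Members with index outside `G ∩ [0, 1]` carry no information. -/
structure IsScale {X : Type*} [TopologicalSpace X] (G : AddSubgroup ℝ) (C : ℝ → Set X) :
    Prop where
  isClopen : ∀ t, IsClopen (C t)
  strictMonoOn : StrictMonoOn C (G ∩ Icc 0 1)
  zero : C 0 = ∅
  one : C 1 = univ
  eq_of_mem_iff : ∀ x y, (∀ t ∈ (G : Set ℝ) ∩ Icc 0 1, x ∈ C t ↔ y ∈ C t) → x = y

section Scale

variable {X : Type*} [TopologicalSpace X] [MeasurableSpace X]
  [OpensMeasurableSpace X] {μ : Measure X} [IsProbabilityMeasure μ]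

lemma IsGood.subset_of_isLowerSet [LinearOrder X] (hμ : IsGood μ) {A B : Set X} (hA : IsClopen A)
    (hB : IsClopen B) (hA' : IsLowerSet A) (hB' : IsLowerSet B) (h : μ.real A ≤ μ.real B) :
    A ⊆ B :=
  (hA'.total hB').elim id fun hBA => (hμ.eq_of_subset hB hA hBA h).ge

variable [CompactSpace X] [T2Space X] [SecondCountableTopology X] [TotallyDisconnectedSpace X]

theorem IsGood.exists_isScale (hμ : IsGood μ) : ∃ C : ℝ → Set X,
    IsScale (clopenValueGroup μ) C ∧ ∀ t ∈ (clopenValueGroup μ : Set ℝ) ∩ Icc 0 1,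
      μ.real (C t) = t := by
  obtain ⟨_, exists_between, exists_lower⟩ := hμ.exists_linearOrder
  have exists_lower_of_mem (t : ℝ) : ∃ A : Set X, IsClopen A ∧ IsLowerSet A ∧
      (t ∈ (clopenValueGroup μ : Set ℝ) ∩ Icc 0 1 → μ.real A = t) := by
    by_cases ht : t ∈ (clopenValueGroup μ : Set ℝ) ∩ Icc 0 1
    · obtain ⟨B, hB, -, rfl⟩ := hμ.exists_subset isClopen_univ ht.1 ht.2.1 (by simpa using ht.2.2)
      obtain ⟨A, hA, hA', hAB⟩ := exists_lower B hB
      exact ⟨A, hA, hA', fun _ => hAB⟩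
    · exact ⟨∅, isClopen_empty, isLowerSet_empty, fun h => (ht h).elim⟩
  choose C hC hClow hCm using exists_lower_of_mem
  have subset_of_le {s t : ℝ} (h : μ.real (C s) ≤ μ.real (C t)) : C s ⊆ C t :=
    hμ.subset_of_isLowerSet (hC s) (hC t) (hClow s) (hClow t) h
  refine ⟨C, ⟨hC, fun s hs t ht hst => ?_, ?_, ?_, fun x y hxy => ?_⟩, hCm⟩
  · refine (subset_of_le (by rw [hCm s hs, hCm t ht]; exact hst.le)).ssubset_of_ne fun heq => ?_
    exact hst.ne (by rw [← hCm s hs, heq, hCm t ht])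
  · refine (hμ.eq_of_subset isClopen_empty (hC 0) (empty_subset _) ?_).symm
    simp [hCm 0 ⟨zero_mem _, by simp⟩]
  · refine hμ.eq_of_subset (hC 1) isClopen_univ (subset_univ _) ?_
    simp [hCm 1 ⟨one_mem_clopenValueGroup, by simp⟩]
  · have not_lt_of_mem_iff (x y : X) (hxy : ∀ t ∈ (clopenValueGroup μ : Set ℝ) ∩ Icc 0 1,
        x ∈ C t ↔ y ∈ C t) : ¬ x < y := fun hlt => by
      obtain ⟨A, hA, hAlow, hxA, hyA⟩ := exists_between x y hlt
      have hmem : μ.real A ∈ (clopenValueGroup μ : Set ℝ) ∩ Icc 0 1 :=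
        ⟨measureReal_mem_clopenValueGroup hA, measureReal_nonneg, measureReal_le_one⟩
      have hAC : A = C (μ.real A) :=
        (hμ.subset_of_isLowerSet hA (hC _) hAlow (hClow _) (hCm _ hmem).ge).antisymm
          (hμ.subset_of_isLowerSet (hC _) hA (hClow _) hAlow (hCm _ hmem).le)
      rw [hAC] at hxA hyA
      exact hyA ((hxy _ hmem).mp hxA)
    exact le_antisymm (not_lt.mp (not_lt_of_mem_iff y x fun t ht => (hxy t ht).symm))
      (not_lt.mp (not_lt_of_mem_iff x y hxy))

end Scale

/-- Integer-valued cuts of a subgroup `G` of `ℝ`: monotone functions `F : G → ℤ` that vanish at `0`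
and commute with integer translations. Monotonicity and equivariance are expressed by the single
condition `map_le_map_add'`. The space of cuts is the circle `ℝ / ℤ` with the points of `G`
doubled, `F` corresponding to the place where it jumps from `0` to `1`. -/
structure Cut (G : AddSubgroup ℝ) where
  toFun : G → ℤ
  map_zero' : toFun 0 = 0
  map_le_map_add' : ∀ (s t : G) (n : ℤ), (t : ℝ) ≤ s + n → toFun t ≤ toFun s + n

namespace Cut

variable {G : AddSubgroup ℝ}

instance : FunLike (Cut G) G ℤ where
  coe := toFun
  coe_injective F F' h := by
    cases F
    cases F'
    congr

lemma map_zero (F : Cut G) : F 0 = 0 := F.map_zero'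

lemma map_le_map_add (F : Cut G) {s t : G} {n : ℤ} (h : (t : ℝ) ≤ s + n) : F t ≤ F s + n :=
  F.map_le_map_add' s t n h

lemma monotone (F : Cut G) : Monotone F := fun s t hst => by
  simpa using F.map_le_map_add (n := 0) (show (s : ℝ) ≤ t + (0 : ℤ) by simpa using hst)

lemma map_eq_map_add (F : Cut G) {s t : G} {n : ℤ} (h : (t : ℝ) = s + n) : F t = F s + n := by
  have hle := F.map_le_map_add h.le
  have hge := F.map_le_map_add (show (s : ℝ) ≤ t + (-n : ℤ) by push_cast; linarith)
  omega

lemma map_le_ceil (F : Cut G) (t : G) : F t ≤ ⌈(t : ℝ)⌉ := by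
  simpa [F.map_zero] using
    F.map_le_map_add (s := 0) (n := ⌈(t : ℝ)⌉) (by simpa using Int.le_ceil (t : ℝ))

lemma floor_le_map (F : Cut G) (t : G) : ⌊(t : ℝ)⌋ ≤ F t := by
  have h := F.map_le_map_add (s := t) (t := 0) (n := -⌊(t : ℝ)⌋)
    (by simpa using Int.floor_le (t : ℝ))
  rw [F.map_zero] at h
  omega

lemma map_nonneg (F : Cut G) {t : G} (h0 : 0 ≤ (t : ℝ)) : 0 ≤ F t :=
  (Int.floor_nonneg.mpr h0).trans (F.floor_le_map t)

lemma map_le_one (F : Cut G) {t : G} (h1 : (t : ℝ) ≤ 1) : F t ≤ 1 :=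
  (F.map_le_ceil t).trans (Int.ceil_le.mpr (by simpa using h1))

lemma abs_map_sub_le (F : Cut G) (t : G) : |(F t : ℝ) - t| ≤ 1 := by
  have hceil : (F t : ℝ) ≤ ⌈(t : ℝ)⌉ := by exact_mod_cast F.map_le_ceil t
  have hfloor : (⌊(t : ℝ)⌋ : ℝ) ≤ F t := by exact_mod_cast F.floor_le_map t
  rw [abs_le]
  constructor <;> linarith [Int.ceil_lt_add_one (t : ℝ), Int.lt_floor_add_one (t : ℝ)]

lemma exists_jump (F : Cut G) : ∃ z : ℝ, ∀ t : G, (t < z → F t ≤ 0) ∧ (z < t → 0 < F t) := by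
  let S : Set ℝ := {u | ∃ t : G, (t : ℝ) = u ∧ F t ≤ 0}
  have S_nonempty : S.Nonempty := ⟨0, 0, rfl, F.map_zero.le⟩
  have S_bddAbove : BddAbove S := by
    refine ⟨1, ?_⟩
    rintro _ ⟨t, rfl, ht⟩
    have ht' : (F t : ℝ) ≤ 0 := by exact_mod_cast ht
    linarith [(abs_le.mp (F.abs_map_sub_le t)).1]
  refine ⟨sSup S, fun t => ⟨fun ht => ?_, fun ht => ?_⟩⟩
  · obtain ⟨_, ⟨s, rfl, hs⟩, hts⟩ := exists_lt_of_lt_csSup S_nonempty ht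
    exact (F.monotone hts.le).trans hs
  · by_contra! hle
    exact ht.not_ge (le_csSup S_bddAbove ⟨t, rfl, hle⟩)

/-! ### Topology and Borel structure -/

instance : TopologicalSpace (Cut G) := .induced (fun F => (F : G → ℤ)) inferInstance

instance : MeasurableSpace (Cut G) := borel _

instance : BorelSpace (Cut G) := ⟨rfl⟩

lemma continuous_coe : Continuous fun F : Cut G => (F : G → ℤ) := continuous_induced_dom

lemma continuous_eval (t : G) : Continuous fun F : Cut G => F t :=
  (continuous_apply t).comp continuous_coe

lemma continuous_iff {X : Type*} [TopologicalSpace X] {f : X → Cut G} :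
    Continuous f ↔ ∀ t, Continuous fun x => f x t :=
  continuous_induced_rng.trans continuous_pi_iff

instance : T2Space (Cut G) := .of_injective_continuous DFunLike.coe_injective continuous_coe

/-- The cuts whose jump lies between `s` and `t`. -/
def arc (s t : G) : Set (Cut G) := {F | F s ≤ 0 ∧ 0 < F t}

lemma mem_arc {s t : G} {F : Cut G} : F ∈ arc s t ↔ F s ≤ 0 ∧ 0 < F t := Iff.rfl

lemma isClopen_arc (s t : G) : IsClopen (arc s t) :=
  ((isClopen_discrete (Iic (0 : ℤ))).preimage (continuous_eval s)).inter
    ((isClopen_discrete (Ioi (0 : ℤ))).preimage (continuous_eval t))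

lemma lt_of_mem_arc {s t : G} {F : Cut G} (h : F ∈ arc s t) : s < t := by
  by_contra! hts
  have := F.monotone hts
  have := h.1
  have := h.2
  omega

lemma arc_inter_arc (s t s' t' : G) : arc s t ∩ arc s' t' = arc (max s s') (min t t') := by
  ext F
  simp only [mem_inter_iff, mem_arc, F.monotone.map_max, F.monotone.map_min, max_le_iff,
    lt_min_iff]
  tauto

/-- The arcs that do not cross the base point `0` of the circle. -/
def arcs (G : AddSubgroup ℝ) : Set (Set (Cut G)) :=
  {A | ∃ s t : G, 0 ≤ (s : ℝ) ∧ (t : ℝ) ≤ 1 ∧ arc s t = A}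

lemma inter_mem_arcs {A B : Set (Cut G)} (hA : A ∈ arcs G) (hB : B ∈ arcs G) :
    A ∩ B ∈ arcs G := by
  obtain ⟨s, t, hs, ht, rfl⟩ := hA
  obtain ⟨s', t', -, -, rfl⟩ := hB
  exact ⟨max s s', min t t', hs.trans (Subtype.coe_le_coe.mpr (le_max_left s s')),
    (Subtype.coe_le_coe.mpr (min_le_left t t')).trans ht, (arc_inter_arc s t s' t').symm⟩

lemma isPiSystem_arcs : IsPiSystem (arcs G) := fun _ hA _ hB _ => inter_mem_arcs hA hB

lemma exists_mem_arcs_map_eq (h1 : (1 : ℝ) ∈ G) (F : Cut G) (t : G) :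
    ∃ A ∈ arcs G, F ∈ A ∧ ∀ F' ∈ A, F' t = F t := by
  let one : G := ⟨1, h1⟩
  have hone (F' : Cut G) : F' one = 1 := by
    simpa [F'.map_zero] using F'.map_eq_map_add (s := 0) (t := one) (n := 1) (by simp [one])
  obtain ⟨r, hr⟩ : ∃ r : G, (t : ℝ) = r + (⌊(t : ℝ)⌋ : ℤ) := ⟨t - ⌊(t : ℝ)⌋ • one, by simp [one]⟩
  have hr0 : 0 ≤ (r : ℝ) := by linarith [Int.floor_le (t : ℝ)]
  have hr1 : (r : ℝ) ≤ 1 := by linarith [Int.lt_floor_add_one (t : ℝ)]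
  simp only [fun F' : Cut G => F'.map_eq_map_add hr, add_left_inj]
  rcases le_or_gt (F r) 0 with hFr | hFr
  · refine ⟨arc r one, ⟨r, one, hr0, le_rfl, rfl⟩, ⟨hFr, by simp [hone]⟩, fun F' hF' => ?_⟩
    exact (hF'.1.antisymm (F'.map_nonneg hr0)).trans (hFr.antisymm (F.map_nonneg hr0)).symm
  · refine ⟨arc 0 r, ⟨0, r, le_rfl, hr1, rfl⟩, ⟨F.map_zero.le, hFr⟩, fun F' hF' => ?_⟩
    exact ((F'.map_le_one hr1).antisymm hF'.2).trans ((F.map_le_one hr1).antisymm hFr).symm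

lemma isTopologicalBasis_arcs (h1 : (1 : ℝ) ∈ G) : IsTopologicalBasis (arcs G) := by
  refine isTopologicalBasis_of_isOpen_of_nhds ?_ fun F U hF hU => ?_
  · rintro _ ⟨s, t, -, -, rfl⟩
    exact (isClopen_arc s t).isOpen
  obtain ⟨V, hV, rfl⟩ := isOpen_induced_iff.mp hU
  obtain ⟨I, u, hu, huV⟩ := isOpen_pi_iff.mp hV F hF
  obtain ⟨A, hA, hFA, hAI⟩ : ∃ A ∈ arcs G, F ∈ A ∧ ∀ F' ∈ A, ∀ t ∈ I, F' t = F t := by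
    clear hu huV
    induction I using Finset.induction_on with
    | empty =>
      obtain ⟨A, hA, hFA, -⟩ := exists_mem_arcs_map_eq h1 F 0
      exact ⟨A, hA, hFA, by simp⟩
    | insert t I _ ih =>
      obtain ⟨A, hA, hFA, hAI⟩ := ih
      obtain ⟨B, hB, hFB, hBt⟩ := exists_mem_arcs_map_eq h1 F t
      refine ⟨A ∩ B, inter_mem_arcs hA hB, ⟨hFA, hFB⟩, fun F' hF' => ?_⟩
      exact Finset.forall_mem_insert _ _ _ |>.mpr ⟨hBt F' hF'.2, hAI F' hF'.1⟩
  refine ⟨A, hA, hFA, fun F' hF' => huV fun t ht => ?_⟩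
  have hFt := (hu t ht).2
  rwa [← hAI F' hF' t ht] at hFt

/-! ### Rotations -/

instance : VAdd G (Cut G) where
  vadd a F :=
    { toFun t := F (t - a) - F (-a)
      map_zero' := by simp
      map_le_map_add' s t n h := by
        have := F.map_le_map_add (s := s - a) (t := t - a) (n := n) (by push_cast; linarith)
        omega }

lemma vadd_apply (a : G) (F : Cut G) (t : G) : (a +ᵥ F) t = F (t - a) - F (-a) := rfl

instance : AddAction G (Cut G) where
  zero_vadd F := DFunLike.ext _ _ fun t => by simp [vadd_apply, F.map_zero]
  add_vadd a b F := DFunLike.ext _ _ fun t => by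
    simp only [vadd_apply, sub_sub_sub_cancel_right, neg_add, ← sub_eq_add_neg, ← sub_sub]

instance : ContinuousConstVAdd G (Cut G) where
  continuous_const_vadd a := continuous_iff.mpr fun t =>
    (continuous_eval (t - a)).sub (continuous_eval (-a))

/-- The rotation of the doubled circle by `a`. -/
abbrev rotation (a : G) : Cut G ≃ₜ Cut G := Homeomorph.vadd a

/-! ### Mean cut -/

section Mean

/-- The average of the cuts with respect to `ν`; it plays the role of a distribution function of
`ν`. -/
noncomputable def mean (ν : Measure (Cut G)) (t : G) : ℝ := ∫ F, (F t : ℝ) ∂ν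

lemma stronglyMeasurable_eval (t : G) : StronglyMeasurable fun F : Cut G => (F t : ℝ) :=
  (continuous_of_discreteTopology.comp (continuous_eval t)).stronglyMeasurable

variable (ν : Measure (Cut G)) [IsProbabilityMeasure ν]

lemma integrable_eval (t : G) : Integrable (fun F : Cut G => (F t : ℝ)) ν := by
  refine .of_bound (C := |(t : ℝ)| + 1) (stronglyMeasurable_eval t).aestronglyMeasurable
    (.of_forall fun F => ?_)
  have := abs_sub_abs_le_abs_sub (F t : ℝ) t
  rw [Real.norm_eq_abs]
  linarith [F.abs_map_sub_le t]

lemma mean_le_mean_add {s t : G} {n : ℤ} (h : (t : ℝ) ≤ s + n) : mean ν t ≤ mean ν s + n := by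
  have hle : mean ν t ≤ ∫ F, ((F s : ℝ) + n) ∂ν :=
    integral_mono (integrable_eval ν t) ((integrable_eval ν s).add (integrable_const _))
      fun F => by simpa using (Int.cast_le (R := ℝ)).mpr (F.map_le_map_add h)
  rwa [integral_add (integrable_eval ν s) (integrable_const _), integral_const, probReal_univ,
    one_smul] at hle

lemma abs_mean_sub_le (t : G) : |mean ν t - t| ≤ 1 := by
  have h := norm_integral_le_of_norm_le_const (μ := ν) (f := fun F : Cut G => (F t : ℝ) - t)
    (.of_forall fun F => F.abs_map_sub_le t)
  rwa [integral_sub (integrable_eval ν t) (integrable_const _), integral_const, probReal_univ,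
    one_smul, mul_one] at h

lemma mean_map_rotation (a t : G) :
    mean (ν.map (rotation a)) t = mean ν (t - a) - mean ν (-a) := by
  rw [mean, (rotation a).measurableEmbedding.integral_map, mean, mean,
    ← integral_sub (integrable_eval ν _) (integrable_eval ν _)]
  exact integral_congr_ae (.of_forall fun F => by simp [vadd_apply])

lemma measureReal_arc {s t : G} (hs : 0 ≤ (s : ℝ)) (hst : s ≤ t) (ht : (t : ℝ) ≤ 1) :
    ν.real (arc s t) = mean ν t - mean ν s := by
  rw [mean, mean, ← integral_sub (integrable_eval ν t) (integrable_eval ν s),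
    ← integral_indicator_one (isClopen_arc s t).isOpen.measurableSet]
  refine integral_congr_ae (.of_forall fun F => ?_)
  have hmono := F.monotone hst
  have hs0 := F.map_nonneg hs
  have ht1 := F.map_le_one ht
  by_cases hF : F ∈ arc s t
  · have hs' : F s = 0 := hF.1.antisymm hs0
    have ht' : F t = 1 := ht1.antisymm hF.2
    simp [hF, hs', ht']
  · have heq : F s = F t := by
      rw [mem_arc] at hF
      omega
    simp [hF, heq]

variable {ν}

lemma eq_of_mean_eq (h1 : (1 : ℝ) ∈ G) [SecondCountableTopology (Cut G)]
    {ν' : Measure (Cut G)} [IsProbabilityMeasure ν'] (h : mean ν = mean ν') : ν = ν' := by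
  refine measure_ext_of_isTopologicalBasis (isTopologicalBasis_arcs h1) isPiSystem_arcs ?_
  rintro _ ⟨s, t, hs, ht, rfl⟩
  rcases le_or_gt s t with hst | hts
  · rw [measureReal_arc ν hs hst ht, measureReal_arc ν' hs hst ht, h]
  · have : arc s t = ∅ := eq_empty_of_forall_notMem fun F hF => (lt_of_mem_arc hF).not_gt hts
    simp [this]

end Mean

end Cut

namespace IsScale

variable {X : Type*} [TopologicalSpace X] {G : AddSubgroup ℝ} {C : ℝ → Set X}

lemma fract_mem_inter_Icc (h1 : (1 : ℝ) ∈ G) (t : G) :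
    Int.fract (t : ℝ) ∈ (G : Set ℝ) ∩ Icc 0 1 := by
  refine ⟨G.sub_mem t.2 ?_, Int.fract_nonneg _, (Int.fract_lt_one _).le⟩
  simpa using G.zsmul_mem h1 ⌊(t : ℝ)⌋

/-- The cut attached to a point `x`: on `[0, 1]` it jumps where the sets `C t` start to
contain `x`. -/
noncomputable def toCut (hC : IsScale G C) (h1 : (1 : ℝ) ∈ G) (x : X) : Cut G where
  toFun t := ⌊(t : ℝ)⌋ + (C (Int.fract t)).indicator 1 x
  map_zero' := by simp [hC.zero]
  map_le_map_add' s t n h := by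
    have indicator_bounds (A : Set X) :
        0 ≤ A.indicator (1 : X → ℤ) x ∧ A.indicator (1 : X → ℤ) x ≤ 1 := by
      by_cases hx : x ∈ A <;> simp [hx]
    have hs := indicator_bounds (C (Int.fract s))
    have ht := indicator_bounds (C (Int.fract t))
    have hfloor : ⌊(t : ℝ)⌋ ≤ ⌊(s : ℝ)⌋ + n := by
      simpa using Int.floor_mono h
    rcases hfloor.eq_or_lt with heq | hlt
    · have hfract : Int.fract (t : ℝ) ≤ Int.fract (s : ℝ) := by
        rw [Int.fract, Int.fract, heq]
        push_cast
        linarith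
      have hsub : C (Int.fract t) ⊆ C (Int.fract s) := hC.strictMonoOn.monotoneOn
        (fract_mem_inter_Icc h1 t) (fract_mem_inter_Icc h1 s) hfract
      have hind : (C (Int.fract t)).indicator (1 : X → ℤ) x ≤ (C (Int.fract s)).indicator 1 x :=
        indicator_le_indicator_of_subset hsub (fun _ => zero_le_one) x
      omega
    · omega

variable (hC : IsScale G C) (h1 : (1 : ℝ) ∈ G)

lemma toCut_apply (x : X) (t : G) :
    hC.toCut h1 x t = ⌊(t : ℝ)⌋ + (C (Int.fract t)).indicator 1 x := rfl

lemma toCut_apply_of_mem_Icc (x : X) {t : G} (ht : (t : ℝ) ∈ Icc 0 1) :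
    hC.toCut h1 x t = (C t).indicator 1 x := by
  rcases ht.2.eq_or_lt with ht1 | ht1
  · simp [toCut_apply, ht1, hC.zero, hC.one]
  · rw [toCut_apply, Int.fract_eq_self.mpr ⟨ht.1, ht1⟩, Int.floor_eq_zero_iff.mpr ⟨ht.1, ht1⟩,
      zero_add]

lemma continuous_toCut : Continuous (hC.toCut h1) :=
  Cut.continuous_iff.mpr fun t =>
    continuous_const.add ((hC.isClopen (Int.fract t)).continuous_indicator continuous_one)

lemma toCut_injective : Function.Injective (hC.toCut h1) := by
  intro x y hxy
  refine hC.eq_of_mem_iff x y fun t ht => ?_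
  have heq := DFunLike.congr_fun hxy ⟨t, ht.1⟩
  rw [hC.toCut_apply_of_mem_Icc h1 x ht.2, hC.toCut_apply_of_mem_Icc h1 y ht.2] at heq
  by_cases hx : x ∈ C t <;> by_cases hy : y ∈ C t <;> simp [hx, hy] at heq ⊢

lemma denseRange_toCut : DenseRange (hC.toCut h1) := by
  refine (Cut.isTopologicalBasis_arcs h1).dense_iff.mpr ?_
  rintro _ ⟨s, t, hs, ht, rfl⟩ ⟨F, hF⟩
  have hst : (s : ℝ) < t := Cut.lt_of_mem_arc hF
  have hs' : (s : ℝ) ∈ Icc 0 1 := ⟨hs, hst.le.trans ht⟩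
  have ht' : (t : ℝ) ∈ Icc 0 1 := ⟨hs.trans hst.le, ht⟩
  obtain ⟨x, hxt, hxs⟩ := exists_of_ssubset (hC.strictMonoOn ⟨s.2, hs'⟩ ⟨t.2, ht'⟩ hst)
  refine ⟨hC.toCut h1 x, Cut.mem_arc.mpr ?_, mem_range_self x⟩
  rw [hC.toCut_apply_of_mem_Icc h1 x hs', hC.toCut_apply_of_mem_Icc h1 x ht']
  simp [hxs, hxt]

lemma exists_homeomorph_cut [CompactSpace X] : ∃ e : X ≃ₜ Cut G, ⇑e = hC.toCut h1 :=
  exists_homeomorph_of_denseRange (hC.continuous_toCut h1) (hC.toCut_injective h1)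
    (hC.denseRange_toCut h1)

lemma mean_map_toCut [MeasurableSpace X] [OpensMeasurableSpace X] {μ : Measure X}
    [IsProbabilityMeasure μ] (hμC : ∀ t ∈ (G : Set ℝ) ∩ Icc 0 1, μ.real (C t) = t) (t : G) :
    Cut.mean (μ.map (hC.toCut h1)) t = t := by
  have hmeas : MeasurableSet (C (Int.fract t)) := (hC.isClopen _).isOpen.measurableSet
  have hcast (x : X) :
      (hC.toCut h1 x t : ℝ) = ⌊(t : ℝ)⌋ + (C (Int.fract t)).indicator 1 x := by
    by_cases hx : x ∈ C (Int.fract t) <;> simp [toCut_apply, hx]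
  rw [Cut.mean, integral_map (hC.continuous_toCut h1).aemeasurable
    (Cut.stronglyMeasurable_eval t).aestronglyMeasurable]
  simp only [hcast]
  rw [integral_add (integrable_const _) ((integrable_const 1).indicator hmeas),
    integral_const, integral_indicator_one hmeas, hμC _ (fract_mem_inter_Icc h1 t),
    probReal_univ, one_smul, Int.floor_add_fract]

end IsScale

theorem IsGood.exists_homeomorph_cut {X : Type*} [TopologicalSpace X] [MeasurableSpace X]
    [OpensMeasurableSpace X] {μ : Measure X} [IsProbabilityMeasure μ] [CompactSpace X] [T2Space X]
    [SecondCountableTopology X] [TotallyDisconnectedSpace X] (hμ : IsGood μ) :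
    ∃ e : X ≃ₜ Cut (clopenValueGroup μ), ∀ t, Cut.mean (μ.map e) t = t := by
  obtain ⟨C, hC, hμC⟩ := hμ.exists_isScale
  obtain ⟨e, he⟩ := hC.exists_homeomorph_cut one_mem_clopenValueGroup
  exact ⟨e, fun t => he ▸ hC.mean_map_toCut one_mem_clopenValueGroup hμC t⟩

lemma exists_int_mul_add_int_mem_Ioo {a : ℝ} (ha : Irrational a) {s t : ℝ} (hst : s < t) :
    ∃ n m : ℤ, n * a + m ∈ Ioo s t := by
  have hdense : Dense (AddSubgroup.closure {a, 1} : Set ℝ) :=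
    dense_addSubgroupClosure_pair_iff.mpr (by simpa using ha)
  obtain ⟨d, hd, hsdt⟩ := hdense.exists_between hst
  obtain ⟨n, m, rfl⟩ := AddSubgroup.mem_closure_pair.mp hd
  exact ⟨n, m, by simpa using hsdt⟩

lemma eq_of_forall_abs_nsmul_sub_nsmul_le {x y K : ℝ} (h : ∀ n : ℕ, |n • x - n • y| ≤ K) :
    x = y := by
  by_contra hne
  obtain ⟨n, hn⟩ := Archimedean.arch (K + 1) (abs_pos.mpr (sub_ne_zero.mpr hne))
  have hle := h n
  rw [← nsmul_sub, abs_nsmul] at hle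
  linarith

namespace Cut

variable {G : AddSubgroup ℝ} {a : G}

lemma isMinimal_rotation (h1 : (1 : ℝ) ∈ G) (ha : Irrational a) :
    IsMinimal (rotation a) := by
  intro F
  refine (isTopologicalBasis_arcs h1).dense_iff.mpr ?_
  rintro _ ⟨s, t, hs, ht, rfl⟩ ⟨F', hF'⟩
  have hst : (s : ℝ) < t := lt_of_mem_arc hF'
  obtain ⟨z, hz⟩ := F.exists_jump
  obtain ⟨n, m, hsz, hzt⟩ := exists_int_mul_add_int_mem_Ioo ha (sub_lt_sub_right hst z)
  let m' : G := m • ⟨1, h1⟩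
  have coe_m' : (m' : ℝ) = m := by simp [m']
  have hFs : F (s - n • a) ≤ m := by
    rw [F.map_eq_map_add (s := s - n • a - m') (n := m) (by simp [coe_m'])]
    have := (hz (s - n • a - m')).1 (by push_cast [coe_m', zsmul_eq_mul]; linarith)
    omega
  have hFt : m < F (t - n • a) := by
    rw [F.map_eq_map_add (s := t - n • a - m') (n := m) (by simp [coe_m'])]
    have := (hz (t - n • a - m')).2 (by push_cast [coe_m', zsmul_eq_mul]; linarith)
    omega
  refine ⟨n • a +ᵥ F, ?_, n, homeomorph_vadd_zpow_apply a n F⟩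
  have hs0 := (n • a +ᵥ F).map_nonneg hs
  have ht1 := (n • a +ᵥ F).map_le_one ht
  rw [vadd_apply] at hs0 ht1
  rw [mem_arc, vadd_apply, vadd_apply]
  omega

lemma mean_zsmul_of_map_rotation_eq {ν : Measure (Cut G)} [IsProbabilityMeasure ν]
    (hν : ν.map (rotation a) = ν) (n : ℤ) : mean ν (n • a) = n • mean ν a := by
  have mean_zero : mean ν 0 = 0 := by simp [mean, map_zero]
  have mean_add (t : G) : mean ν (t + a) = mean ν t + mean ν a := by
    have h (t : G) : mean ν t = mean ν (t - a) - mean ν (-a) := by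
      conv_lhs => rw [← hν]
      exact mean_map_rotation ν a t
    have hta := h (t + a)
    have haa := h a
    rw [add_sub_cancel_right] at hta
    rw [sub_self, mean_zero] at haa
    linarith
  let φ : AddConstMap G ℝ a (mean ν a) := ⟨mean ν, mean_add⟩
  have h := AddConstMapClass.map_zsmul_const φ n
  rwa [show φ 0 = 0 from mean_zero, zero_add] at h

lemma mean_eq_self_of_map_rotation_eq (ha : Irrational a) {ν : Measure (Cut G)}
    [IsProbabilityMeasure ν] (hν : ν.map (rotation a) = ν) (t : G) :
    mean ν t = t := by
  have mean_zsmul := mean_zsmul_of_map_rotation_eq hν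
  have mean_a : mean ν a = a := eq_of_forall_abs_nsmul_sub_nsmul_le fun n => by
    have h := abs_mean_sub_le ν ((n : ℤ) • a)
    rw [mean_zsmul] at h
    simpa using h
  rcases lt_trichotomy (mean ν t) t with hlt | heq | hgt
  · obtain ⟨n, m, hd, hdt⟩ := exists_int_mul_add_int_mem_Ioo ha hlt
    have h := mean_le_mean_add ν (s := t) (t := n • a) (n := -m)
      (by push_cast [zsmul_eq_mul]; linarith)
    rw [mean_zsmul, mean_a, zsmul_eq_mul] at h
    push_cast at h
    linarith
  · exact heq
  · obtain ⟨n, m, htd, hd⟩ := exists_int_mul_add_int_mem_Ioo ha hgt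
    have h := mean_le_mean_add ν (s := n • a) (t := t) (n := m)
      (by push_cast [zsmul_eq_mul]; linarith)
    rw [mean_zsmul, mean_a, zsmul_eq_mul] at h
    linarith

theorem isStrictlyErgodic_rotation [SecondCountableTopology (Cut G)] (h1 : (1 : ℝ) ∈ G)
    (ha : Irrational a) {μ : Measure (Cut G)} [IsProbabilityMeasure μ] (hμ : ∀ t, mean μ t = t) :
    IsStrictlyErgodic (rotation a) μ := by
  refine ⟨isMinimal_rotation h1 ha, fun ν _ => ⟨fun hν => ?_, ?_⟩⟩
  · refine eq_of_mean_eq h1 (funext fun t => ?_)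
    rw [mean_eq_self_of_map_rotation_eq ha hν, hμ]
  · rintro rfl
    have := Measure.isProbabilityMeasure_map (μ := ν)
      (rotation a).measurable.aemeasurable
    refine eq_of_mean_eq h1 (funext fun t => ?_)
    rw [mean_map_rotation, hμ, hμ, hμ]
    simp

end Cut

section Odometer

variable {N : ℕ → ℕ}

/-- The odometer: the inverse limit of the rings `ZMod (N k)` along a divisibility chain `N`,
realized as a ring of compatible sequences. Its dynamics is translation by `1`. -/
def Odometer (hN : ∀ k, N k ∣ N (k + 1)) : Subring (∀ k, ZMod (N k)) :=
  ⨅ k, RingHom.eqLocus ((ZMod.castHom (hN k) _).comp (Pi.evalRingHom _ (k + 1)))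
    (Pi.evalRingHom _ k)

namespace Odometer

variable {hN : ∀ k, N k ∣ N (k + 1)}

lemma mem_iff {x : ∀ k, ZMod (N k)} :
    x ∈ Odometer hN ↔ ∀ k, ZMod.castHom (hN k) (ZMod (N k)) (x (k + 1)) = x k := by
  simp [Odometer, Subring.mem_iInf, RingHom.mem_eqLocus]

lemma apply_eq_of_le {x y : Odometer hN} {k l : ℕ} (hkl : k ≤ l) (h : x.1 l = y.1 l) :
    x.1 k = y.1 k := by
  induction l, hkl using Nat.le_induction with
  | base => exact h
  | succ l _ ih => exact ih (by rw [← mem_iff.mp x.2 l, ← mem_iff.mp y.2 l, h])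

/-- The points of the odometer with a prescribed coordinate. -/
def cylinder (k : ℕ) (j : ZMod (N k)) : Set (Odometer hN) := {x | x.1 k = j}

lemma mem_cylinder {k : ℕ} {j : ZMod (N k)} {x : Odometer hN} : x ∈ cylinder k j ↔ x.1 k = j :=
  Iff.rfl

/-- The family of all cylinders. -/
def cylinders (hN : ∀ k, N k ∣ N (k + 1)) : Set (Set (Odometer hN)) := {A | ∃ k j, cylinder k j = A}

lemma continuous_apply (k : ℕ) : Continuous fun x : Odometer hN => x.1 k :=
  (_root_.continuous_apply k).comp continuous_subtype_val

lemma isClopen_cylinder (k : ℕ) (j : ZMod (N k)) : IsClopen (cylinder (hN := hN) k j) :=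
  (isClopen_discrete {j}).preimage (continuous_apply k)

lemma cylinder_subset {x : Odometer hN} {k l : ℕ} (hkl : k ≤ l) :
    cylinder (hN := hN) l (x.1 l) ⊆ cylinder k (x.1 k) :=
  fun _ hy => apply_eq_of_le hkl hy

lemma isPiSystem_cylinders : IsPiSystem (cylinders hN) := by
  rintro _ ⟨k, j, rfl⟩ _ ⟨l, i, rfl⟩ ⟨x, rfl, rfl⟩
  rcases le_total k l with hkl | hlk
  · exact ⟨l, x.1 l, (inter_eq_right.mpr (cylinder_subset hkl)).symm⟩
  · exact ⟨k, x.1 k, (inter_eq_left.mpr (cylinder_subset hlk)).symm⟩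

lemma isTopologicalBasis_cylinders : IsTopologicalBasis (cylinders hN) := by
  refine isTopologicalBasis_of_isOpen_of_nhds ?_ fun x U hx hU => ?_
  · rintro _ ⟨k, j, rfl⟩
    exact (isClopen_cylinder k j).isOpen
  obtain ⟨V, hV, rfl⟩ := isOpen_induced_iff.mp hU
  obtain ⟨I, u, hu, huV⟩ := isOpen_pi_iff.mp hV x hx
  refine ⟨cylinder (I.sup id) (x.1 (I.sup id)), ⟨_, _, rfl⟩, rfl, fun y hy => huV fun k hk => ?_⟩
  have heq : y.1 k = x.1 k := apply_eq_of_le (Finset.le_sup (f := id) hk) hy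
  exact heq ▸ (hu k hk).2

variable (hN) in
/-- Translation of the odometer by `1`, also called the adding machine. -/
noncomputable abbrev addOne : Odometer hN ≃ₜ Odometer hN := Homeomorph.vadd (1 : Odometer hN)

variable (hN) in
lemma isMinimal_addOne : IsMinimal (addOne hN) := by
  intro x
  refine isTopologicalBasis_cylinders.dense_iff.mpr ?_
  rintro _ ⟨k, j, rfl⟩ -
  obtain ⟨n, hn⟩ := ZMod.intCast_surjective (j - x.1 k)
  refine ⟨n • (1 : Odometer hN) +ᵥ x, ?_, n, homeomorph_vadd_zpow_apply 1 n x⟩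
  simp [mem_cylinder, hn]

section Measure

variable [∀ k, NeZero (N k)]

instance : SecondCountableTopology (Odometer hN) := Subtype.secondCountableTopology _

variable {ν : Measure (Odometer hN)}

lemma measureReal_map_addOne (k : ℕ) (j : ZMod (N k)) :
    (ν.map (addOne hN)).real (cylinder k j) = ν.real (cylinder k (j - 1)) := by
  rw [map_measureReal_apply (addOne hN).measurable
    (isClopen_cylinder k j).isOpen.measurableSet]
  congr 1
  ext x
  simp [mem_cylinder, eq_sub_iff_add_eq']

variable [IsProbabilityMeasure ν]

lemma eq_of_measureReal_cylinder_eq {ν' : Measure (Odometer hN)} [IsProbabilityMeasure ν']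
    (h : ∀ k j, ν.real (cylinder k j) = ν'.real (cylinder k j)) : ν = ν' := by
  refine measure_ext_of_isTopologicalBasis isTopologicalBasis_cylinders isPiSystem_cylinders ?_
  rintro _ ⟨k, j, rfl⟩
  exact h k j

lemma measureReal_cylinder_of_map_eq (hν : ν.map (addOne hN) = ν) (k : ℕ)
    (j : ZMod (N k)) : ν.real (cylinder k j) = (N k : ℝ)⁻¹ := by
  have eq_zero (i : ZMod (N k)) : ν.real (cylinder k i) = ν.real (cylinder k 0) := by
    obtain ⟨n, rfl⟩ := ZMod.natCast_zmod_surjective i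
    induction n with
    | zero => simp
    | succ n ih =>
      rw [← ih, ← hν, measureReal_map_addOne, hν]
      simp
  have hsum : ∑ i : ZMod (N k), ν.real (cylinder k i) = 1 := by
    have := sum_measureReal_preimage_singleton (μ := ν) (f := fun x => x.1 k) Finset.univ
      fun i _ => (isClopen_cylinder k i).isOpen.measurableSet
    simpa [cylinder, preimage] using this
  simp only [eq_zero, Finset.sum_const, Finset.card_univ, ZMod.card, nsmul_eq_mul] at hsum
  rw [eq_zero]
  exact eq_inv_of_mul_eq_one_right hsum

theorem isStrictlyErgodic_addOne {μ : Measure (Odometer hN)} [IsProbabilityMeasure μ]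
    (hμ : ∀ k j, μ.real (cylinder k j) = (N k : ℝ)⁻¹) :
    IsStrictlyErgodic (addOne hN) μ := by
  refine ⟨isMinimal_addOne hN, fun ν _ => ⟨fun hν => ?_, ?_⟩⟩
  · refine eq_of_measureReal_cylinder_eq fun k j => ?_
    rw [measureReal_cylinder_of_map_eq hν, hμ]
  · rintro rfl
    have := Measure.isProbabilityMeasure_map (μ := ν)
      (addOne hN).measurable.aemeasurable
    refine eq_of_measureReal_cylinder_eq fun k j => ?_
    rw [measureReal_map_addOne, hμ, hμ]

end Measure

end Odometer

end Odometer

section RationalGroup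

variable {G : AddSubgroup ℝ}

lemma exists_inv_mem_of_not_irrational {N : ℕ} [NeZero N] (hNG : (N : ℝ)⁻¹ ∈ G) {t : ℝ}
    (ht : t ∈ G) (hrat : ¬ Irrational t) :
    ∃ M : ℕ, NeZero M ∧ N ∣ M ∧ (M : ℝ)⁻¹ ∈ G ∧ ∃ m : ℤ, t = m * (M : ℝ)⁻¹ := by
  have hN : (N : ℝ) ≠ 0 := NeZero.ne _
  have not_dense : ¬ Dense (AddSubgroup.closure {t, (N : ℝ)⁻¹} : Set ℝ) := by
    rw [dense_addSubgroupClosure_pair_iff, div_inv_eq_mul, irrational_mul_natCast_iff]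
    exact fun h => hrat h.2
  obtain ⟨c, hc⟩ := (AddSubgroup.dense_or_cyclic _).resolve_left not_dense
  have hcG : c ∈ G := by
    have hle : AddSubgroup.closure {t, (N : ℝ)⁻¹} ≤ G := by
      simp [AddSubgroup.closure_le, insert_subset_iff, ht, hNG]
    exact hle (hc ▸ AddSubgroup.subset_closure rfl)
  obtain ⟨n, hn⟩ : ∃ n : ℤ, n • c = (N : ℝ)⁻¹ :=
    AddSubgroup.mem_closure_singleton.mp (hc ▸ AddSubgroup.subset_closure (by simp))
  obtain ⟨m, hm⟩ : ∃ m : ℤ, m • c = t :=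
    AddSubgroup.mem_closure_singleton.mp (hc ▸ AddSubgroup.subset_closure (by simp))
  have hn0 : n ≠ 0 := by
    rintro rfl
    exact inv_ne_zero hN (by rw [← hn, zero_zsmul])
  have hM : ((N * n.natAbs : ℕ) : ℝ)⁻¹ = |c| := by
    have hnR : |(n : ℝ)| ≠ 0 := by simpa using hn0
    have habs : |(n : ℝ)| * |c| = (N : ℝ)⁻¹ := by
      rw [← abs_mul, ← zsmul_eq_mul, hn, abs_of_nonneg (by positivity)]
    rw [Nat.cast_mul, mul_inv, ← habs, Nat.cast_natAbs, Int.cast_abs]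
    field_simp
  refine ⟨N * n.natAbs, ⟨mul_ne_zero (NeZero.ne N) (Int.natAbs_ne_zero.mpr hn0)⟩,
    dvd_mul_right _ _, ?_, ?_⟩
  · rw [hM]
    exact abs_mem_iff.mpr hcG
  · rw [hM, ← hm, zsmul_eq_mul]
    rcases abs_choice c with hc | hc
    · exact ⟨m, by rw [hc]⟩
    · exact ⟨-m, by rw [hc]; push_cast; ring⟩

lemma exists_divisor_sequence (h1 : (1 : ℝ) ∈ G) (hrat : ∀ t ∈ G, ¬ Irrational t) :
    ∃ N : ℕ → ℕ, (∀ k, NeZero (N k)) ∧ (∀ k, N k ∣ N (k + 1)) ∧ (∀ k, (N k : ℝ)⁻¹ ∈ G) ∧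
      ∀ t ∈ G, ∃ k, ∃ m : ℤ, t = m * (N k : ℝ)⁻¹ := by
  have hcount : (G : Set ℝ).Countable :=
    (countable_range ((↑) : ℚ → ℝ)).mono fun t ht => not_not.mp (hrat t ht)
  obtain ⟨t, ht⟩ := hcount.exists_eq_range ⟨0, G.zero_mem⟩
  have htG (k : ℕ) : t k ∈ G := (ht ▸ mem_range_self k : t k ∈ (G : Set ℝ))
  let Denominator := {N : ℕ // NeZero N ∧ (N : ℝ)⁻¹ ∈ G}
  have exists_next (k : ℕ) (N : Denominator) :
      ∃ M : Denominator, N.1 ∣ M.1 ∧ ∃ m : ℤ, t k = m * (M.1 : ℝ)⁻¹ := by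
    obtain ⟨N, hN, hNG⟩ := N
    obtain ⟨M, hM, hNM, hMG, hm⟩ := exists_inv_mem_of_not_irrational hNG (htG k) (hrat _ (htG k))
    exact ⟨⟨M, hM, hMG⟩, hNM, hm⟩
  choose next dvd_next eq_next using exists_next
  let N : ℕ → Denominator := Nat.rec ⟨1, inferInstance, by simpa using h1⟩ next
  refine ⟨fun k => (N k).1, fun k => (N k).2.1, fun k => dvd_next k (N k), fun k => (N k).2.2,
    fun s hs => ?_⟩
  obtain ⟨k, rfl⟩ : s ∈ range t := ht ▸ hs
  exact ⟨k + 1, eq_next k (N k)⟩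

end RationalGroup

section RadixReverse

/-- Digit reversal in the mixed radix system whose place values are the `N k`: the leading digits
of `i < N k`, seen as a numerator over `N k`, become the lowest digits of `radixReverse N k i`. -/
def radixReverse (N : ℕ → ℕ) : ℕ → ℕ → ℕ
  | 0, i => i
  | k + 1, i =>
    radixReverse N k (i / (N (k + 1) / N k)) + N k * (i % (N (k + 1) / N k))

variable {N : ℕ → ℕ}

lemma cast_radixReverse_succ (k i : ℕ) :
    (radixReverse N (k + 1) i : ZMod (N k)) = radixReverse N k (i / (N (k + 1) / N k)) := by
  simp [radixReverse]

variable [∀ k, NeZero (N k)]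

lemma radixReverse_lt (hN : ∀ k, N k ∣ N (k + 1)) {k i : ℕ} (hi : i < N k) :
    radixReverse N k i < N k := by
  induction k generalizing i with
  | zero => exact hi
  | succ k ih =>
    obtain ⟨q, hq⟩ := hN k
    have hq0 : 0 < q := Nat.pos_of_mul_pos_left (hq ▸ (NeZero.pos (N (k + 1))))
    rw [radixReverse, hq, Nat.mul_div_cancel_left q (NeZero.pos (N k))]
    have hlead := ih (Nat.div_lt_of_lt_mul (mul_comm q (N k) ▸ hq ▸ hi))
    calc radixReverse N k (i / q) + N k * (i % q) < N k + N k * (i % q) := by gcongr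
      _ = N k * (i % q + 1) := by ring
      _ ≤ N k * q := by
        gcongr
        exact Nat.mod_lt i hq0

lemma injOn_radixReverse (hN : ∀ k, N k ∣ N (k + 1)) (k : ℕ) :
    InjOn (radixReverse N k) (Iio (N k)) := by
  induction k with
  | zero => exact fun _ _ _ _ h => h
  | succ k ih =>
    intro i hi j hj hij
    obtain ⟨q, hq⟩ := hN k
    rw [mem_Iio, hq] at hi hj
    rw [radixReverse, radixReverse, hq, Nat.mul_div_cancel_left q (NeZero.pos (N k))] at hij
    have hi' : i / q < N k := Nat.div_lt_of_lt_mul (mul_comm q (N k) ▸ hi)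
    have hj' : j / q < N k := Nat.div_lt_of_lt_mul (mul_comm q (N k) ▸ hj)
    have hlead : i / q = j / q := ih hi' hj' (by
      simpa [Nat.add_mul_mod_self_left, Nat.mod_eq_of_lt (radixReverse_lt hN hi'),
        Nat.mod_eq_of_lt (radixReverse_lt hN hj')] using congrArg (· % N k) hij)
    have hlast : i % q = j % q := by
      rw [hlead] at hij
      exact Nat.eq_of_mul_eq_mul_left (NeZero.pos (N k)) (Nat.add_left_cancel hij)
    rw [← Nat.div_add_mod i q, hlead, hlast, Nat.div_add_mod]

lemma bijOn_cast_radixReverse (hN : ∀ k, N k ∣ N (k + 1)) (k : ℕ) :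
    BijOn (fun i => (radixReverse N k i : ZMod (N k))) (Iio (N k)) univ := by
  have hinj : InjOn (fun i => (radixReverse N k i : ZMod (N k))) (Iio (N k)) := by
    intro i hi j hj hij
    refine injOn_radixReverse hN k hi hj ?_
    rw [← Nat.mod_eq_of_lt (radixReverse_lt hN hi), ← Nat.mod_eq_of_lt (radixReverse_lt hN hj)]
    exact (ZMod.natCast_eq_natCast_iff' _ _ _).mp hij
  refine ⟨mapsTo_univ _ _, hinj, ?_⟩
  have := Finset.surjOn_of_injOn_of_card_le (s := Finset.range (N k)) (t := Finset.univ)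
    (fun i => (radixReverse N k i : ZMod (N k))) (by simp [MapsTo]) (by simpa using! hinj) (by simp)
  simpa using! this

end RadixReverse

namespace Cut

variable {G : AddSubgroup ℝ}

lemma ext_of_pos_iff (h1 : (1 : ℝ) ∈ G) {F F' : Cut G} (h : ∀ t, 0 < F t ↔ 0 < F' t) :
    F = F' := by
  refine DFunLike.ext _ _ fun t => ?_
  obtain ⟨_, ⟨r, s, -, -, rfl⟩, hF, hconst⟩ := exists_mem_arcs_map_eq h1 F t
  rw [mem_arc, ← not_lt, h, h, not_lt] at hF
  exact (hconst F' hF).symm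

lemma pos_of_one_le (F : Cut G) {t : G} (ht : (1 : ℝ) ≤ t) : 0 < F t :=
  (Int.floor_pos.mpr ht).trans_le (F.floor_le_map t)

/-- The number of the arc between consecutive multiples of `u > 0` that contains `F`. -/
noncomputable def index (F : Cut G) (u : G) : ℕ := sInf {i | 0 < F ((i + 1) • u)}

section Index

variable {u : G}

lemma index_lt_iff (hu : 0 < u) {F : Cut G} {n : ℕ} : F.index u < n ↔ 0 < F (n • u) := by
  constructor
  · intro hlt
    have hne : {i : ℕ | 0 < F ((i + 1) • u)}.Nonempty := by
      obtain ⟨i, hi⟩ := Archimedean.arch 1 (show (0 : ℝ) < u from hu)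
      refine ⟨i, F.pos_of_one_le (hi.trans ?_)⟩
      exact_mod_cast nsmul_le_nsmul_left hu.le i.le_succ
    exact (Nat.sInf_mem hne).trans_le (F.monotone (nsmul_le_nsmul_left hu.le hlt))
  · intro hpos
    cases n with
    | zero => simp [F.map_zero] at hpos
    | succ n => exact Nat.lt_succ_of_le (Nat.sInf_le hpos)

lemma index_eq_iff (hu : 0 < u) {F : Cut G} {i : ℕ} :
    F.index u = i ↔ F ∈ arc (i • u) ((i + 1) • u) := by
  rw [mem_arc, ← not_lt, ← index_lt_iff hu, ← index_lt_iff hu]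
  omega

lemma continuous_index (hu : 0 < u) : Continuous fun F : Cut G => F.index u := by
  refine continuous_discrete_rng.mpr fun i => ?_
  convert (isClopen_arc (i • u) ((i + 1) • u)).isOpen
  ext F
  exact index_eq_iff hu

lemma index_nsmul (hu : 0 < u) (F : Cut G) {q : ℕ} (hq : q ≠ 0) : F.index (q • u) = F.index u / q :=
  eq_of_forall_gt_iff fun n => by
    rw [index_lt_iff (nsmul_pos hu hq), Nat.div_lt_iff_lt_mul (Nat.pos_of_ne_zero hq),
      index_lt_iff hu, mul_nsmul']

lemma pos_zsmul_iff (hu : 0 < u) {F : Cut G} {n : ℤ} : 0 < F (n • u) ↔ (F.index u : ℤ) < n := by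
  rcases lt_or_ge n 0 with hn | hn
  · have hle : F (n • u) ≤ F 0 := F.monotone (by
      simpa using zsmul_le_zsmul_left hu.le hn.le)
    rw [F.map_zero] at hle
    omega
  · lift n to ℕ using hn
    rw [natCast_zsmul, ← index_lt_iff hu, Nat.cast_lt]

lemma measureReal_setOf_index_eq (hu : 0 < u) {μ : Measure (Cut G)} [IsProbabilityMeasure μ]
    (hμ : ∀ t, mean μ t = t) {i : ℕ} (hi : ((i + 1) • u : ℝ) ≤ 1) :
    μ.real {F | F.index u = i} = u := by
  simp only [index_eq_iff hu, ofPred_mem_eq]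
  rw [measureReal_arc μ (nsmul_nonneg hu.le i) (nsmul_le_nsmul_left hu.le (Nat.le_add_right i 1))
    (by simpa using hi), hμ, hμ]
  push_cast
  rw [add_nsmul, one_nsmul, add_sub_cancel_left]

end Index

section Odometer

lemma pos_of_coe_eq_inv {n : ℕ} [NeZero n] {v : G} (hv : (v : ℝ) = (n : ℝ)⁻¹) : 0 < v := by
  have hn : (0 : ℝ) < n := by exact_mod_cast NeZero.pos n
  have hv0 : (0 : ℝ) < v := hv ▸ inv_pos.mpr hn
  exact_mod_cast hv0

lemma index_lt_of_coe_eq_inv (F : Cut G) {n : ℕ} [NeZero n] {v : G}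
    (hv : (v : ℝ) = (n : ℝ)⁻¹) : F.index v < n := by
  rw [index_lt_iff (pos_of_coe_eq_inv hv)]
  exact F.pos_of_one_le (by simp [hv])

variable {N : ℕ → ℕ} [∀ k, NeZero (N k)] (hN : ∀ k, N k ∣ N (k + 1)) {u : ℕ → G}
  (hu : ∀ k, (u k : ℝ) = (N k : ℝ)⁻¹)

/-- The point of the odometer whose coordinates are the digit reversals of the indices of `F`. -/
noncomputable def toOdometer (F : Cut G) : Odometer hN :=
  ⟨fun k => radixReverse N k (F.index (u k)), Odometer.mem_iff.mpr fun k => by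
    have hdiv : F.index (u k) = F.index (u (k + 1)) / (N (k + 1) / N k) := by
      obtain ⟨q, hq⟩ := hN k
      have hq0 : q ≠ 0 := right_ne_zero_of_mul (hq ▸ NeZero.ne (N (k + 1)))
      have huk : u k = q • u (k + 1) := Subtype.ext (by
        have hqR : (q : ℝ) ≠ 0 := Nat.cast_ne_zero.mpr hq0
        push_cast
        rw [hu, hu, hq, nsmul_eq_mul, Nat.cast_mul, mul_inv, mul_left_comm, mul_inv_cancel₀ hqR,
          mul_one])
      rw [hq, Nat.mul_div_cancel_left q (NeZero.pos (N k)), huk,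
        index_nsmul (pos_of_coe_eq_inv (hu (k + 1))) F hq0]
    rw [map_natCast, cast_radixReverse_succ, hdiv]⟩

lemma continuous_toOdometer : Continuous (toOdometer hN hu) :=
  continuous_induced_rng.mpr <| continuous_pi fun k =>
    (continuous_of_discreteTopology (f := fun i : ℕ => (radixReverse N k i : ZMod (N k)))).comp
      (continuous_index (pos_of_coe_eq_inv (hu k)))

lemma toOdometer_injective (h1 : (1 : ℝ) ∈ G) (hG : ∀ t ∈ G, ∃ k, ∃ m : ℤ, t = m * (N k : ℝ)⁻¹) :
    Function.Injective (toOdometer hN hu) := by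
  intro F F' h
  refine ext_of_pos_iff h1 fun t => ?_
  obtain ⟨k, m, hm⟩ := hG t t.2
  have ht : t = m • u k := Subtype.ext (by simp [hm, hu])
  have hindex : F.index (u k) = F'.index (u k) :=
    (bijOn_cast_radixReverse hN k).injOn (F.index_lt_of_coe_eq_inv (hu k))
      (F'.index_lt_of_coe_eq_inv (hu k)) (congrFun (congrArg Subtype.val h) k)
  have hpos := pos_of_coe_eq_inv (hu k)
  rw [ht, pos_zsmul_iff hpos, pos_zsmul_iff hpos, hindex]

lemma measureReal_preimage_cylinder {μ : Measure (Cut G)} [IsProbabilityMeasure μ]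
    (hμ : ∀ t, mean μ t = t) (k : ℕ) (j : ZMod (N k)) :
    μ.real (toOdometer hN hu ⁻¹' Odometer.cylinder k j) = (N k : ℝ)⁻¹ := by
  obtain ⟨i, hi, rfl⟩ := (bijOn_cast_radixReverse hN k).surjOn (mem_univ j)
  have heq : toOdometer hN hu ⁻¹' Odometer.cylinder k (radixReverse N k i) =
      {F | F.index (u k) = i} := by
    ext F
    exact (bijOn_cast_radixReverse hN k).injOn.eq_iff (F.index_lt_of_coe_eq_inv (hu k)) hi
  have hle : ((i + 1) • u k : ℝ) ≤ 1 := by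
    have hiN : ((i + 1 : ℕ) : ℝ) ≤ N k := Nat.cast_le.mpr hi
    rw [hu, nsmul_eq_mul, ← div_eq_mul_inv]
    exact div_le_one_of_le₀ hiN (Nat.cast_nonneg _)
  rw [heq, measureReal_setOf_index_eq (pos_of_coe_eq_inv (hu k)) hμ hle, hu]

lemma denseRange_toOdometer {μ : Measure (Cut G)} [IsProbabilityMeasure μ]
    (hμ : ∀ t, mean μ t = t) : DenseRange (toOdometer hN hu) := by
  refine Odometer.isTopologicalBasis_cylinders.dense_iff.mpr ?_
  rintro _ ⟨k, j, rfl⟩ -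
  have hne : μ.real (toOdometer hN hu ⁻¹' Odometer.cylinder k j) ≠ 0 := by
    rw [measureReal_preimage_cylinder hN hu hμ]
    exact inv_ne_zero (NeZero.ne _)
  obtain ⟨F, hF⟩ := nonempty_of_measureReal_ne_zero hne
  exact ⟨toOdometer hN hu F, hF, mem_range_self F⟩

end Odometer

theorem exists_isStrictlyErgodic_of_forall_not_irrational [CompactSpace (Cut G)]
    (h1 : (1 : ℝ) ∈ G) (hrat : ∀ t ∈ G, ¬ Irrational t) {μ : Measure (Cut G)}
    [IsProbabilityMeasure μ] (hμ : ∀ t, mean μ t = t) :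
    ∃ g : Cut G ≃ₜ Cut G, IsStrictlyErgodic g μ := by
  obtain ⟨N, _, hN, hNG, hG⟩ := exists_divisor_sequence h1 hrat
  let u : ℕ → G := fun k => ⟨(N k : ℝ)⁻¹, hNG k⟩
  have hu (k : ℕ) : (u k : ℝ) = (N k : ℝ)⁻¹ := rfl
  obtain ⟨e, he⟩ := exists_homeomorph_of_denseRange (continuous_toOdometer hN hu)
    (toOdometer_injective hN hu h1 hG) (denseRange_toOdometer hN hu hμ)
  have := Measure.isProbabilityMeasure_map (μ := μ) e.measurable.aemeasurable
  refine ⟨_, (Odometer.isStrictlyErgodic_addOne (hN := hN) fun k j => ?_).conj (e := e)⟩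
  rw [map_measureReal_apply e.measurable (Odometer.isClopen_cylinder k j).isOpen.measurableSet, he,
    measureReal_preimage_cylinder hN hu hμ]

theorem exists_isStrictlyErgodic [CompactSpace (Cut G)] [SecondCountableTopology (Cut G)]
    (h1 : (1 : ℝ) ∈ G) {μ : Measure (Cut G)} [IsProbabilityMeasure μ] (hμ : ∀ t, mean μ t = t) :
    ∃ g : Cut G ≃ₜ Cut G, IsStrictlyErgodic g μ := by
  by_cases hirr : ∃ a ∈ G, Irrational a
  · obtain ⟨a, haG, ha⟩ := hirr
    exact ⟨_, isStrictlyErgodic_rotation (a := ⟨a, haG⟩) h1 ha hμ⟩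
  · push Not at hirr
    exact exists_isStrictlyErgodic_of_forall_not_irrational h1 hirr hμ

end Cut

theorem IsGood.exists_isStrictlyErgodic {X : Type*} [TopologicalSpace X] [MeasurableSpace X]
    [BorelSpace X] [CompactSpace X] [T2Space X] [SecondCountableTopology X]
    [TotallyDisconnectedSpace X] {μ : Measure X} [IsProbabilityMeasure μ] (hμ : IsGood μ) :
    ∃ g : X ≃ₜ X, IsStrictlyErgodic g μ := by
  obtain ⟨e, he⟩ := hμ.exists_homeomorph_cut
  have := e.compactSpace
  have := e.symm.secondCountableTopology
  have := Measure.isProbabilityMeasure_map (μ := μ) e.measurable.aemeasurable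
  obtain ⟨g, hg⟩ := Cut.exists_isStrictlyErgodic one_mem_clopenValueGroup he
  exact ⟨_, hg.conj⟩

end Akin

theorem akin_uniquely_ergodic_general {X : Type*} [TopologicalSpace X] [CompactSpace X]
    [TopologicalSpace.MetrizableSpace X] [TotallyDisconnectedSpace X] [MeasurableSpace X]
    [BorelSpace X] (μ : MeasureTheory.ProbabilityMeasure X) (hsupp : DynSimplex.FullSupport μ)
    (hgood : ∀ A B : Set X, IsClopen A → IsClopen B → μ A < μ B →
      ∃ C : Set X, IsClopen C ∧ C ⊆ B ∧ μ C = μ A) :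
    ∃ g : X ≃ₜ X, DynSimplex.IsMinimal g ∧
      {ν : MeasureTheory.ProbabilityMeasure X | DynSimplex.Preserves g ν} = {μ} := by
  have coe_apply (A : Set X) : (μ : Measure X).real A = μ A := rfl
  have isGood : Akin.IsGood (μ : Measure X) := by
    refine ⟨fun A hA hne => ?_, fun A B hA hB hAB => ?_⟩
    · rw [coe_apply]
      exact_mod_cast hsupp A hA.isOpen hne
    · simp only [coe_apply, NNReal.coe_lt_coe, NNReal.coe_inj] at hAB ⊢
      exact hgood A B hA hB hAB
  obtain ⟨g, hg⟩ := isGood.exists_isStrictlyErgodic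
  refine ⟨g, hg.isMinimal, Set.ext fun ν => ?_⟩
  exact (hg.map_eq_iff ν).trans Subtype.coe_injective.eq_iff

theorem akin_uniquely_ergodic
    {X : Type*} [TopologicalSpace X] [CompactSpace X]
    [TopologicalSpace.MetrizableSpace X] [TotallyDisconnectedSpace X] [PerfectSpace X]
    [Nonempty X] [MeasurableSpace X] [BorelSpace X]
    (μ : MeasureTheory.ProbabilityMeasure X)
    (hatom : DynSimplex.Atomless μ) (hsupp : DynSimplex.FullSupport μ)
    (hgood : ∀ A B : Set X, IsClopen A → IsClopen B → μ A < μ B →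
      ∃ C : Set X, IsClopen C ∧ C ⊆ B ∧ μ C = μ A) :
    ∃ g : X ≃ₜ X, DynSimplex.IsMinimal g ∧
      {ν : MeasureTheory.ProbabilityMeasure X | DynSimplex.Preserves g ν} = {μ} :=
  akin_uniquely_ergodic_general μ hsupp hgood
end

section
/- (Dahl's theorem, strengthened) Let X be a Cantor space and K a nonempty compact convex set of atomless Borel probability measures on X with full support. Assume K is good and has finitely many extreme points. Then there exists a minimal homeomorphism g of X whose set of g-invariant Borel probability measures is exactly K. (In particular, the extreme points need not be assumed mutually singular.) -/
/-!
The homeomorphism is a limit of clopen towers under cutting and stacking.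

*Homogeneity.* Goodness gives, by back and forth, a `K`-preserving homeomorphism between any two
clopen sets with the same measure for every `μ ∈ K`; if they are disjoint, there is also a
`K`-preserving involution exchanging them.

*Towers.* Composing the map of a tower with an involution exchanging two parts of its base stacks
the columns over one part on the columns over the other. Since `K` is compact and its members are
atomless, `X` has finite clopen covers by sets which are uniformly `K`-small, so finitely many
stackings shrink the base, or the top, into any nonempty clopen part of it. They also make all
column sums of a continuous `f : X → ℤ` nonpositive if `∫ f dμ < 0` for all `μ ∈ K`: columns with
negative sum have measure bounded below, so the columns with the largest sum can be put on top of
them piece by piece.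

*Limit.* Countably many towers determine a `K`-preserving homeomorphism `g` such that every `f` as
above satisfies `f ≤ φ ∘ g - φ` for some continuous `φ : X → ℤ`. Integration then gives
`∫ f dν ≤ 0` for every `g`-invariant `ν`, and as `K` is compact and convex, Hahn–Banach in finite
dimension and rounding force `ν ∈ K`. For a nonempty clopen `V` and `M` large, `f = 1 - M • 1_V`
bounds the time an orbit of `g` can spend outside `V`, so `g` is minimal.
-/

open MeasureTheory

namespace DynSimplex

open TopologicalSpace Set Topology

/-! ### Probability measures and clopen sets -/

section Measure

variable {X : Type*} [TopologicalSpace X] [MeasurableSpace X] [BorelSpace X]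
  {μ ν : ProbabilityMeasure X} {g h : X ≃ₜ X}

lemma apply_inter_add_apply_diff (μ : ProbabilityMeasure X) (A : Set X) {B : Set X}
    (hB : IsClopen B) : μ (A ∩ B) + μ (A \ B) = μ A := by
  rw [← NNReal.coe_inj]
  push_cast
  exact measureReal_inter_add_sdiff hB.isOpen.measurableSet

lemma apply_diff_eq_sub (μ : ProbabilityMeasure X) {A B : Set X} (hB : IsClopen B) (hBA : B ⊆ A) :
    μ (A \ B) = μ A - μ B := by
  rw [← apply_inter_add_apply_diff μ A hB, inter_eq_self_of_subset_right hBA, add_tsub_cancel_left]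

lemma Preserves.measurePreserving (hg : Preserves g μ) :
    MeasurePreserving g (μ : Measure X) (μ : Measure X) :=
  ⟨g.continuous.measurable, hg⟩

lemma Preserves.apply_preimage (hg : Preserves g μ) (E : Set X) : μ (g ⁻¹' E) = μ E :=
  congrArg ENNReal.toNNReal <|
    hg.measurePreserving.measure_preimage_equiv (f := g.toMeasurableEquiv) E

lemma Preserves.symm (hg : Preserves g μ) : Preserves g.symm μ :=
  (hg.measurePreserving.symm g.toMeasurableEquiv).map_eq

lemma Preserves.trans (hg : Preserves g μ) (hh : Preserves h μ) : Preserves (g.trans h) μ :=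
  (hh.measurePreserving.comp hg.measurePreserving).map_eq

variable [CompactSpace X] [T2Space X] [TotallyDisconnectedSpace X] [SecondCountableTopology X]

lemma toMeasure_ext_of_isClopen {m m' : Measure X} [IsFiniteMeasure m]
    (hmm' : ∀ E, IsClopen E → m E = m' E) : m = m' := by
  refine ext_of_generate_finite {E | IsClopen E} ?_ (fun s hs t ht _ => hs.inter ht) hmm'
    (hmm' _ isClopen_univ)
  rw [BorelSpace.measurable_eq (α := X)]
  exact isTopologicalBasis_isClopen.borel_eq_generateFrom

lemma preserves_of_isClopen (hg : ∀ E, IsClopen E → μ (g ⁻¹' E) = μ E) : Preserves g μ := by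
  have := Measure.isProbabilityMeasure_map (μ := (μ : Measure X)) g.continuous.aemeasurable
  refine toMeasure_ext_of_isClopen fun E hE => ?_
  rw [Measure.map_apply g.continuous.measurable hE.isOpen.measurableSet,
    ← ProbabilityMeasure.ennreal_coeFn_eq_coeFn_toMeasure, hg E hE,
    ProbabilityMeasure.ennreal_coeFn_eq_coeFn_toMeasure]

end Measure

/-! ### Integrals of integer-valued continuous functions -/

section Integral

variable {X : Type*} [TopologicalSpace X]

open Classical in
/-- The continuous map which agrees with `f` on the clopen set `E` and with `g` off `E`. -/
noncomputable def clopenPiecewise {Y : Type*} [TopologicalSpace Y] {E : Set X} (hE : IsClopen E)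
    (f g : C(X, Y)) : C(X, Y) where
  toFun x := if x ∈ E then f x else g x
  continuous_toFun := f.continuous.if (by simp [hE.frontier_eq]) g.continuous

lemma clopenPiecewise_of_mem {Y : Type*} [TopologicalSpace Y] {E : Set X} (hE : IsClopen E)
    (f g : C(X, Y)) {x : X} (hx : x ∈ E) : clopenPiecewise hE f g x = f x :=
  if_pos hx

lemma clopenPiecewise_of_notMem {Y : Type*} [TopologicalSpace Y] {E : Set X} (hE : IsClopen E)
    (f g : C(X, Y)) {x : X} (hx : x ∉ E) : clopenPiecewise hE f g x = g x :=
  if_neg hx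

/-- The indicator function of a clopen set, as an integer-valued continuous function. -/
noncomputable def clopenIndicator {E : Set X} (hE : IsClopen E) : C(X, ℤ) :=
  LocallyConstant.charFn ℤ hE

lemma clopenIndicator_of_mem {E : Set X} (hE : IsClopen E) {x : X} (hx : x ∈ E) :
    clopenIndicator hE x = 1 :=
  (LocallyConstant.charFn_eq_one ℤ x hE).2 hx

lemma clopenIndicator_of_notMem {E : Set X} (hE : IsClopen E) {x : X} (hx : x ∉ E) :
    clopenIndicator hE x = 0 :=
  (LocallyConstant.charFn_eq_zero ℤ x hE).2 hx

variable [CompactSpace X]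

lemma exists_abs_le (f : C(X, ℤ)) : ∃ C : ℤ, 0 ≤ C ∧ ∀ x, |f x| ≤ C := by
  obtain ⟨C, hC⟩ := (isCompact_range (abs f).continuous).bddAbove
  exact ⟨max C 0, le_max_right _ _, fun x => (hC ⟨x, rfl⟩).trans (le_max_left _ _)⟩

lemma countable_continuousMap_int [T2Space X] [SecondCountableTopology X] :
    Countable C(X, ℤ) := by
  have hdisc : DiscreteTopology C(X, ℤ) := by
    refine discreteTopology_iff_isOpen_singleton.2 fun f => ?_
    have hball : {g : C(X, ℤ) | dist g f < 1} = {f} := by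
      refine Set.ext fun g => ⟨fun hg => ContinuousMap.ext fun x => ?_, ?_⟩
      · have hx := (ContinuousMap.dist_lt_iff one_pos).1 hg x
        rw [Int.dist_eq] at hx
        exact sub_eq_zero.1 (Int.abs_lt_one_iff.1 (by exact_mod_cast hx))
      · rintro rfl
        simp
    exact hball ▸ Metric.isOpen_ball
  exact countable_of_Lindelof_of_discrete

variable [MeasurableSpace X] [BorelSpace X] {μ : ProbabilityMeasure X}

lemma integrable_intCast (μ : ProbabilityMeasure X) (f : C(X, ℤ)) :
    Integrable (fun x => (f x : ℝ)) (μ : Measure X) :=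
  (continuous_of_discreteTopology.comp f.continuous).integrable_of_hasCompactSupport
    (HasCompactSupport.of_compactSpace _)

/-- The integral against `μ`, as an additive functional on the group `C(X, ℤ)`. -/
noncomputable def integralHom (μ : ProbabilityMeasure X) : C(X, ℤ) →+ ℝ where
  toFun f := ∫ x, (f x : ℝ) ∂(μ : Measure X)
  map_zero' := by simp
  map_add' f g := by
    simpa using integral_add (integrable_intCast μ f) (integrable_intCast μ g)

lemma integralHom_one (μ : ProbabilityMeasure X) : integralHom μ 1 = 1 := by
  simp [integralHom]

lemma integralHom_mono (μ : ProbabilityMeasure X) : Monotone (integralHom μ) := fun f g hfg =>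
  integral_mono (integrable_intCast μ f) (integrable_intCast μ g)
    fun x => Int.cast_le.2 (hfg x)

lemma integralHom_clopenIndicator (μ : ProbabilityMeasure X) {E : Set X} (hE : IsClopen E) :
    integralHom μ (clopenIndicator hE) = μ E := by
  have hind : (fun x => (clopenIndicator hE x : ℝ)) = E.indicator 1 := by
    ext x
    by_cases hx : x ∈ E
    · simp [clopenIndicator_of_mem hE hx, hx]
    · simp [clopenIndicator_of_notMem hE hx, hx]
  change ∫ x, (clopenIndicator hE x : ℝ) ∂(μ : Measure X) = _
  rw [hind, integral_indicator_one hE.isOpen.measurableSet]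
  simp

lemma Preserves.integralHom_comp {g : X ≃ₜ X} (hg : Preserves g μ) (f : C(X, ℤ)) :
    integralHom μ (f.comp (g : C(X, X))) = integralHom μ f :=
  hg.measurePreserving.integral_comp g.measurableEmbedding fun x => (f x : ℝ)

lemma continuous_integralHom (f : C(X, ℤ)) :
    Continuous fun μ : ProbabilityMeasure X => integralHom μ f :=
  ProbabilityMeasure.continuous_integral_continuousMap
    ((⟨Int.cast, continuous_of_discreteTopology⟩ : C(ℤ, ℝ)).comp f)

lemma continuous_apply_of_isClopen {E : Set X} (hE : IsClopen E) :
    Continuous fun μ : ProbabilityMeasure X => (μ E : ℝ) := by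
  simpa only [integralHom_clopenIndicator] using continuous_integralHom (clopenIndicator hE)

end Integral

/-! ### Small clopen sets -/

section Small

lemma exists_ge_and_eq_empty {X P : Type*} [TopologicalSpace X] [CompactSpace X] [Preorder P]
    {good : P → Prop} {bad : P → Set X}
    (hstep : ∀ x, ∃ E ∈ 𝓝 x, ∀ p, good p → ∃ q ≥ p, good q ∧ bad q ⊆ bad p \ E)
    {p : P} (hp : good p) : ∃ q ≥ p, good q ∧ bad q = ∅ := by
  suffices huniv : ∀ p, good p → ∃ q ≥ p, good q ∧ bad q ⊆ bad p \ univ by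
    simpa using huniv p hp
  clear! p
  refine isCompact_univ.induction_on (p := fun S => ∀ p, good p → ∃ q ≥ p, good q ∧
    bad q ⊆ bad p \ S) (fun p hp => ⟨p, le_rfl, hp, by simp⟩) ?_ ?_ (by simpa using hstep)
  · intro S T hST hT p hp
    obtain ⟨q, hpq, hq, hqT⟩ := hT p hp
    exact ⟨q, hpq, hq, hqT.trans (sdiff_subset_sdiff_right hST)⟩
  · intro S T hS hT p hp
    obtain ⟨q, hpq, hq, hqS⟩ := hS p hp
    obtain ⟨r, hqr, hr, hrT⟩ := hT q hq
    refine ⟨r, hpq.trans hqr, hr, hrT.trans ?_⟩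
    rw [← sdiff_sdiff]
    exact sdiff_subset_sdiff_left hqS

variable {X : Type*} [TopologicalSpace X] [CompactSpace X] [MeasurableSpace X] [BorelSpace X]
  {K : Set (ProbabilityMeasure X)}

lemma exists_pos_forall_le_apply (hK : IsCompact K) (hsupp : ∀ μ ∈ K, FullSupport μ) {O : Set X}
    (hO : IsClopen O) (hne : O.Nonempty) : ∃ c : ℝ, 0 < c ∧ ∀ μ ∈ K, c ≤ μ O :=
  hK.exists_forall_le' (continuous_apply_of_isClopen hO).continuousOn
    fun μ hμ => NNReal.coe_pos.2 (hsupp μ hμ O hO.isOpen hne)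

variable [T2Space X] [TotallyDisconnectedSpace X] [SecondCountableTopology X]

lemma exists_isClopen_apply_lt {μ : ProbabilityMeasure X} (hμ : Atomless μ) (x : X) {δ : ℝ}
    (hδ : 0 < δ) : ∃ E, IsClopen E ∧ x ∈ E ∧ (μ E : ℝ) < δ := by
  have hx : (μ : Measure X) {x} < ENNReal.ofReal δ := by
    rw [← ProbabilityMeasure.ennreal_coeFn_eq_coeFn_toMeasure, hμ x]
    simpa using hδ
  obtain ⟨U, hxU, hU, hlt⟩ := Set.exists_isOpen_lt_of_lt {x} _ hx
  obtain ⟨E, hE, hxE, hEU⟩ := compact_exists_isClopen_in_isOpen hU (hxU rfl)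
  refine ⟨E, hE, hxE, ?_⟩
  rw [← ProbabilityMeasure.measureReal_eq_coe_coeFn, measureReal_def,
    ← ENNReal.lt_ofReal_iff_toReal_lt (measure_ne_top _ _)]
  exact (measure_mono hEU).trans_lt hlt

lemma exists_isClopen_forall_apply_lt (hK : IsCompact K) (hatom : ∀ μ ∈ K, Atomless μ) (x : X)
    {δ : ℝ} (hδ : 0 < δ) : ∃ E, IsClopen E ∧ x ∈ E ∧ ∀ μ ∈ K, (μ E : ℝ) < δ := by
  choose! E hE hxE hlt using fun μ hμ => exists_isClopen_apply_lt (hatom μ hμ) x hδ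
  obtain ⟨s, hsK, hs⟩ := hK.elim_nhds_subcover (fun μ => {ν | (ν (E μ) : ℝ) < δ}) fun μ hμ =>
    (isOpen_lt (continuous_apply_of_isClopen (hE μ hμ)) continuous_const).mem_nhds (hlt μ hμ)
  refine ⟨⋂ μ ∈ s, E μ, isClopen_biInter_finset fun μ hμ => hE μ (hsK μ hμ),
    mem_iInter₂.2 fun μ hμ => hxE μ (hsK μ hμ), fun ν hν => ?_⟩
  obtain ⟨μ, hμ, hνμ⟩ := mem_iUnion₂.1 (hs hν)
  exact (NNReal.coe_le_coe.2 (ν.apply_mono (biInter_subset_of_mem hμ))).trans_lt hνμ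

lemma exists_isClopen_forall_apply_lt_apply (hK : IsCompact K) (hatom : ∀ μ ∈ K, Atomless μ)
    (hsupp : ∀ μ ∈ K, FullSupport μ) {O : Set X} (hO : IsClopen O) (hne : O.Nonempty) (x : X) :
    ∃ E, IsClopen E ∧ x ∈ E ∧ ∀ μ ∈ K, μ E < μ O := by
  obtain ⟨c, hc, hcO⟩ := exists_pos_forall_le_apply hK hsupp hO hne
  obtain ⟨E, hE, hxE, hlt⟩ := exists_isClopen_forall_apply_lt hK hatom x hc
  exact ⟨E, hE, hxE, fun μ hμ => NNReal.coe_lt_coe.1 ((hlt μ hμ).trans_le (hcO μ hμ))⟩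

end Small

/-! ### Homeomorphisms as limits of relations -/

section Relations

variable {X Y : Type*}

/-- Points in relation `R` lie simultaneously in `A` and in `B`. -/
def Matches (R : X → Y → Prop) (A : Set X) (B : Set Y) : Prop :=
  ∀ ⦃x y⦄, R x y → (x ∈ A ↔ y ∈ B)

lemma Matches.preimage_eq {R : X → Y → Prop} {A : Set X} {B : Set Y} (h : Matches R A B)
    {θ : X → Y} (hθ : ∀ x, R x (θ x)) : θ ⁻¹' B = A :=
  Set.ext fun x => (h (hθ x)).symm

lemma eq_of_matches [TopologicalSpace Y] [CompactSpace Y] [T2Space Y]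
    [TotallyDisconnectedSpace Y] {R : X → Y → Prop}
    (hR : ∀ B, IsClopen B → ∃ A, Matches R A B) {x : X} {y y' : Y}
    (hy : R x y) (hy' : R x y') : y = y' := by
  by_contra hne
  obtain ⟨B, hB, hyB, hyB'⟩ := exists_isClopen_of_totally_separated hne
  obtain ⟨A, hA⟩ := hR B hB
  exact hyB' ((hA hy').1 ((hA hy).2 hyB))

variable [TopologicalSpace X] [TopologicalSpace Y]

/-- A relation all of whose sections, on both sides, are closed and nonempty: a coarse
approximation to the graph of a homeomorphism. -/
structure ClosedSections (R : X → Y → Prop) : Prop where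
  isClosed_right : ∀ x, IsClosed {y | R x y}
  nonempty_right : ∀ x, {y | R x y}.Nonempty
  isClosed_left : ∀ y, IsClosed {x | R x y}
  nonempty_left : ∀ y, {x | R x y}.Nonempty

lemma ClosedSections.flip {R : X → Y → Prop} (h : ClosedSections R) :
    ClosedSections (Function.swap R) :=
  ⟨h.isClosed_left, h.nonempty_left, h.isClosed_right, h.nonempty_right⟩

lemma exists_forall_rel_of_directed [CompactSpace Y] {ι : Type*} [Nonempty ι]
    {R : ι → X → Y → Prop} (hdir : Directed (· ≥ ·) R) (hR : ∀ i, ClosedSections (R i)) (x : X) :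
    ∃ y, ∀ i, R i x y := by
  obtain ⟨y, hy⟩ := IsCompact.nonempty_iInter_of_directed_nonempty_isCompact_isClosed
    (fun i => {y | R i x y}) (fun i j => (hdir i j).imp fun _ hk => ⟨hk.1 x, hk.2 x⟩)
    (fun i => (hR i).nonempty_right x) (fun i => ((hR i).isClosed_right x).isCompact)
    (fun i => (hR i).isClosed_right x)
  exact ⟨y, mem_iInter.1 hy⟩

variable [CompactSpace X] [T2Space X] [TotallyDisconnectedSpace X]
  [CompactSpace Y] [T2Space Y] [TotallyDisconnectedSpace Y]

lemma exists_homeomorph_of_matches {R : X → Y → Prop} (hright : ∀ x, ∃ y, R x y)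
    (hleft : ∀ y, ∃ x, R x y) (hforth : ∀ A, IsClopen A → ∃ B, Matches R A B)
    (hback : ∀ B, IsClopen B → ∃ A, IsClopen A ∧ Matches R A B) :
    ∃ θ : X ≃ₜ Y, ∀ x, R x (θ x) := by
  choose θ hθ using hright
  have hinj : Function.Injective θ := fun x x' hxx' =>
    eq_of_matches (R := Function.swap R)
      (fun A hA => (hforth A hA).imp fun B hB y x hyx => (hB hyx).symm) (hθ x) (hxx' ▸ hθ x')
  have hsurj : Function.Surjective θ := fun y => (hleft y).imp fun x hx =>
    eq_of_matches (fun B hB => (hback B hB).imp fun A hA => hA.2) (hθ x) hx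
  have hcont : Continuous (Equiv.ofBijective θ ⟨hinj, hsurj⟩) := by
    refine isTopologicalBasis_isClopen.continuous_iff.2 fun B hB => ?_
    obtain ⟨A, hA, hAB⟩ := hback B hB
    exact (hAB.preimage_eq hθ).symm ▸ hA.isOpen
  exact ⟨hcont.homeoOfEquivCompactToT2, hθ⟩

theorem exists_homeomorph_of_directed [SecondCountableTopology X] [MeasurableSpace X] [BorelSpace X]
    {K : Set (ProbabilityMeasure X)} {ι : Type*} [Nonempty ι] {R : ι → X → X → Prop}
    (hdir : Directed (· ≥ ·) R) (hR : ∀ i, ClosedSections (R i))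
    (hforth : ∀ A, IsClopen A → ∃ i B, Matches (R i) A B)
    (hback : ∀ B, IsClopen B → ∃ i A, IsClopen A ∧ (∀ μ ∈ K, μ A = μ B) ∧ Matches (R i) A B) :
    ∃ θ : X ≃ₜ X, PreservesAll K θ ∧ ∀ i x, R i x (θ x) := by
  have hback_all : ∀ B, IsClopen B → ∃ A, IsClopen A ∧ (∀ μ ∈ K, μ A = μ B) ∧
      Matches (fun x y => ∀ i, R i x y) A B := by
    intro B hB
    obtain ⟨i, A, hA, hμ, hAB⟩ := hback B hB
    exact ⟨A, hA, hμ, fun x y hxy => hAB (hxy i)⟩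
  obtain ⟨θ, hθ⟩ := exists_homeomorph_of_matches
    (exists_forall_rel_of_directed hdir hR)
    (exists_forall_rel_of_directed (R := fun i => Function.swap (R i))
      (fun i j => (hdir i j).imp fun _ h => ⟨fun y x => h.1 x y, fun y x => h.2 x y⟩)
      fun i => (hR i).flip)
    (fun A hA => let ⟨i, B, hAB⟩ := hforth A hA; ⟨B, fun x y hxy => hAB (hxy i)⟩)
    fun B hB => (hback_all B hB).imp fun A hA => ⟨hA.1, hA.2.2⟩
  refine ⟨θ, fun μ hμ => preserves_of_isClopen fun B hB => ?_, fun i x => hθ x i⟩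
  obtain ⟨A, -, hAB, hmatch⟩ := hback_all B hB
  rw [hmatch.preimage_eq hθ, hAB μ hμ]

-- A generic filter in `P` (Rasiowa–Sikorski) gives a directed family of relations.
theorem exists_homeomorph_of_cofinal [SecondCountableTopology X] [MeasurableSpace X] [BorelSpace X]
    {K : Set (ProbabilityMeasure X)} {P ι : Type*} [Preorder P] [Countable ι]
    {R : P → X → X → Prop} (hanti : Antitone R) (hR : ∀ p, ClosedSections (R p))
    (hforth : ∀ A, IsClopen A → IsCofinal {p | ∃ B, Matches (R p) A B})
    (hback : ∀ B, IsClopen B →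
      IsCofinal {p | ∃ A, IsClopen A ∧ (∀ μ ∈ K, μ A = μ B) ∧ Matches (R p) A B})
    {D : ι → Set P} (hD : ∀ i, IsCofinal (D i)) (p₀ : P) :
    ∃ θ : X ≃ₜ X, PreservesAll K θ ∧ (∀ x, R p₀ x (θ x)) ∧ ∀ i, ∃ p ∈ D i, ∀ x, R p x (θ x) := by
  have : Countable (Clopens X) := Clopens.countable_iff_secondCountable.2 inferInstance
  let := Encodable.ofCountable (Clopens X ⊕ Clopens X ⊕ ι)
  let 𝒟 : Clopens X ⊕ Clopens X ⊕ ι → Order.Cofinal P :=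
    Sum.elim (fun A => ⟨_, hforth A A.isClopen⟩)
      (Sum.elim (fun B => ⟨_, hback B B.isClopen⟩) fun i => ⟨_, hD i⟩)
  let I := Order.idealOfCofinals p₀ 𝒟
  have hp₀ : p₀ ∈ I := Order.mem_idealOfCofinals p₀ 𝒟
  have hI : ∀ i, ∃ p ∈ 𝒟 i, p ∈ I := Order.cofinal_meets_idealOfCofinals p₀ 𝒟
  have : Nonempty I := ⟨p₀, hp₀⟩
  have hdir : Directed (· ≥ ·) fun p : I => R p := fun p q => by
    obtain ⟨r, hr, hpr, hqr⟩ := I.directed p p.2 q q.2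
    exact ⟨⟨r, hr⟩, hanti hpr, hanti hqr⟩
  obtain ⟨θ, hθK, hθ⟩ := exists_homeomorph_of_directed hdir (fun p => hR p)
    (fun A hA => let ⟨p, hAB, hp⟩ := hI (Sum.inl ⟨A, hA⟩); ⟨⟨p, hp⟩, hAB⟩)
    (fun B hB => let ⟨p, hAB, hp⟩ := hI (Sum.inr (Sum.inl ⟨B, hB⟩)); ⟨⟨p, hp⟩, hAB⟩)
  refine ⟨θ, hθK, hθ ⟨p₀, hp₀⟩, fun i => ?_⟩
  obtain ⟨p, hpi, hp⟩ := hI (Sum.inr (Sum.inr i))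
  exact ⟨p, hpi, hθ ⟨p, hp⟩⟩

end Relations

/-! ### Homogeneity -/

section Labelling

variable {X : Type*} [TopologicalSpace X]

lemma isClopen_fibre (α : C(X, ℕ)) (i : ℕ) : IsClopen (α ⁻¹' {i}) :=
  (isClopen_discrete _).preimage α.continuous

lemma isClopen_mem_fibre (α : C(X, ℕ)) {F : ℕ → Set X} (hF : ∀ i, IsClopen (F i)) :
    IsClopen {x | x ∈ F (α x)} := by
  have hopen : ∀ G : ℕ → Set X, (∀ i, IsOpen (G i)) → IsOpen {x | x ∈ G (α x)} := by
    intro G hG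
    have hunion : {x | x ∈ G (α x)} = ⋃ i, α ⁻¹' {i} ∩ G i := by ext; simp
    exact hunion ▸ isOpen_iUnion fun i => (isClopen_fibre α i).isOpen.inter (hG i)
  exact ⟨⟨hopen (fun i => (F i)ᶜ) fun i => (hF i).compl.isOpen⟩, hopen F fun i => (hF i).isOpen⟩

/-- The labelling whose fibres are those of `α`, each cut along the clopen set `E`: the part of the
fibre of `i` inside `E` gets the label `2 * i + 1`, the part outside gets `2 * i`. -/
noncomputable def splitLabel (α : C(X, ℕ)) {E : Set X} (hE : IsClopen E) : C(X, ℕ) where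
  toFun x := 2 * α x + LocallyConstant.charFn ℕ hE x
  continuous_toFun :=
    (continuous_const.mul α.continuous).add (LocallyConstant.charFn ℕ hE).continuous

lemma splitLabel_eq_iff {α β : C(X, ℕ)} {E F : Set X} (hE : IsClopen E) (hF : IsClopen F)
    {x y : X} : splitLabel α hE x = splitLabel β hF y ↔ α x = β y ∧ (x ∈ E ↔ y ∈ F) := by
  by_cases hx : x ∈ E <;> by_cases hy : y ∈ F <;>
    simp [splitLabel, LocallyConstant.coe_charFn, hx, hy] <;> omega

lemma splitLabel_fibre_odd (α : C(X, ℕ)) {E : Set X} (hE : IsClopen E) (i : ℕ) :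
    splitLabel α hE ⁻¹' {2 * i + 1} = α ⁻¹' {i} ∩ E := by
  ext x
  by_cases hx : x ∈ E <;> simp [splitLabel, LocallyConstant.coe_charFn, hx]
  omega

lemma splitLabel_fibre_even (α : C(X, ℕ)) {E : Set X} (hE : IsClopen E) (i : ℕ) :
    splitLabel α hE ⁻¹' {2 * i} = α ⁻¹' {i} \ E := by
  ext x
  by_cases hx : x ∈ E <;> simp [splitLabel, LocallyConstant.coe_charFn, hx]
  omega

end Labelling

section Swap

variable {X : Type*} [TopologicalSpace X]

/-- `k` is an involution which exchanges `C` with `C'` and fixes all other points. -/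
structure IsSwap (k : X ≃ₜ X) (C C' : Set X) : Prop where
  apply_apply : ∀ x, k (k x) = x
  mapsTo : MapsTo k C C'
  mapsTo_symm : MapsTo k C' C
  apply_eq_self : ∀ x ∉ C ∪ C', k x = x

lemma IsSwap.apply_mem_iff {C C' : Set X} {k : X ≃ₜ X} (hk : IsSwap k C C') {x : X} :
    k x ∈ C ↔ x ∈ C' :=
  ⟨fun hx => hk.apply_apply x ▸ hk.mapsTo hx, (hk.mapsTo_symm ·)⟩

lemma exists_isSwap {C C' : Set X} {θ : X ≃ₜ X} (hC : IsClopen C) (hC' : IsClopen C')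
    (hdisj : Disjoint C C') (hθ : θ ⁻¹' C' = C) : ∃ k : X ≃ₜ X, IsSwap k C C' ∧ EqOn k θ C := by
  let k : C(X, X) := clopenPiecewise hC θ (clopenPiecewise hC' θ.symm (.id X))
  have hkC : ∀ x ∈ C, k x = θ x := fun x hx => clopenPiecewise_of_mem hC _ _ hx
  have hkC' : ∀ x ∈ C', k x = θ.symm x := fun x hx =>
    (clopenPiecewise_of_notMem hC _ _ (hdisj.notMem_of_mem_right hx)).trans
      (clopenPiecewise_of_mem hC' _ _ hx)
  have hkid : ∀ x ∉ C ∪ C', k x = x := fun x hx =>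
    (clopenPiecewise_of_notMem hC _ _ fun h => hx (.inl h)).trans
      (clopenPiecewise_of_notMem hC' _ _ fun h => hx (.inr h))
  have hmaps : MapsTo k C C' := fun x hx => by
    rw [hkC x hx]
    exact hθ.ge hx
  have hmaps' : MapsTo k C' C := fun x hx => by
    rw [hkC' x hx, ← hθ]
    simpa using hx
  have hkk : Function.Involutive k := by
    intro x
    by_cases hx : x ∈ C ∪ C'
    · rcases hx with hx | hx
      · rw [hkC' _ (hmaps hx), hkC x hx, θ.symm_apply_apply]
      · rw [hkC _ (hmaps' hx), hkC' x hx, θ.apply_symm_apply]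
    · rw [hkid x hx, hkid x hx]
  exact ⟨⟨hkk.toPerm, k.continuous, k.continuous⟩, ⟨hkk, hmaps, hmaps', hkid⟩, hkC⟩

end Swap

section Homogeneity

variable {X : Type*} [TopologicalSpace X] [MeasurableSpace X] {K : Set (ProbabilityMeasure X)}

/-- A pair of clopen partitions of `X`, given as the fibres of two continuous labellings, such
that fibres with the same label are `K`-equivalent: a stage of a back-and-forth construction. -/
structure Matching (K : Set (ProbabilityMeasure X)) where
  /-- Labelling of the source. -/
  source : C(X, ℕ)
  /-- Labelling of the target. -/
  target : C(X, ℕ)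
  apply_fibre : ∀ μ ∈ K, ∀ i, μ (source ⁻¹' {i}) = μ (target ⁻¹' {i})

namespace Matching

/-- Points with the same label are related. -/
def Rel (s : Matching K) (x y : X) : Prop := s.source x = s.target y

/-- Matchings are ordered by refinement. -/
instance : Preorder (Matching K) := Preorder.lift fun s => OrderDual.toDual s.Rel

lemma antitone_rel : Antitone (Rel : Matching K → X → X → Prop) := fun _ _ hst => hst

/-- The matching for the reversed problem. -/
def rev (s : Matching K) : Matching K where
  source := s.target
  target := s.source
  apply_fibre μ hμ i := (s.apply_fibre μ hμ i).symm

/-- The matching with a single label. -/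
def trivial (K : Set (ProbabilityMeasure X)) : Matching K where
  source := .const X 0
  target := .const X 0
  apply_fibre _ _ _ := rfl

lemma exists_rel (hne : K.Nonempty) (hsupp : ∀ μ ∈ K, FullSupport μ) (s : Matching K) (x : X) :
    ∃ y, s.Rel x y := by
  obtain ⟨μ, hμ⟩ := hne
  by_contra! hx
  have hempty : s.target ⁻¹' {s.source x} = ∅ := by
    ext y
    simpa using fun h => hx y h.symm
  have hpos := hsupp μ hμ _ (isClopen_fibre s.source (s.source x)).isOpen ⟨x, rfl⟩
  simp [s.apply_fibre μ hμ, hempty] at hpos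

lemma closedSections_rel (hne : K.Nonempty) (hsupp : ∀ μ ∈ K, FullSupport μ) (s : Matching K) :
    ClosedSections s.Rel where
  isClosed_right _ := isClosed_eq continuous_const s.target.continuous
  nonempty_right x := s.exists_rel hne hsupp x
  isClosed_left _ := isClosed_eq s.source.continuous continuous_const
  nonempty_left y := (s.rev.exists_rel hne hsupp y).imp fun _ hx => hx.symm

end Matching

variable [BorelSpace X]

lemma Good.exists_subset (hgood : Good K) (hsupp : ∀ μ ∈ K, FullSupport μ) {A A' B' : Set X}
    (hA : IsClopen A) (hA' : IsClopen A') (hB' : IsClopen B') (hAA' : A ⊆ A')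
    (heq : ∀ μ ∈ K, μ A' = μ B') : ∃ B, IsClopen B ∧ B ⊆ B' ∧ ∀ μ ∈ K, μ B = μ A := by
  rcases hAA'.eq_or_ssubset with rfl | hlt
  · exact ⟨B', hB', subset_rfl, fun μ hμ => (heq μ hμ).symm⟩
  · refine hgood A B' hA hB' fun μ hμ => ?_
    rw [← heq μ hμ, ← tsub_pos_iff_lt, ← apply_diff_eq_sub μ hA hAA']
    exact hsupp μ hμ _ (hA'.diff hA).isOpen (nonempty_of_ssubset hlt)

lemma apply_eq_of_apply_fibre {μ : ProbabilityMeasure X} (α β : C(X, ℕ)) {A B : Set X}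
    (h : ∀ i, μ (α ⁻¹' {i} ∩ A) = μ (β ⁻¹' {i} ∩ B)) : μ A = μ B := by
  have hmap : ((μ : Measure X).restrict A).map α = ((μ : Measure X).restrict B).map β := by
    refine Measure.ext_of_singleton fun i => ?_
    rw [Measure.map_apply α.continuous.measurable (measurableSet_singleton i),
      Measure.map_apply β.continuous.measurable (measurableSet_singleton i),
      Measure.restrict_apply (isClopen_fibre α i).isOpen.measurableSet,
      Measure.restrict_apply (isClopen_fibre β i).isOpen.measurableSet,
      ← ProbabilityMeasure.ennreal_coeFn_eq_coeFn_toMeasure, h i,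
      ProbabilityMeasure.ennreal_coeFn_eq_coeFn_toMeasure]
  have huniv := congrArg (· univ) hmap
  simp only [Measure.map_apply α.continuous.measurable .univ,
    Measure.map_apply β.continuous.measurable .univ, preimage_univ, Measure.restrict_apply_univ]
    at huniv
  exact congrArg ENNReal.toNNReal huniv

namespace Matching

/-- Cuts the source along `E` and the target along `F`. -/
noncomputable def split (s : Matching K) {E F : Set X} (hE : IsClopen E) (hF : IsClopen F)
    (hEF : ∀ μ ∈ K, ∀ i, μ (s.source ⁻¹' {i} ∩ E) = μ (s.target ⁻¹' {i} ∩ F)) : Matching K where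
  source := splitLabel s.source hE
  target := splitLabel s.target hF
  apply_fibre μ hμ i := by
    rcases Nat.even_or_odd' i with ⟨j, rfl | rfl⟩
    · have hsource := apply_inter_add_apply_diff μ (s.source ⁻¹' {j}) hE
      rw [s.apply_fibre μ hμ j, ← apply_inter_add_apply_diff μ (s.target ⁻¹' {j}) hF,
        hEF μ hμ j] at hsource
      rw [splitLabel_fibre_even, splitLabel_fibre_even, add_left_cancel hsource]
    · rw [splitLabel_fibre_odd, splitLabel_fibre_odd, hEF μ hμ j]

section Split

variable (s : Matching K) {E F : Set X} (hE : IsClopen E) (hF : IsClopen F)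
    (hEF : ∀ μ ∈ K, ∀ i, μ (s.source ⁻¹' {i} ∩ E) = μ (s.target ⁻¹' {i} ∩ F))

lemma le_split : s ≤ s.split hE hF hEF := fun _ _ hxy => ((splitLabel_eq_iff hE hF).1 hxy).1

lemma matches_split : Matches (s.split hE hF hEF).Rel E F :=
  fun _ _ hxy => ((splitLabel_eq_iff hE hF).1 hxy).2

end Split

lemma exists_ge_matches_source (hgood : Good K) (hsupp : ∀ μ ∈ K, FullSupport μ) (s : Matching K)
    {E : Set X} (hE : IsClopen E) :
    ∃ t ≥ s, ∃ F, IsClopen F ∧ (∀ μ ∈ K, μ E = μ F) ∧ Matches t.Rel E F := by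
  choose F hF hFsub hFE using fun i => hgood.exists_subset hsupp
    ((isClopen_fibre s.source i).inter hE) (isClopen_fibre s.source i)
    (isClopen_fibre s.target i) inter_subset_left fun μ hμ => s.apply_fibre μ hμ i
  have hU : IsClopen {x | x ∈ F (s.target x)} := isClopen_mem_fibre s.target hF
  have hfibre : ∀ i, s.target ⁻¹' {i} ∩ {x | x ∈ F (s.target x)} = F i := by
    refine fun i => Set.ext fun x => ⟨?_, fun hx => ?_⟩
    · rintro ⟨rfl, hx⟩
      exact hx
    · obtain rfl : s.target x = i := hFsub i hx
      exact ⟨rfl, hx⟩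
  have hEU : ∀ μ ∈ K, ∀ i, μ (s.source ⁻¹' {i} ∩ E) =
      μ (s.target ⁻¹' {i} ∩ {x | x ∈ F (s.target x)}) := fun μ hμ i => by
    rw [hfibre, hFE i μ hμ]
  exact ⟨s.split hE hU hEU, s.le_split hE hU hEU, _, hU,
    fun μ hμ => apply_eq_of_apply_fibre s.source s.target (hEU μ hμ), s.matches_split hE hU hEU⟩

lemma exists_ge_matches_target (hgood : Good K) (hsupp : ∀ μ ∈ K, FullSupport μ) (s : Matching K)
    {F : Set X} (hF : IsClopen F) :
    ∃ t ≥ s, ∃ E, IsClopen E ∧ (∀ μ ∈ K, μ E = μ F) ∧ Matches t.Rel E F := by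
  obtain ⟨t, hst, E, hE, hFE, hmatch⟩ := s.rev.exists_ge_matches_source hgood hsupp hF
  exact ⟨t.rev, fun x y hxy => (hst y x hxy.symm).symm, E, hE, fun μ hμ => (hFE μ hμ).symm,
    fun x y hxy => (hmatch hxy.symm).symm⟩

end Matching

variable [CompactSpace X] [T2Space X] [TotallyDisconnectedSpace X] [SecondCountableTopology X]
  {C C' : Set X}

theorem exists_homeomorph_preimage_eq (hne : K.Nonempty) (hgood : Good K)
    (hsupp : ∀ μ ∈ K, FullSupport μ) (hC : IsClopen C) (hC' : IsClopen C')
    (heq : ∀ μ ∈ K, μ C = μ C') : ∃ θ : X ≃ₜ X, PreservesAll K θ ∧ θ ⁻¹' C' = C := by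
  have hfibre : ∀ μ ∈ K, ∀ i, μ ((Matching.trivial K).source ⁻¹' {i} ∩ C) =
      μ ((Matching.trivial K).target ⁻¹' {i} ∩ C') := by
    intro μ hμ i
    change μ ((fun _ => 0) ⁻¹' {i} ∩ C) = μ ((fun _ => 0) ⁻¹' {i} ∩ C')
    by_cases hi : 0 ∈ ({i} : Set ℕ)
    · simpa [preimage_const_of_mem hi] using heq μ hμ
    · simp [preimage_const_of_notMem hi]
  obtain ⟨θ, hθ, hrel, -⟩ := exists_homeomorph_of_cofinal (ι := Empty) (D := Empty.elim) (K := K)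
    Matching.antitone_rel (Matching.closedSections_rel hne hsupp)
    (fun A hA s => by
      obtain ⟨t, hst, B, -, -, hAB⟩ := s.exists_ge_matches_source hgood hsupp hA
      exact ⟨t, ⟨B, hAB⟩, hst⟩)
    (fun B hB s => by
      obtain ⟨t, hst, hB⟩ := s.exists_ge_matches_target hgood hsupp hB
      exact ⟨t, hB, hst⟩)
    (fun i => i.elim) ((Matching.trivial K).split hC hC' hfibre)
  exact ⟨θ, hθ, (Matching.matches_split _ hC hC' hfibre).preimage_eq hrel⟩

lemma IsSwap.preserves {k : X ≃ₜ X} (hk : IsSwap k C C') (hC : IsClopen C) (hC' : IsClopen C')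
    (hdisj : Disjoint C C') {θ : X ≃ₜ X} (hθ : θ ⁻¹' C' = C) (heq : EqOn k θ C)
    {μ : ProbabilityMeasure X} (hμ : Preserves θ μ) : Preserves k μ := by
  have hswap : ∀ E, μ (k ⁻¹' E ∩ C) = μ (E ∩ C') := by
    intro E
    have hpre : k ⁻¹' E ∩ C = θ ⁻¹' (E ∩ C') := by
      rw [preimage_inter, hθ, inter_comm, heq.inter_preimage_eq, inter_comm]
    rw [hpre, hμ.apply_preimage]
  have hkk : ∀ E, k ⁻¹' (k ⁻¹' E) = E := fun E => by
    ext x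
    simp [hk.apply_apply]
  have hfix : ∀ E, (k ⁻¹' E \ C) \ C' = (E \ C) \ C' := by
    intro E
    ext x
    have := hk.apply_eq_self x
    grind
  have hcut : ∀ E, μ E = μ (E ∩ C) + (μ (E ∩ C') + μ ((E \ C) \ C')) := by
    intro E
    have hE : (E \ C) ∩ C' = E ∩ C' := by
      ext x
      exact ⟨fun hx => ⟨hx.1.1, hx.2⟩, fun hx => ⟨⟨hx.1, hdisj.notMem_of_mem_right hx.2⟩, hx.2⟩⟩
    rw [← apply_inter_add_apply_diff μ E hC, ← apply_inter_add_apply_diff μ (E \ C) hC', hE]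
  refine preserves_of_isClopen fun E _ => ?_
  rw [hcut (k ⁻¹' E), hcut E, hswap, hfix, ← hswap (k ⁻¹' E), hkk]
  ring

theorem exists_isSwap_preservesAll (hne : K.Nonempty) (hgood : Good K)
    (hsupp : ∀ μ ∈ K, FullSupport μ) (hC : IsClopen C) (hC' : IsClopen C') (hdisj : Disjoint C C')
    (heq : ∀ μ ∈ K, μ C = μ C') :
    ∃ k : X ≃ₜ X, IsSwap k C C' ∧ PreservesAll K k := by
  obtain ⟨θ, hθ, hθC⟩ := exists_homeomorph_preimage_eq hne hgood hsupp hC hC' heq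
  obtain ⟨k, hk, hkθ⟩ := exists_isSwap hC hC' hdisj hθC
  exact ⟨k, hk, fun μ hμ => hk.preserves hC hC' hdisj hθC hkθ (hθ μ hμ)⟩

end Homogeneity

/-! ### Towers -/

section Towers

variable {X : Type*} [TopologicalSpace X] [MeasurableSpace X]

/-- A clopen tower, i.e. a KR-partition, encoded by a homeomorphism which climbs the columns and
returns from the top, the preimage of the base, to the base. Columns are seen only through the
retraction onto the base and through sums along columns, so their heights are never named. -/
structure Tower (K : Set (ProbabilityMeasure X)) where
  /-- The map climbing the columns, and returning from the top to the base. -/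
  map : X ≃ₜ X
  /-- The base. -/
  base : Set X
  /-- The map sending each point to the bottom of its column. -/
  retraction : C(X, X)
  /-- The sum of a function over the points lying strictly below a given point in its column. -/
  partialSum : C(X, ℤ) → C(X, ℤ)
  isClopen_base : IsClopen base
  preservesAll : PreservesAll K map
  retraction_mem : ∀ x, retraction x ∈ base
  retraction_of_mem : ∀ x ∈ base, retraction x = x
  retraction_map : ∀ x, retraction (map x) = retraction x
  partialSum_of_mem : ∀ f, ∀ x ∈ base, partialSum f x = 0
  partialSum_map : ∀ f x, map x ∉ base → partialSum f (map x) = partialSum f x + f x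

namespace Tower

variable {K : Set (ProbabilityMeasure X)}

/-- Holds if `y` follows `x` in the tower, where any point of the base follows any point of the
top: the part of the graph of a homeomorphism which the tower determines. -/
def Rel (t : Tower K) (x y : X) : Prop := y = t.map x ∨ t.map x ∈ t.base ∧ y ∈ t.base

/-- Towers are ordered by cutting and stacking: larger towers determine more of the map. -/
instance : Preorder (Tower K) := Preorder.lift fun t => OrderDual.toDual t.Rel

lemma antitone_rel : Antitone (Rel : Tower K → X → X → Prop) := fun _ _ htu => htu

/-- At a point of the base, this is the sum over the whole column; it vanishes off the base. -/
def columnSum (t : Tower K) (f : C(X, ℤ)) : C(X, ℤ) :=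
  (f + t.partialSum f).comp (t.map.symm : C(X, X)) - t.partialSum f

section Basic

variable (t : Tower K) (f : C(X, ℤ)) {x : X}

lemma retraction_map_symm (x : X) : t.retraction (t.map.symm x) = t.retraction x := by
  rw [← t.retraction_map, t.map.apply_symm_apply]

lemma retraction_eq_map (hx : t.map x ∈ t.base) : t.retraction x = t.map x := by
  rw [← t.retraction_map, t.retraction_of_mem _ hx]

lemma columnSum_apply (x : X) : t.columnSum f x =
    f (t.map.symm x) + t.partialSum f (t.map.symm x) - t.partialSum f x := rfl

lemma columnSum_map (x : X) :
    t.columnSum f (t.map x) = f x + t.partialSum f x - t.partialSum f (t.map x) := by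
  rw [columnSum_apply, t.map.symm_apply_apply]

lemma columnSum_of_notMem (hx : x ∉ t.base) : t.columnSum f x = 0 := by
  have hmap := t.partialSum_map f (t.map.symm x)
  rw [t.map.apply_symm_apply] at hmap
  rw [columnSum_apply, hmap hx]
  ring

lemma integralHom_columnSum [CompactSpace X] [BorelSpace X] {μ : ProbabilityMeasure X}
    (hμ : μ ∈ K) : integralHom μ (t.columnSum f) = integralHom μ f := by
  rw [columnSum, map_sub, (t.preservesAll μ hμ).symm.integralHom_comp, map_add,
    add_sub_cancel_right]

end Basic

/-- The tower all of whose columns are single points. -/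
def trivial (K : Set (ProbabilityMeasure X)) : Tower K where
  map := .refl X
  base := univ
  retraction := .id X
  partialSum _ := 0
  isClopen_base := isClopen_univ
  preservesAll _ _ := Measure.map_id
  retraction_mem _ := mem_univ _
  retraction_of_mem _ _ := rfl
  retraction_map _ := rfl
  partialSum_of_mem _ _ _ := rfl
  partialSum_map _ _ h := absurd (mem_univ _) h

/-- The tower turned upside down. -/
def rev [BorelSpace X] (t : Tower K) : Tower K where
  map := t.map.symm
  base := t.map ⁻¹' t.base
  retraction := (t.map.symm : C(X, X)).comp t.retraction
  partialSum f := (t.columnSum f).comp t.retraction - t.partialSum f - f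
  isClopen_base := t.isClopen_base.preimage t.map.continuous
  preservesAll μ hμ := (t.preservesAll μ hμ).symm
  retraction_mem x := by simpa using t.retraction_mem x
  retraction_of_mem x hx := by simp [t.retraction_eq_map hx]
  retraction_map x := by simp [t.retraction_map_symm]
  partialSum_of_mem f x hx := by
    simp [t.retraction_eq_map hx, t.columnSum_map, t.partialSum_of_mem f _ hx]
  partialSum_map f x hx := by
    have hzero := t.columnSum_of_notMem f (x := x) (by simpa using hx)
    rw [columnSum_apply] at hzero
    simp only [ContinuousMap.sub_apply, ContinuousMap.comp_apply, t.retraction_map_symm]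
    linarith

lemma rel_rev [BorelSpace X] (t : Tower K) {x y : X} : t.rev.Rel y x ↔ t.Rel x y := by
  simp [Rel, rev, t.map.eq_symm_apply, eq_comm (a := y), and_comm]

lemma le_rev [BorelSpace X] {t u : Tower K} (htu : t.rev ≤ u) : t ≤ u.rev := fun x y hxy =>
  t.rel_rev.1 (htu y x (u.rel_rev.1 hxy))

/-- A plan for putting the columns based in one part of the base on top of the columns based in
another part, following a swap of the two parts. -/
structure Stacking (t : Tower K) where
  /-- Bases of the columns to be moved. -/
  upper : Set X
  /-- Bases of the columns which get extended. -/
  lower : Set X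
  /-- The swap sending the base of each lower column to the base of the column put on top. -/
  swap : X ≃ₜ X
  isClopen_upper : IsClopen upper
  upper_subset : upper ⊆ t.base
  lower_subset : lower ⊆ t.base
  disjoint : Disjoint upper lower
  isSwap : IsSwap swap upper lower
  preservesAll : PreservesAll K swap

namespace Stacking

variable {t : Tower K} (σ : t.Stacking) (f : C(X, ℤ)) {x : X}

lemma notMem_upper (hx : x ∈ σ.lower) : x ∉ σ.upper := σ.disjoint.notMem_of_mem_right hx

lemma swap_symm_apply (x : X) : σ.swap.symm x = σ.swap x := by
  rw [σ.swap.symm_apply_eq, σ.isSwap.apply_apply]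

/-- The map sending the base of each column to the base of the new column containing it. -/
noncomputable def fold : C(X, X) := clopenPiecewise σ.isClopen_upper σ.swap (.id X)

lemma fold_of_mem (hx : x ∈ σ.upper) : σ.fold x = σ.swap x :=
  clopenPiecewise_of_mem σ.isClopen_upper _ _ hx

lemma fold_of_notMem (hx : x ∉ σ.upper) : σ.fold x = x :=
  clopenPiecewise_of_notMem σ.isClopen_upper _ _ hx

/-- At the base of each column, the sum over the column which is put below it, if any. -/
noncomputable def offset : C(X, ℤ) :=
  clopenPiecewise σ.isClopen_upper ((t.columnSum f).comp (σ.swap : C(X, X))) 0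

lemma offset_of_mem (hx : x ∈ σ.upper) : σ.offset f x = t.columnSum f (σ.swap x) :=
  clopenPiecewise_of_mem σ.isClopen_upper _ _ hx

lemma offset_of_notMem (hx : x ∉ σ.upper) : σ.offset f x = 0 :=
  clopenPiecewise_of_notMem σ.isClopen_upper _ _ hx

lemma fold_swap (x : X) : σ.fold (σ.swap x) = σ.fold x := by
  by_cases hx : x ∈ σ.upper ∪ σ.lower
  · rcases hx with hx | hx
    · rw [σ.fold_of_mem hx, σ.fold_of_notMem (σ.notMem_upper (σ.isSwap.mapsTo hx))]
    · rw [σ.fold_of_mem (σ.isSwap.mapsTo_symm hx), σ.isSwap.apply_apply,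
        σ.fold_of_notMem (σ.notMem_upper hx)]
  · rw [σ.isSwap.apply_eq_self x hx]

lemma swap_of_notMem (hx : x ∉ t.base) : σ.swap x = x :=
  σ.isSwap.apply_eq_self x fun h => hx (h.elim (σ.upper_subset ·) (σ.lower_subset ·))

lemma swap_mem_base_iff : σ.swap x ∈ t.base ↔ x ∈ t.base := by
  by_cases hx : x ∈ σ.upper ∪ σ.lower
  · have hsx : σ.swap x ∈ t.base := hx.elim (fun h => σ.lower_subset (σ.isSwap.mapsTo h))
      fun h => σ.upper_subset (σ.isSwap.mapsTo_symm h)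
    exact iff_of_true hsx (hx.elim (σ.upper_subset ·) (σ.lower_subset ·))
  · rw [σ.isSwap.apply_eq_self x hx]

lemma fold_mem (hx : x ∈ t.base) : σ.fold x ∈ t.base \ σ.upper := by
  by_cases hu : x ∈ σ.upper
  · rw [σ.fold_of_mem hu]
    exact ⟨σ.swap_mem_base_iff.2 hx, σ.notMem_upper (σ.isSwap.mapsTo hu)⟩
  · rw [σ.fold_of_notMem hu]
    exact ⟨hx, hu⟩

lemma fold_retraction_swap (x : X) :
    σ.fold (t.retraction (σ.swap x)) = σ.fold (t.retraction x) := by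
  by_cases hx : x ∈ t.base
  · rw [t.retraction_of_mem _ hx, t.retraction_of_mem _ (σ.swap_mem_base_iff.2 hx), σ.fold_swap]
  · rw [σ.swap_of_notMem hx]

lemma swap_mem_base_diff_iff : σ.swap x ∈ t.base \ σ.upper ↔ x ∈ t.base \ σ.lower :=
  and_congr σ.swap_mem_base_iff σ.isSwap.apply_mem_iff.not

/-- The result of stacking the upper columns on top of the lower ones. -/
noncomputable def tower [BorelSpace X] : Tower K where
  map := t.map.trans σ.swap
  base := t.base \ σ.upper
  retraction := σ.fold.comp t.retraction
  partialSum f := t.partialSum f + (σ.offset f).comp t.retraction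
  isClopen_base := t.isClopen_base.diff σ.isClopen_upper
  preservesAll μ hμ := (t.preservesAll μ hμ).trans (σ.preservesAll μ hμ)
  retraction_mem x := σ.fold_mem (t.retraction_mem x)
  retraction_of_mem x hx :=
    (congrArg σ.fold (t.retraction_of_mem x hx.1)).trans (σ.fold_of_notMem hx.2)
  retraction_map x :=
    (σ.fold_retraction_swap (t.map x)).trans (congrArg σ.fold (t.retraction_map x))
  partialSum_of_mem f x hx := by
    simp [t.retraction_of_mem x hx.1, t.partialSum_of_mem f x hx.1, σ.offset_of_notMem f hx.2]
  partialSum_map f x hx := by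
    replace hx : t.map x ∉ t.base \ σ.lower := σ.swap_mem_base_diff_iff.not.1 hx
    change t.partialSum f (σ.swap (t.map x)) + σ.offset f (t.retraction (σ.swap (t.map x))) =
      t.partialSum f x + σ.offset f (t.retraction x) + f x
    by_cases hxl : t.map x ∈ σ.lower
    · have hxb := σ.lower_subset hxl
      have hsu := σ.isSwap.mapsTo_symm hxl
      have hsb := σ.upper_subset hsu
      rw [t.partialSum_of_mem f _ hsb, t.retraction_of_mem _ hsb, σ.offset_of_mem f hsu,
        σ.isSwap.apply_apply, t.columnSum_map, t.partialSum_of_mem f _ hxb,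
        t.retraction_eq_map hxb, σ.offset_of_notMem f (σ.notMem_upper hxl)]
      ring
    · have hxb : t.map x ∉ t.base := fun hxb => hx ⟨hxb, hxl⟩
      rw [σ.isSwap.apply_eq_self _ fun h => h.elim (fun h => hxb (σ.upper_subset h)) hxl,
        t.partialSum_map f x hxb, t.retraction_map]
      ring

variable [BorelSpace X]

lemma le_tower : t ≤ σ.tower := by
  rintro x y (rfl | ⟨hx, hy⟩)
  · by_cases hx : t.map x ∈ t.base
    · exact .inr ⟨hx, σ.swap_mem_base_iff.2 hx⟩
    · exact .inl (σ.swap_of_notMem hx)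
  · exact .inr ⟨(σ.swap_mem_base_diff_iff.1 hx).1, hy.1⟩

lemma columnSum_tower (x : X) :
    σ.tower.columnSum f x = t.columnSum f (σ.swap x) + t.partialSum f (σ.swap x) -
      t.partialSum f x + σ.offset f (t.retraction (σ.swap x)) - σ.offset f (t.retraction x) := by
  change f (t.map.symm (σ.swap.symm x)) + (t.partialSum f (t.map.symm (σ.swap.symm x)) +
    σ.offset f (t.retraction (t.map.symm (σ.swap.symm x)))) -
      (t.partialSum f x + σ.offset f (t.retraction x)) = _
  rw [swap_symm_apply, t.retraction_map_symm, columnSum_apply]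
  ring

lemma columnSum_tower_of_mem_base (hx : x ∈ t.base) :
    σ.tower.columnSum f x = t.columnSum f (σ.swap x) + σ.offset f (σ.swap x) - σ.offset f x := by
  have hsx := σ.swap_mem_base_iff.2 hx
  rw [columnSum_tower, t.partialSum_of_mem f _ hx, t.partialSum_of_mem f _ hsx,
    t.retraction_of_mem _ hx, t.retraction_of_mem _ hsx]
  ring

lemma columnSum_tower_of_mem_upper (hx : x ∈ σ.upper) : σ.tower.columnSum f x = 0 :=
  columnSum_of_notMem _ f fun h => h.2 hx

lemma columnSum_tower_of_mem_lower (hx : x ∈ σ.lower) :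
    σ.tower.columnSum f x = t.columnSum f x + t.columnSum f (σ.swap x) := by
  rw [σ.columnSum_tower_of_mem_base f (σ.lower_subset hx), σ.offset_of_notMem f (σ.notMem_upper hx),
    σ.offset_of_mem f (σ.isSwap.mapsTo_symm hx), σ.isSwap.apply_apply]
  ring

lemma columnSum_tower_of_notMem (hu : x ∉ σ.upper) (hl : x ∉ σ.lower) :
    σ.tower.columnSum f x = t.columnSum f x := by
  rw [columnSum_tower, σ.isSwap.apply_eq_self x (by simp [hu, hl])]
  ring

end Stacking

end Tower

end Towers

/-! ### Improving towers by cutting and stacking -/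

section Improvement

variable {X : Type*} [TopologicalSpace X] [CompactSpace X] [MeasurableSpace X] [BorelSpace X]

lemma neg_integralHom_le_mul_apply (μ : ProbabilityMeasure X) {F : C(X, ℤ)} {D : ℤ}
    (hF : ∀ x, -D ≤ F x) : -integralHom μ F ≤ D * μ {x | F x < 0} := by
  have hN : IsClopen {x | F x < 0} := (isClopen_discrete (Iio 0)).preimage F.continuous
  have hle : -(D • clopenIndicator hN) ≤ F := by
    intro x
    rcases lt_or_ge (F x) 0 with hx | hx
    · simpa [clopenIndicator_of_mem hN hx] using hF x
    · simpa [clopenIndicator_of_notMem hN hx.not_gt] using hx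
  have hint := integralHom_mono μ hle
  rw [map_neg, map_zsmul, integralHom_clopenIndicator, zsmul_eq_mul] at hint
  exact neg_le.1 hint

namespace Tower

variable [T2Space X] [TotallyDisconnectedSpace X] [SecondCountableTopology X]
  {K : Set (ProbabilityMeasure X)}

lemma exists_stacking (hne : K.Nonempty) (hgood : Good K) (hsupp : ∀ μ ∈ K, FullSupport μ)
    (t : Tower K) {C N : Set X} (hC : IsClopen C) (hN : IsClopen N) (hCt : C ⊆ t.base)
    (hNt : N ⊆ t.base) (hCN : Disjoint C N) (hlt : ∀ μ ∈ K, μ C < μ N) :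
    ∃ σ : t.Stacking, σ.upper = C ∧ σ.lower ⊆ N := by
  obtain ⟨C', hC', hC'N, heq⟩ := hgood C N hC hN hlt
  have hdisj : Disjoint C C' := hCN.mono_right hC'N
  obtain ⟨k, hk, hkK⟩ := exists_isSwap_preservesAll hne hgood hsupp hC hC' hdisj
    fun μ hμ => (heq μ hμ).symm
  exact ⟨⟨C, C', k, hC, hCt, hC'N.trans hNt, hdisj, hk, hkK⟩, rfl, hC'N⟩

section ColumnSums

variable {f : C(X, ℤ)} {c : ℝ} {D L : ℤ}

-- The lower bound `-D` is kept by stacking columns of sum `L` on columns of negative sum, so the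
-- latter always have measure at least `c / D`: there is room for each small piece in turn.
lemma exists_ge_columnSum_eq_subset (hne : K.Nonempty) (hgood : Good K)
    (hsupp : ∀ μ ∈ K, FullSupport μ) (hf : ∀ μ ∈ K, c ≤ -integralHom μ f) (hD : 0 ≤ D)
    (hL : 0 < L) {E : Set X} (hE : IsClopen E) (hEc : ∀ μ ∈ K, μ E < c / (D + 1)) (t : Tower K)
    (ht : ∀ x, t.columnSum f x ∈ Icc (-D) L) :
    ∃ u ≥ t, (∀ x, u.columnSum f x ∈ Icc (-D) L) ∧
      {x | u.columnSum f x = L} ⊆ {x | t.columnSum f x = L} \ E := by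
  have hclopen : ∀ S : Set ℤ, IsClopen (t.columnSum f ⁻¹' S) := fun S =>
    (isClopen_discrete S).preimage (t.columnSum f).continuous
  have hbase : ∀ x, t.columnSum f x ≠ 0 → x ∈ t.base := fun x hx =>
    not_imp_comm.1 (t.columnSum_of_notMem f) hx
  obtain ⟨σ, hupper, hlower⟩ := t.exists_stacking hne hgood hsupp
    (C := {x | t.columnSum f x = L} ∩ E) (N := {x | t.columnSum f x < 0})
    ((hclopen {L}).inter hE) (hclopen (Iio 0)) (fun x hx => hbase x (hx.1.trans_ne hL.ne'))
    (fun x hx => hbase x hx.ne)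
    (disjoint_left.2 fun x hx hx' => (hx.1.symm.trans_lt hx').not_gt hL) fun μ hμ => by
      have hroom := neg_integralHom_le_mul_apply μ fun x => (ht x).1
      rw [t.integralHom_columnSum f hμ] at hroom
      have hsmall : (μ E : ℝ) < μ {x | t.columnSum f x < 0} := by
        have hD_pos : (0 : ℝ) < D + 1 := mod_cast Int.lt_add_one_of_le hD
        refine (hEc μ hμ).trans_le ((div_le_iff₀' hD_pos).2 ?_)
        linarith [hf μ hμ, (μ {x | t.columnSum f x < 0}).coe_nonneg]
      exact (μ.apply_mono inter_subset_right).trans_lt (NNReal.coe_lt_coe.1 hsmall)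
  have hcases : ∀ x, σ.tower.columnSum f x ∈ Ico (-D) L ∨
      σ.tower.columnSum f x = t.columnSum f x ∧ x ∉ {x | t.columnSum f x = L} ∩ E := by
    intro x
    by_cases hxu : x ∈ σ.upper
    · exact .inl (by simp [σ.columnSum_tower_of_mem_upper f hxu, hD, hL])
    by_cases hxl : x ∈ σ.lower
    · have hneg : t.columnSum f x < 0 := hlower hxl
      have hmax : t.columnSum f (σ.swap x) = L :=
        (hupper.le (σ.isSwap.mapsTo_symm hxl)).1
      rw [σ.columnSum_tower_of_mem_lower f hxl, hmax]
      exact .inl ⟨by linarith [(ht x).1], by linarith⟩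
    · exact .inr ⟨σ.columnSum_tower_of_notMem f hxu hxl, hupper ▸ hxu⟩
  refine ⟨σ.tower, σ.le_tower, fun x => ?_, fun x hx => ?_⟩
  · rcases hcases x with h | h
    · exact Ico_subset_Icc_self h
    · exact h.1 ▸ ht x
  · rcases hcases x with h | h
    · exact absurd hx h.2.ne
    · have hxt : t.columnSum f x = L := h.1.symm.trans hx
      exact ⟨hxt, fun hxE => h.2 ⟨hxt, hxE⟩⟩

lemma exists_ge_columnSum_nonpos (hne : K.Nonempty) (hK : IsCompact K) (hgood : Good K)
    (hatom : ∀ μ ∈ K, Atomless μ) (hsupp : ∀ μ ∈ K, FullSupport μ)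
    (hf : ∀ μ ∈ K, integralHom μ f < 0) (t : Tower K) : ∃ u ≥ t, u.columnSum f ≤ 0 := by
  obtain ⟨c, hc, hcf⟩ := hK.exists_forall_le' (continuous_integralHom f).neg.continuousOn (a := 0)
    fun μ hμ => neg_pos.2 (hf μ hμ)
  obtain ⟨D, hD, ht⟩ := exists_abs_le (t.columnSum f)
  have hD_pos : (0 : ℝ) < D + 1 := mod_cast Int.lt_add_one_of_le hD
  have hlower : ∀ (L : ℕ) (t : Tower K), (∀ x, t.columnSum f x ∈ Icc (-D) L) →
      ∃ u ≥ t, u.columnSum f ≤ 0 := by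
    intro L
    induction L with
    | zero => exact fun t ht => ⟨t, le_rfl, fun x => by simpa using (ht x).2⟩
    | succ L ih =>
      intro t ht
      obtain ⟨u, htu, hu, hempty⟩ := exists_ge_and_eq_empty
        (bad := fun u : Tower K => {x | u.columnSum f x = (L + 1 : ℕ)}) (fun x => by
          obtain ⟨E, hE, hxE, hlt⟩ := exists_isClopen_forall_apply_lt hK hatom x
            (div_pos hc hD_pos)
          exact ⟨E, hE.isOpen.mem_nhds hxE, fun t ht =>
            t.exists_ge_columnSum_eq_subset hne hgood hsupp hcf hD (by positivity) hE hlt ht⟩) ht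
      obtain ⟨v, huv, hv⟩ := ih u fun x => ⟨(hu x).1, by
        have hneL : u.columnSum f x ≠ (L + 1 : ℕ) := eq_empty_iff_forall_notMem.1 hempty x
        exact Int.lt_add_one_iff.1 ((hu x).2.lt_of_ne hneL)⟩
      exact ⟨v, htu.trans huv, hv⟩
  exact hlower D.toNat t fun x => by
    rw [Int.toNat_of_nonneg hD]
    exact abs_le.1 (ht x)

end ColumnSums

lemma exists_ge_base_subset (hne : K.Nonempty) (hK : IsCompact K) (hgood : Good K)
    (hatom : ∀ μ ∈ K, Atomless μ) (hsupp : ∀ μ ∈ K, FullSupport μ) (t : Tower K) {O : Set X}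
    (hO : IsClopen O) (hO' : O.Nonempty) (hOt : O ⊆ t.base) : ∃ u ≥ t, u.base ⊆ O := by
  obtain ⟨u, htu, -, hu⟩ := exists_ge_and_eq_empty (good := fun u : Tower K => O ⊆ u.base)
    (bad := fun u => u.base \ O) (fun x => by
      obtain ⟨E, hE, hxE, hlt⟩ := exists_isClopen_forall_apply_lt_apply hK hatom hsupp hO hO' x
      refine ⟨E, hE.isOpen.mem_nhds hxE, fun t ht => ?_⟩
      obtain ⟨σ, hupper, -⟩ := t.exists_stacking hne hgood hsupp
        ((t.isClopen_base.inter hE).diff hO) hO (sdiff_subset.trans inter_subset_left) ht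
        disjoint_sdiff_left fun μ hμ =>
          (μ.apply_mono (sdiff_subset.trans inter_subset_right)).trans_lt (hlt μ hμ)
      have hbase : σ.tower.base = t.base \ ((t.base ∩ E) \ O) := hupper ▸ rfl
      refine ⟨σ.tower, σ.le_tower, ?_, ?_⟩ <;> rw [hbase]
      · exact fun y hy => ⟨ht hy, fun h => h.2 hy⟩
      · exact fun y ⟨⟨hy, hyE⟩, hyO⟩ => ⟨⟨hy, hyO⟩, fun h => hyE ⟨⟨hy, h⟩, hyO⟩⟩) hOt
  exact ⟨u, htu, sdiff_eq_empty.1 hu⟩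

end Tower

end Improvement

/-! ### The limit homeomorphism -/

section Limit

variable {X : Type*} [TopologicalSpace X] [MeasurableSpace X] {K : Set (ProbabilityMeasure X)}

/-- The function `f` is at most the coboundary of a continuous integer-valued function under `g`:
this keeps its integrals against `g`-invariant measures nonpositive. -/
def LeCoboundary (g : X ≃ₜ X) (f : C(X, ℤ)) : Prop :=
  ∃ φ : C(X, ℤ), f ≤ φ.comp (g : C(X, X)) - φ

namespace Tower

lemma leCoboundary (t : Tower K) {f : C(X, ℤ)} (hf : t.columnSum f ≤ 0) {g : X ≃ₜ X}
    (hg : ∀ x, t.Rel x (g x)) : LeCoboundary g f := by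
  refine ⟨t.partialSum f, fun x => ?_⟩
  have hmap : f x + t.partialSum f x - t.partialSum f (t.map x) ≤ 0 :=
    (t.columnSum_map f x).symm.trans_le (hf (t.map x))
  have hpartial : t.partialSum f (g x) = t.partialSum f (t.map x) := by
    rcases hg x with h | ⟨hx, hgx⟩
    · rw [h]
    · rw [t.partialSum_of_mem f _ hgx, t.partialSum_of_mem f _ hx]
  change f x ≤ t.partialSum f (g x) - t.partialSum f x
  linarith

lemma isClosed_setOf_rel [T1Space X] (t : Tower K) (x : X) : IsClosed {y | t.Rel x y} :=
  isClosed_singleton.union (isClosed_const.inter t.isClopen_base.isClosed)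

lemma closedSections_rel [BorelSpace X] [T1Space X] (t : Tower K) : ClosedSections t.Rel where
  isClosed_right := t.isClosed_setOf_rel
  nonempty_right x := ⟨t.map x, .inl rfl⟩
  isClosed_left y := by simpa only [rel_rev] using t.rev.isClosed_setOf_rel y
  nonempty_left y := ⟨t.map.symm y, .inl (t.map.apply_symm_apply y).symm⟩

lemma matches_preimage (t : Tower K) {E : Set X} (hE : t.base ⊆ E ∨ t.base ⊆ Eᶜ) :
    Matches t.Rel (t.map ⁻¹' E) E := by
  rintro x y (rfl | ⟨hx, hy⟩)
  · rfl
  · exact hE.elim (fun h => iff_of_true (h hx) (h hy)) fun h => iff_of_false (h hx) (h hy)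

variable [CompactSpace X] [T2Space X] [TotallyDisconnectedSpace X] [SecondCountableTopology X]
  [BorelSpace X]

section Refine

variable (hne : K.Nonempty) (hK : IsCompact K) (hgood : Good K) (hatom : ∀ μ ∈ K, Atomless μ)
  (hsupp : ∀ μ ∈ K, FullSupport μ)

include hne hK hgood hatom hsupp

lemma exists_ge_base_subset_or_subset_compl (t : Tower K) {E : Set X} (hE : IsClopen E) :
    ∃ u ≥ t, u.base ⊆ E ∨ u.base ⊆ Eᶜ := by
  rcases (t.base ∩ E).eq_empty_or_nonempty with h | h
  · exact ⟨t, le_rfl, .inr (disjoint_iff_inter_eq_empty.2 h).subset_compl_right⟩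
  · obtain ⟨u, htu, hu⟩ := t.exists_ge_base_subset hne hK hgood hatom hsupp
      (t.isClopen_base.inter hE) h inter_subset_left
    exact ⟨u, htu, .inl (hu.trans inter_subset_right)⟩

lemma isCofinal_matches_right {B : Set X} (hB : IsClopen B) :
    IsCofinal {t : Tower K | ∃ A, IsClopen A ∧ (∀ μ ∈ K, μ A = μ B) ∧ Matches t.Rel A B} := by
  intro t
  obtain ⟨u, htu, hu⟩ := t.exists_ge_base_subset_or_subset_compl hne hK hgood hatom hsupp hB
  exact ⟨u, ⟨_, hB.preimage u.map.continuous,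
    fun μ hμ => (u.preservesAll μ hμ).apply_preimage B, u.matches_preimage hu⟩, htu⟩

lemma isCofinal_matches_left {A : Set X} (hA : IsClopen A) :
    IsCofinal {t : Tower K | ∃ B, Matches t.Rel A B} := by
  intro t
  obtain ⟨u, htu, hu⟩ :=
    t.rev.exists_ge_base_subset_or_subset_compl hne hK hgood hatom hsupp hA
  exact ⟨u.rev, ⟨_, fun x y hxy => (u.matches_preimage hu (u.rel_rev.1 hxy)).symm⟩, le_rev htu⟩

end Refine

end Tower

variable [CompactSpace X] [T2Space X] [TotallyDisconnectedSpace X] [SecondCountableTopology X]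
  [BorelSpace X]

theorem exists_homeomorph_forall_leCoboundary (hne : K.Nonempty) (hK : IsCompact K)
    (hgood : Good K) (hatom : ∀ μ ∈ K, Atomless μ) (hsupp : ∀ μ ∈ K, FullSupport μ) :
    ∃ g : X ≃ₜ X, PreservesAll K g ∧
      ∀ f : C(X, ℤ), (∀ μ ∈ K, integralHom μ f < 0) → LeCoboundary g f := by
  have : Countable C(X, ℤ) := countable_continuousMap_int
  obtain ⟨g, hgK, -, hg⟩ := exists_homeomorph_of_cofinal (K := K) Tower.antitone_rel
    Tower.closedSections_rel
    (fun A => Tower.isCofinal_matches_left hne hK hgood hatom hsupp)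
    (fun B => Tower.isCofinal_matches_right hne hK hgood hatom hsupp)
    (D := fun f : {f : C(X, ℤ) // ∀ μ ∈ K, integralHom μ f < 0} => {t | t.columnSum f ≤ 0})
    (fun f t => (t.exists_ge_columnSum_nonpos hne hK hgood hatom hsupp f.2).imp
      fun u hu => ⟨hu.2, hu.1⟩) (Tower.trivial K)
  refine ⟨g, hgK, fun f hf => ?_⟩
  obtain ⟨t, ht, hRel⟩ := hg ⟨f, hf⟩
  exact t.leCoboundary ht hRel

end Limit

/-! ### Separating measures by integer-valued functions -/

section Separation

lemma abs_sum_round_mul_sub_le {ι : Type*} [Fintype ι] (c y : ι → ℝ) :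
    |∑ i, (round (c i) : ℝ) * y i - ∑ i, c i * y i| ≤ Fintype.card ι * ‖y‖ := by
  rw [← Finset.sum_sub_distrib, ← nsmul_eq_mul]
  refine (Finset.abs_sum_le_sum_abs _ _).trans (Finset.sum_le_card_nsmul _ _ _ fun i _ => ?_)
  rw [← sub_mul, abs_mul, abs_sub_comm]
  exact (mul_le_of_le_one_left (abs_nonneg _)
    ((abs_sub_round (c i)).trans (by norm_num))).trans (norm_le_pi_norm y i)

-- Rounding a large multiple of a separating real functional moves its values on a bounded set by
-- a bounded amount only.
theorem exists_int_separation {ι : Type*} [Fintype ι] {S : Set (ι → ℝ)} (hS : IsCompact S)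
    (hconv : Convex ℝ S) {v : ι → ℝ} (hv : v ∉ S) :
    ∃ (n : ι → ℤ) (m : ℤ), (∀ y ∈ S, ∑ i, (n i : ℝ) * y i < m) ∧ m < ∑ i, (n i : ℝ) * v i := by
  classical
  obtain ⟨ℓ, u, hℓS, hℓv⟩ := geometric_hahn_banach_closed_point hconv hS.isClosed hv
  obtain ⟨C, -, hC⟩ := (hS.isBounded.insert v).exists_pos_norm_le
  set b : ℝ := Fintype.card ι * C
  obtain ⟨M, hM⟩ := exists_nat_gt ((2 * b + 1) / (ℓ v - u))
  rw [div_lt_iff₀ (sub_pos.2 hℓv)] at hM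
  let c : ι → ℝ := fun i => M * ℓ (Pi.single i 1)
  have hround : ∀ y ∈ insert v S, |∑ i, (round (c i) : ℝ) * y i - M * ℓ y| ≤ b := by
    intro y hy
    have hℓ : M * ℓ y = ∑ i, c i * y i := by
      conv_lhs => rw [← Finset.univ_sum_single y, map_sum, Finset.mul_sum]
      refine Finset.sum_congr rfl fun i _ => ?_
      rw [← mul_one (y i), ← smul_eq_mul (y i), Pi.single_smul, map_smul, smul_eq_mul, smul_eq_mul]
      ring
    rw [hℓ]
    exact (abs_sum_round_mul_sub_le c y).trans <|
      mul_le_mul_of_nonneg_left (hC y hy) (Nat.cast_nonneg _)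
  refine ⟨fun i => round (c i), ⌊M * u + b⌋ + 1, fun y hy => ?_, ?_⟩ <;> push_cast
  · have hle : M * ℓ y ≤ M * u := mul_le_mul_of_nonneg_left (hℓS y hy).le M.cast_nonneg
    linarith [Int.lt_floor_add_one (M * u + b), abs_le.1 (hround y (mem_insert_of_mem v hy))]
  · linarith [Int.floor_le (M * u + b), abs_le.1 (hround v (mem_insert v S))]

variable {X : Type*} [MeasurableSpace X] {K : Set (ProbabilityMeasure X)}

lemma ProbConvex.convex_image_apply (hK : ProbConvex K) {ι : Type*} (E : ι → Set X) :
    Convex ℝ ((fun μ i => (μ (E i) : ℝ)) '' K) := by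
  rintro _ ⟨μ, hμ, rfl⟩ _ ⟨ν, hν, rfl⟩ a b ha hb hab
  lift a to NNReal using ha
  lift b to NNReal using hb
  obtain ⟨ρ, hρ, heq⟩ := hK (mem_image_of_mem _ hμ) (mem_image_of_mem _ hν) zero_le zero_le
    (mod_cast hab)
  refine ⟨ρ, hρ, funext fun i => ?_⟩
  simpa using congrArg (fun m : FiniteMeasure X => (m (E i) : ℝ)) heq

variable [TopologicalSpace X] [BorelSpace X] [CompactSpace X] {ν : ProbabilityMeasure X}

lemma exists_mem_forall_apply_eq (hK : IsCompact K) (hconv : ProbConvex K)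
    (hν : ∀ f : C(X, ℤ), (∀ μ ∈ K, integralHom μ f < 0) → integralHom ν f ≤ 0) {ι : Type*}
    [Finite ι] {E : ι → Set X} (hE : ∀ i, IsClopen (E i)) :
    ∃ μ ∈ K, ∀ i, (μ (E i) : ℝ) = ν (E i) := by
  have := Fintype.ofFinite ι
  by_contra hcon
  let T : ProbabilityMeasure X → ι → ℝ := fun μ i => μ (E i)
  have hT : Continuous T := continuous_pi fun i => continuous_apply_of_isClopen (hE i)
  have hTν : T ν ∉ T '' K := fun ⟨μ, hμ, heq⟩ => hcon ⟨μ, hμ, congrFun heq⟩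
  obtain ⟨n, m, hnK, hnν⟩ :=
    exists_int_separation (hK.image hT) (hconv.convex_image_apply E) hTν
  let f : C(X, ℤ) := ∑ i, n i • clopenIndicator (hE i) - m • 1
  have hf : ∀ μ, integralHom μ f = ∑ i, (n i : ℝ) * T μ i - m := fun μ => by
    simp only [f, map_sub, map_sum, map_zsmul, integralHom_clopenIndicator, integralHom_one]
    simp [T]
  have hle := hν f fun μ hμ => by
    rw [hf]
    exact sub_neg.2 (hnK _ (mem_image_of_mem T hμ))
  rw [hf] at hle
  exact (sub_nonpos.1 hle).not_gt hnν

theorem mem_of_forall_integralHom_nonpos [T2Space X] [TotallyDisconnectedSpace X]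
    [SecondCountableTopology X] (hK : IsCompact K) (hconv : ProbConvex K)
    (hν : ∀ f : C(X, ℤ), (∀ μ ∈ K, integralHom μ f < 0) → integralHom ν f ≤ 0) : ν ∈ K := by
  obtain ⟨μ, hμ, heq⟩ := hK.inter_iInter_nonempty
    (fun E : Clopens X => {μ : ProbabilityMeasure X | (μ E : ℝ) = ν E})
    (fun E => isClosed_eq (continuous_apply_of_isClopen E.isClopen) continuous_const)
    fun s => (exists_mem_forall_apply_eq hK hconv hν fun E : s => E.1.isClopen).imp
      fun μ hμ => ⟨hμ.1, mem_iInter₂.2 fun E hE => hμ.2 ⟨E, hE⟩⟩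
  have hνμ : ν = μ := ProbabilityMeasure.toMeasure_injective <|
    toMeasure_ext_of_isClopen fun E hE => by
      have hEeq : μ E = ν E := NNReal.coe_inj.1 (mem_iInter.1 heq ⟨E, hE⟩)
      simp only [← ProbabilityMeasure.ennreal_coeFn_eq_coeFn_toMeasure, hEeq]
  exact hνμ ▸ hμ

end Separation

/-! ### Invariant measures and minimality of the limit -/

section Conclusion

variable {X : Type*} [TopologicalSpace X] {g : X ≃ₜ X}

lemma toEquiv_pow_succ_apply (g : X ≃ₜ X) (n : ℕ) (x : X) :
    (g.toEquiv ^ (n + 1)) x = g ((g.toEquiv ^ n) x) := by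
  rw [pow_succ']
  rfl

variable [CompactSpace X]

lemma LeCoboundary.exists_pow_apply_mem {V : Set X} (hV : IsClopen V) {M : ℤ}
    (h : LeCoboundary g (1 - M • clopenIndicator hV)) (x : X) :
    ∃ n : ℕ, (g.toEquiv ^ n) x ∈ V := by
  obtain ⟨φ, hφ⟩ := h
  by_contra! hout
  have hgrow : ∀ n : ℕ, φ x + n ≤ φ ((g.toEquiv ^ n) x) := by
    intro n
    induction n with
    | zero => simp
    | succ n ih =>
      have hstep : 1 - M * clopenIndicator hV ((g.toEquiv ^ n) x) ≤
          φ (g ((g.toEquiv ^ n) x)) - φ ((g.toEquiv ^ n) x) := hφ ((g.toEquiv ^ n) x)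
      rw [clopenIndicator_of_notMem hV (hout n)] at hstep
      rw [toEquiv_pow_succ_apply, Nat.cast_succ]
      linarith
  obtain ⟨D, hD, hφD⟩ := exists_abs_le φ
  have hlast := hgrow (2 * D + 1).toNat
  rw [Int.toNat_of_nonneg (by positivity)] at hlast
  linarith [abs_le.1 (hφD x), abs_le.1 (hφD ((g.toEquiv ^ (2 * D + 1).toNat) x))]

variable [MeasurableSpace X]

lemma LeCoboundary.integralHom_nonpos [BorelSpace X] {f : C(X, ℤ)} (hf : LeCoboundary g f)
    {ν : ProbabilityMeasure X} (hν : Preserves g ν) : integralHom ν f ≤ 0 := by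
  obtain ⟨φ, hφ⟩ := hf
  refine (integralHom_mono ν hφ).trans_eq ?_
  rw [map_sub, hν.integralHom_comp, sub_self]

variable [T2Space X] [TotallyDisconnectedSpace X]

lemma isMinimal_of_forall_exists_pow_apply_mem [OpensMeasurableSpace X]
    (h : ∀ V, IsClopen V → V.Nonempty → ∀ x, ∃ n : ℕ, (g.toEquiv ^ n) x ∈ V) :
    IsMinimal g := by
  refine fun x => dense_iff_inter_open.2 fun U hU ⟨y, hy⟩ => ?_
  obtain ⟨V, hV, hyV, hVU⟩ := compact_exists_isClopen_in_isOpen hU hy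
  obtain ⟨n, hn⟩ := h V hV ⟨y, hyV⟩ x
  exact ⟨_, hVU hn, n, by simp⟩

-- For `M` large, the function `1 - M • 1_V` has negative integrals over `K`, and any function
-- dominating it along orbits bounds the time which an orbit spends outside `V`.
lemma isMinimal_of_leCoboundary [BorelSpace X] {K : Set (ProbabilityMeasure X)} (hK : IsCompact K)
    (hsupp : ∀ μ ∈ K, FullSupport μ)
    (hg : ∀ f : C(X, ℤ), (∀ μ ∈ K, integralHom μ f < 0) → LeCoboundary g f) : IsMinimal g := by
  refine isMinimal_of_forall_exists_pow_apply_mem fun V hV hVne => ?_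
  obtain ⟨c, hc, hcV⟩ := exists_pos_forall_le_apply hK hsupp hV hVne
  obtain ⟨M, hM⟩ := exists_nat_gt (1 / c)
  rw [div_lt_iff₀ hc] at hM
  refine LeCoboundary.exists_pow_apply_mem hV (hg (1 - (M : ℤ) • clopenIndicator hV) ?_)
  intro μ hμ
  rw [map_sub, map_zsmul, integralHom_one, integralHom_clopenIndicator, zsmul_eq_mul,
    Int.cast_natCast, sub_neg]
  exact hM.trans_le (mul_le_mul_of_nonneg_left (hcV μ hμ) M.cast_nonneg)

end Conclusion

end DynSimplex

theorem dahl_finite_dimensional_general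
    {X : Type*} [TopologicalSpace X] [CompactSpace X]
    [TopologicalSpace.MetrizableSpace X] [TotallyDisconnectedSpace X]
    [MeasurableSpace X] [BorelSpace X]
    (K : Set (MeasureTheory.ProbabilityMeasure X)) (hne : K.Nonempty)
    (hcomp : IsCompact K) (hconv : DynSimplex.ProbConvex K)
    (hmeas : ∀ μ ∈ K, DynSimplex.Atomless μ ∧ DynSimplex.FullSupport μ)
    (hgood : DynSimplex.Good K) :
    ∃ g : X ≃ₜ X, DynSimplex.IsMinimal g ∧
      {μ : MeasureTheory.ProbabilityMeasure X | DynSimplex.Preserves g μ} = K := by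
  let := TopologicalSpace.metrizableSpaceMetric X
  have : SecondCountableTopology X := inferInstance
  have hatom := fun μ hμ => (hmeas μ hμ).1
  have hsupp := fun μ hμ => (hmeas μ hμ).2
  obtain ⟨g, hgK, hg⟩ :=
    DynSimplex.exists_homeomorph_forall_leCoboundary hne hcomp hgood hatom hsupp
  have hmem : ∀ ν, DynSimplex.Preserves g ν → ν ∈ K := fun ν hν =>
    DynSimplex.mem_of_forall_integralHom_nonpos hcomp hconv fun f hf =>
      (hg f hf).integralHom_nonpos hν
  exact ⟨g, DynSimplex.isMinimal_of_leCoboundary hcomp hsupp hg,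
    Set.Subset.antisymm hmem hgK⟩

theorem dahl_finite_dimensional
    {X : Type*} [TopologicalSpace X] [CompactSpace X]
    [TopologicalSpace.MetrizableSpace X] [TotallyDisconnectedSpace X] [PerfectSpace X]
    [Nonempty X] [MeasurableSpace X] [BorelSpace X]
    (K : Set (MeasureTheory.ProbabilityMeasure X)) (hne : K.Nonempty)
    (hcomp : IsCompact K) (hconv : DynSimplex.ProbConvex K)
    (hmeas : ∀ μ ∈ K, DynSimplex.Atomless μ ∧ DynSimplex.FullSupport μ)
    (hgood : DynSimplex.Good K)
    (hfin : (DynSimplex.ProbExtremePoints K).Finite) :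
    ∃ g : X ≃ₜ X, DynSimplex.IsMinimal g ∧
      {μ : MeasureTheory.ProbabilityMeasure X | DynSimplex.Preserves g μ} = K :=
  dahl_finite_dimensional_general K hne hcomp hconv hmeas hgood
end
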